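/- Let R be a commutative Noetherian ring of finite Krull dimension d, B = R[X_1,…,X_m,Y_1^{±1},…,Y_n^{±1}], f ∈ R[Y] a monic polynomial, and A = B[Y, f^{-1}]. Then every finitely generated projective A-module P of constant rank r can be generated by r + d elements. -/

import Mathlib

open MvPolynomial

noncomputable section

/-- The submonoid of the polynomial ring `R[X_1,…,X_m,Y_1,…,Y_n]` generated by the
`Y`-variables; inverting it produces the Laurent polynomial ring
`B = R[X_1,…,X_m,Y_1^{±1},…,Y_n^{±1}]`. -/
def Ymonoid (R : Type*) [CommRing R] (m n : ℕ) :
    Submonoid (MvPolynomial (Fin m ⊕ Fin n) R) :=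
  Submonoid.closure (Set.range fun j : Fin n => (X (Sum.inr j) : MvPolynomial (Fin m ⊕ Fin n) R))

/-!
Let `P` be generated by `N + 1` elements with `N ≥ r + d`, and let `K` be the kernel of the
surjection `A ^ (N + 1) → P`, projective of constant rank `N + 1 - r ≥ d + 1`. Two facts about `A`
allow one generator to be dropped: `K` contains a column that is unimodular in `A ^ (N + 1)`, and
the general linear group moves that column to the last basis vector.

Both facts rest on one change of variables. The ring `A` is integral over a polynomial ring over
`R`, and an ideal of height greater than `d` in such a ring contains the image of a generalized
monic polynomial: one whose leading coefficient in the first variable is, recursively, generalized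
monic. With `z = f + f⁻¹`, the substitutions `X_i ↦ X_i + z ^ a_i`, and their analogues for the
units `Y_j`, turn it into a fraction whose numerator is monic in `Y`, so the usual arguments over a
polynomial ring with a monic entry (Horrocks, Quillen, Suslin) apply. Orbits of unimodular columns
are treated this way directly. For unimodular elements of a projective module one inducts on the
dimension of `R`: over the total quotient ring of a reduced `R` the module is free, hence it is
free after inverting a single nonzerodivisor `s` of `R`, and the unimodular element of the quotient
by `s` is lifted.
-/

open scoped Polynomial

open scoped Polynomial

/-! ### General position -/

section GeneralPosition

variable {A : Type*} [CommRing A]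

/-- The ideal `J` has height at least `i` on the open set where `x` does not vanish, that is, in
the localization of `A` at the powers of `x`. -/
def HeightGEAway (x : A) (J : Ideal A) (i : ℕ) : Prop :=
  ∀ p : Ideal A, p.IsPrime → J ≤ p → x ∉ p → (i : ℕ∞) ≤ p.height

theorem exists_mem_iff_mem_of_isAntichain {S : Finset (Ideal A)} (hprime : ∀ p ∈ S, p.IsPrime)
    (hS : IsAntichain (· ≤ ·) (S : Set (Ideal A))) (T : Set (Ideal A)) :
    ∃ c : A, ∀ p ∈ S, c ∈ p ↔ p ∈ T := by
  classical
  by_contra! hcon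
  have hsub : (((S.filter (· ∈ T)).inf id : Ideal A) : Set A) ⊆
      ⋃ p ∈ (S.filter (· ∉ T) : Set (Ideal A)), (p : Set A) := by
    intro c hc
    obtain ⟨p, hp, ⟨hcp, hpT⟩ | ⟨hcp, hpT⟩⟩ := hcon c
    · exact Set.mem_biUnion (Finset.mem_filter.2 ⟨hp, hpT⟩) hcp
    · exact (hcp (Finset.inf_le (f := id) (Finset.mem_filter.2 ⟨hp, hpT⟩) hc)).elim
  rw [Ideal.subset_union_prime (f := fun p => p) ⊥ ⊥
    fun p hp _ _ => hprime p (Finset.mem_filter.1 hp).1] at hsub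
  obtain ⟨p, hp, hle⟩ := hsub
  obtain ⟨hpS, hpT⟩ := Finset.mem_filter.1 hp
  obtain ⟨q, hq, hqp⟩ := (Ideal.IsPrime.inf_le' (hprime p hpS)).1 hle
  obtain ⟨hqS, hqT⟩ := Finset.mem_filter.1 hq
  exact hpT (hS.eq hqS hpS hqp ▸ hqT)

variable [IsNoetherianRing A]

theorem exists_heightGEAway_sup_span_singleton {x : A} {J : Ideal A} {i : ℕ}
    (h : HeightGEAway x J i) (v : A) :
    ∃ c : A, HeightGEAway x (J ⊔ Ideal.span {v + x * c}) (i + 1) := by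
  classical
  have hfin : J.minimalPrimes.Finite := Ideal.finite_minimalPrimes_of_isNoetherianRing A J
  obtain ⟨c, hc⟩ := exists_mem_iff_mem_of_isAntichain (S := hfin.toFinset)
    (fun p hp => (hfin.mem_toFinset.1 hp).1.1)
    (fun p hp q hq hne hle => hne <| le_antisymm hle <|
      (hfin.mem_toFinset.1 hq).2 (hfin.mem_toFinset.1 hp).1 hle) {p | v ∉ p}
  refine ⟨c, fun p hp hJp hxp => ?_⟩
  obtain ⟨hJp, hvp⟩ := sup_le_iff.1 hJp
  rw [Ideal.span_singleton_le_iff_mem] at hvp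
  obtain ⟨q, hq, hqp⟩ := Ideal.exists_minimalPrimes_le hJp
  have hqprime : q.IsPrime := hq.1.1
  have hxq : x ∉ q := fun h => hxp (hqp h)
  have hcq : c ∈ q ↔ v ∉ q := hc q (hfin.mem_toFinset.2 hq)
  have hvq : v + x * c ∉ q := by
    intro hmem
    by_cases hv : v ∈ q
    · exact (hqprime.mem_or_mem ((q.add_mem_iff_right hv).1 hmem)).elim hxq fun h => hcq.1 h hv
    · exact hv ((q.add_mem_iff_left (q.mul_mem_left x (hcq.2 hv))).1 hmem)
  have hlt : q < p := lt_of_le_of_ne hqp fun e => hvq (e ▸ hvp)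
  calc ((i + 1 : ℕ) : ℕ∞) = (i : ℕ∞) + 1 := by push_cast; rfl
    _ ≤ q.height + 1 := by gcongr; exact h q hqprime hq.1.2 hxq
    _ ≤ p.height := Ideal.height_add_one_le_of_lt_of_isPrime hlt

theorem exists_heightGEAway_sup_span_range {x : A} {J : Ideal A} {i : ℕ}
    (h : HeightGEAway x J i) {k : ℕ} (v : Fin k → A) : ∃ c : Fin k → A,
      HeightGEAway x (J ⊔ Ideal.span (Set.range fun j => v j + x * c j)) (i + k) := by
  induction k with
  | zero => exact ⟨Fin.elim0, fun p hp hJ => h p hp (le_sup_left.trans hJ)⟩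
  | succ k ih =>
    obtain ⟨c, hc⟩ := ih fun j => v j.castSucc
    obtain ⟨c', hc'⟩ := exists_heightGEAway_sup_span_singleton hc (v (Fin.last k))
    refine ⟨Fin.snoc c c', fun p hp hJ hx => hc' p hp (sup_le (sup_le ?_ ?_) ?_) hx⟩
    · exact le_sup_left.trans hJ
    · rw [Ideal.span_le]
      rintro _ ⟨j, rfl⟩
      exact hJ (Ideal.mem_sup_right (Ideal.subset_span ⟨j.castSucc, by simp⟩))
    · rw [Ideal.span_singleton_le_iff_mem]
      exact hJ (Ideal.mem_sup_right (Ideal.subset_span ⟨Fin.last k, by simp⟩))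

theorem exists_heightGEAway_span_range {x : A} {k : ℕ} {v : Fin (k + 1) → A} {c₀ : A}
    (h : HeightGEAway x (Ideal.span {v (Fin.last k) + x * c₀}) 1) :
    ∃ c : Fin (k + 1) → A, c (Fin.last k) = c₀ ∧
      HeightGEAway x (Ideal.span (Set.range fun i => v i + x * c i)) (k + 1) := by
  obtain ⟨c, hc⟩ := exists_heightGEAway_sup_span_range h fun i => v i.castSucc
  refine ⟨Fin.snoc (α := fun _ => A) c c₀, Fin.snoc_last _ _, fun p hp hJ hx => ?_⟩
  rw [add_comm k]
  refine hc p hp (sup_le ?_ ?_) hx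
  · rw [Ideal.span_singleton_le_iff_mem]
    exact hJ (Ideal.subset_span ⟨Fin.last k, by simp⟩)
  · rw [Ideal.span_le]
    rintro _ ⟨i, rfl⟩
    exact hJ (Ideal.subset_span ⟨i.castSucc, by simp⟩)

end GeneralPosition

/-! ### Generalized monic polynomials -/

section GeneralizedMonic

variable {R : Type*} [CommRing R]

attribute [local instance] Polynomial.algebra Polynomial.isLocalization in
theorem height_le_height_under_add_one [IsNoetherianRing R] (P : Ideal R[X]) [P.IsPrime] :
    P.height ≤ (P.under R).height + 1 := by
  let p := P.under R
  let Rₚ := Localization.AtPrime p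
  have hdisj : Disjoint (p.primeCompl.map Polynomial.C : Set R[X]) P := by
    rw [Set.disjoint_left]
    rintro _ ⟨a, ha, rfl⟩ haP
    exact ha haP
  let P' : Ideal Rₚ[X] := P.map (algebraMap R[X] Rₚ[X])
  have : P'.IsPrime :=
    IsLocalization.isPrime_of_isPrime_disjoint (p.primeCompl.map Polynomial.C) _ P ‹_› hdisj
  have hdim : (P.height : WithBot ℕ∞) ≤ p.height + 1 := calc
    (P.height : WithBot ℕ∞) = P'.height := by
      rw [IsLocalization.height_map_of_disjoint (p.primeCompl.map Polynomial.C) _ hdisj]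
    _ ≤ ringKrullDim Rₚ[X] := Ideal.height_le_ringKrullDim_of_isPrime
    _ = p.height + 1 := by
      rw [Polynomial.ringKrullDim_of_isNoetherianRing,
        IsLocalization.AtPrime.ringKrullDim_eq_height p Rₚ]
  exact_mod_cast hdim

theorem height_le_height_under_of_le_map [IsNoetherianRing R] (P : Ideal R[X]) [P.IsPrime]
    (h : P ≤ (P.under R).map Polynomial.C) : P.height ≤ (P.under R).height := by
  have hlo : P.LiesOver (P.under R) := ⟨rfl⟩
  have hmap : P.map (Ideal.Quotient.mk ((P.under R).map (algebraMap R R[X]))) = ⊥ := by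
    rw [Ideal.map_eq_bot_iff_le_ker, Ideal.mk_ker]
    exact h
  have : ((P.under R).map (algebraMap R R[X])).IsPrime := Ideal.isPrime_map_C_of_isPrime
  rw [Ideal.height_eq_height_add_of_liesOver_of_hasGoingDown (P.under R) P, hmap,
    Ideal.height_bot, add_zero]

theorem le_map_C_of_forall_leadingCoeff_mem {p : Ideal R} {P : Ideal R[X]}
    (hpP : p.map Polynomial.C ≤ P) (h : ∀ g ∈ P, g.leadingCoeff ∈ p) :
    P ≤ p.map Polynomial.C := by
  intro g hg
  induction hn : g.support.card using Nat.strong_induction_on generalizing g with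
  | _ n ih =>
    rcases eq_or_ne g 0 with rfl | hg0
    · exact zero_mem _
    have hlead : Polynomial.C g.leadingCoeff * Polynomial.X ^ g.natDegree ∈ p.map Polynomial.C :=
      Ideal.mul_mem_right _ _ (Ideal.mem_map_of_mem _ (h g hg))
    have herase : g.eraseLead ∈ P := by
      rw [← Polynomial.self_sub_C_mul_X_pow]
      exact P.sub_mem hg (hpP hlead)
    rw [← Polynomial.eraseLead_add_C_mul_X_pow g]
    exact add_mem (ih _ (hn ▸ Polynomial.eraseLead_support_card_lt hg0) herase rfl) hlead

/-- The polynomials having a coefficient in `S` beyond which all coefficients vanish. -/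
def coeffMonics (S : Submonoid R) : Submonoid R[X] where
  carrier := {h | ∃ M : ℕ, h.natDegree ≤ M ∧ h.coeff M ∈ S}
  one_mem' := ⟨0, by simp, by simp⟩
  mul_mem' := by
    rintro a b ⟨M, hM, hM'⟩ ⟨N, hN, hN'⟩
    refine ⟨M + N, Polynomial.natDegree_mul_le.trans (by omega), ?_⟩
    rw [Polynomial.coeff_mul_add_eq_of_natDegree_le hM hN]
    exact S.mul_mem hM' hN'

theorem height_le_of_disjoint_coeffMonics [IsNoetherianRing R] {S : Submonoid R} {d : ℕ}
    (h : ∀ p : Ideal R, p.IsPrime → Disjoint (S : Set R) p → p.height ≤ d)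
    (P : Ideal R[X]) [hP : P.IsPrime] (hd : Disjoint (coeffMonics S : Set R[X]) P) :
    P.height ≤ d := by
  set p := P.under R
  have hpP : p.map Polynomial.C ≤ P := Ideal.map_comap_le
  by_cases hle : ∀ g ∈ P, g.leadingCoeff ∈ p
  · have hdp : Disjoint (S : Set R) p := Set.disjoint_left.2 fun a ha hap =>
      hd.notMem_of_mem_left (a := Polynomial.C a) ⟨0, by simp, by simpa using ha⟩ hap
    exact (height_le_height_under_of_le_map P
      (le_map_C_of_forall_leadingCoeff_mem hpP hle)).trans (h p inferInstance hdp)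
  · obtain ⟨g, hgP, hg⟩ := not_forall₂.1 hle
    have hLd : Disjoint (P.leadingCoeff : Set R) S := by
      refine Set.disjoint_left.2 fun a haL ha => ?_
      obtain ⟨g, hg, hga⟩ := (Ideal.mem_leadingCoeff P a).1 haL
      exact hd.notMem_of_mem_left (a := g)
        ⟨g.natDegree, le_rfl, by rwa [Polynomial.coeff_natDegree, hga]⟩ hg
    obtain ⟨q, hq, hLq, hqd⟩ := Ideal.exists_le_prime_disjoint P.leadingCoeff S hLd
    have hpq : p ≤ q := fun r hr =>
      hLq ((Ideal.mem_leadingCoeff P r).2 ⟨Polynomial.C r, hr, by simp⟩)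
    have hlt : p < q := lt_of_le_of_ne hpq fun e =>
      hg (e ▸ hLq ((Ideal.mem_leadingCoeff P _).2 ⟨g, hgP, rfl⟩))
    calc P.height ≤ p.height + 1 := height_le_height_under_add_one P
      _ ≤ q.height := Ideal.height_add_one_le_of_lt_of_isPrime hlt
      _ ≤ d := h q hq hqd.symm

/-- The generalized monic polynomials in `k` variables: viewed as polynomials in the first
variable, their top coefficient is a generalized monic polynomial in the remaining ones. -/
def generalizedMonics (R : Type*) [CommRing R] : (k : ℕ) → Submonoid (MvPolynomial (Fin k) R)
  | 0 => ⊥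
  | k + 1 => (coeffMonics (generalizedMonics R k)).comap (finSuccEquiv R k)

theorem mem_generalizedMonics_succ {k : ℕ} {h : MvPolynomial (Fin (k + 1)) R} :
    h ∈ generalizedMonics R (k + 1) ↔ ∃ M : ℕ, (finSuccEquiv R k h).natDegree ≤ M ∧
      (finSuccEquiv R k h).coeff M ∈ generalizedMonics R k := Iff.rfl

theorem height_le_of_disjoint_generalizedMonics [IsNoetherianRing R] {d : ℕ}
    (hR : ringKrullDim R ≤ d) {k : ℕ} (p : Ideal (MvPolynomial (Fin k) R)) [p.IsPrime]
    (hd : Disjoint (generalizedMonics R k : Set (MvPolynomial (Fin k) R)) p) : p.height ≤ d := by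
  induction k with
  | zero =>
    have hp : (p.height : WithBot ℕ∞) ≤ d :=
      calc (p.height : WithBot ℕ∞) ≤ ringKrullDim (MvPolynomial (Fin 0) R) :=
          Ideal.height_le_ringKrullDim_of_isPrime
        _ = ringKrullDim R := by simp
        _ ≤ d := hR
    exact_mod_cast hp
  | succ k ih =>
    let e : MvPolynomial (Fin (k + 1)) R ≃+* (MvPolynomial (Fin k) R)[X] := finSuccEquiv R k
    have hdisj : Disjoint (coeffMonics (generalizedMonics R k) : Set (MvPolynomial (Fin k) R)[X])
        (p.comap e.symm) := Set.disjoint_left.2 fun a ha hap =>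
      hd.notMem_of_mem_left (a := e.symm a)
        (show e (e.symm a) ∈ coeffMonics _ by rwa [e.apply_symm_apply]) hap
    rw [← RingEquiv.height_comap e.symm p]
    exact height_le_of_disjoint_coeffMonics (fun q _ hq => ih q hq) _ hdisj

theorem height_le_height_comap_of_isIntegral {Q A : Type*} [CommRing Q] [CommRing A] (i : Q →+* A)
    (hi : i.IsIntegral) (P : Ideal A) [hP : P.IsPrime] : P.height ≤ (P.comap i).height := by
  let _ := i.toAlgebra
  have : Algebra.IsIntegral Q A := ⟨hi⟩
  have h := Order.height_le_height_apply_of_strictMono (PrimeSpectrum.comap i)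
    (fun x y hxy => have := x.isPrime; Ideal.IsIntegral.comap_lt_comap (R := Q) hxy) ⟨P, hP⟩
  rwa [← PrimeSpectrum.height_eq_orderHeight, ← PrimeSpectrum.height_eq_orderHeight] at h

theorem exists_generalizedMonics_map_mem {A : Type*} [CommRing A] [IsNoetherianRing R] {d : ℕ}
    (hR : ringKrullDim R ≤ d) {k : ℕ} (i : MvPolynomial (Fin k) R →+* A) (hi : i.IsIntegral)
    {J : Ideal A} (hJ : ∀ p : Ideal A, p.IsPrime → J ≤ p → (d : ℕ∞) < p.height) :
    ∃ h ∈ generalizedMonics R k, i h ∈ J := by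
  by_contra! hcon
  have hdisj : Disjoint (J : Set A) ((generalizedMonics R k).map i) := by
    rw [Set.disjoint_left]
    rintro _ haJ ⟨h, hh, rfl⟩
    exact hcon h hh haJ
  obtain ⟨q, hq, hJq, hqd⟩ := Ideal.exists_le_prime_disjoint J _ hdisj
  have hqi : Disjoint (generalizedMonics R k : Set (MvPolynomial (Fin k) R)) (q.comap i) :=
    Set.disjoint_left.2 fun a ha haq => Set.disjoint_left.1 hqd haq ⟨a, ha, rfl⟩
  exact (hJ q hq hJq).not_ge <| (height_le_height_comap_of_isIntegral i hi q).trans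
    (height_le_of_disjoint_generalizedMonics hR _ hqi)

end GeneralizedMonic

/-! ### Orbits of columns under the general linear group -/

section GLEquiv

variable {ι S T : Type*} [CommRing S] [CommRing T]

/-- Two columns lie in the same orbit of the general linear group. -/
def GLEquiv (v w : ι → S) : Prop :=
  ∃ e : (ι → S) ≃ₗ[S] (ι → S), e v = w

/-- A unimodular column: its entries generate the unit ideal. -/
def IsUnimodular [Fintype ι] (v : ι → S) : Prop :=
  ∃ w : ι → S, ∑ i, w i * v i = 1

theorem IsUnimodular.map [Fintype ι] {v : ι → S} (hv : IsUnimodular v) (φ : S →+* T) :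
    IsUnimodular fun i => φ (v i) := by
  obtain ⟨w, hw⟩ := hv
  exact ⟨fun i => φ (w i), by simp only [← map_mul, ← map_sum, hw, map_one]⟩

namespace GLEquiv

theorem refl (v : ι → S) : GLEquiv v v := ⟨LinearEquiv.refl S _, rfl⟩

theorem symm {u v : ι → S} (h : GLEquiv u v) : GLEquiv v u := by
  obtain ⟨e, rfl⟩ := h
  exact ⟨e.symm, e.symm_apply_apply u⟩

theorem trans {u v w : ι → S} (h : GLEquiv u v) (h' : GLEquiv v w) : GLEquiv u w := by
  obtain ⟨e, rfl⟩ := h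
  obtain ⟨e', rfl⟩ := h'
  exact ⟨e.trans e', rfl⟩

theorem map [Finite ι] {u v : ι → S} (h : GLEquiv u v) (φ : S →+* T) :
    GLEquiv (fun i => φ (u i)) (fun i => φ (v i)) := by
  classical
  obtain ⟨e, rfl⟩ := h
  have := Fintype.ofFinite ι
  have hmul (g g' : (ι → S) ≃ₗ[S] (ι → S)) (hg : g.toLinearMap ∘ₗ g'.toLinearMap = .id) :
      φ.mapMatrix (LinearMap.toMatrix' g.toLinearMap) *
        φ.mapMatrix (LinearMap.toMatrix' g'.toLinearMap) = 1 := by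
    rw [← map_mul, ← LinearMap.toMatrix'_comp, hg, LinearMap.toMatrix'_id, map_one]
  refine ⟨Matrix.toLin'OfInv (hmul e.symm e (by simp)) (hmul e e.symm (by simp)),
    funext fun i => ?_⟩
  rw [Matrix.toLin'OfInv_apply, Matrix.toLin'_apply, RingHom.mapMatrix_apply]
  exact (φ.map_mulVec _ u i).symm.trans (by rw [LinearMap.toMatrix'_mulVec]; rfl)

theorem isUnimodular [Fintype ι] {u v : ι → S} (h : GLEquiv u v) (hu : IsUnimodular u) :
    IsUnimodular v := by
  classical
  obtain ⟨e, rfl⟩ := h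
  obtain ⟨w, hw⟩ := hu
  let φ : (ι → S) →ₗ[S] S := Fintype.linearCombination S w ∘ₗ e.symm.toLinearMap
  refine ⟨fun i => φ (Pi.single i 1), ?_⟩
  calc ∑ i, φ (Pi.single i 1) * e u i = φ (e u) := by
        conv_rhs => rw [pi_eq_sum_univ' (e u), map_sum]
        simp only [map_smul, smul_eq_mul, mul_comm]
    _ = ∑ i, w i * u i := by simp [φ, Fintype.linearCombination_apply, mul_comm]
    _ = 1 := hw

theorem add_smul {f : Module.Dual S (ι → S)} {u : ι → S} (h : f u = 0) (v : ι → S) :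
    GLEquiv v (v + f v • u) :=
  ⟨LinearEquiv.transvection h, LinearMap.transvection.apply f u v⟩

theorem of_add_mul {p v w : ι → S} (i : ι) (hi : w i = v i)
    (hk : ∀ k, k ≠ i → w k = v k + p k * v i) : GLEquiv v w := by
  classical
  convert add_smul (f := LinearMap.proj i) (u := Function.update p i 0) (by simp) v using 1
  ext k
  rcases eq_or_ne k i with rfl | hki
  · simp [hi]
  · simp [hk k hki, hki, mul_comm]

theorem of_add_sum_mul [Fintype ι] {c v w : ι → S} (j : ι) (hc : c j = 0)
    (hj : w j = v j + ∑ k, c k * v k) (hk : ∀ k, k ≠ j → w k = v k) : GLEquiv v w := by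
  classical
  convert add_smul (f := Fintype.linearCombination S c) (u := Pi.single j 1) (by simp [hc]) v
    using 1
  ext k
  rcases eq_or_ne k j with rfl | hkj
  · simp [hj, Fintype.linearCombination_apply, mul_comm]
  · simp [hk k hkj, hkj]

theorem of_units_mul (u : ι → Sˣ) (v : ι → S) : GLEquiv v fun i => u i * v i :=
  ⟨LinearEquiv.piCongrRight fun i => LinearEquiv.smulOfUnit (u i), rfl⟩

section Pair

variable [DecidableEq ι]

/-- The action of the `2 × 2` matrix `!![a, b; c, d]` on the coordinates `i` and `j`. -/
def pairMap (i j : ι) (a b c d : S) : (ι → S) →ₗ[S] (ι → S) :=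
  LinearMap.pi fun k =>
    if k = i then a • LinearMap.proj i + b • LinearMap.proj j
    else if k = j then c • LinearMap.proj i + d • LinearMap.proj j
    else LinearMap.proj k

theorem pairMap_apply (i j : ι) (a b c d : S) (v : ι → S) (k : ι) :
    pairMap i j a b c d v k = if k = i then a * v i + b * v j
      else if k = j then c * v i + d * v j else v k := by
  rw [pairMap, LinearMap.pi_apply]
  split_ifs <;> rfl

theorem pairMap_adjugate_comp {i j : ι} (hij : i ≠ j) {a b c d : S} (hdet : a * d - b * c = 1) :
    pairMap i j d (-b) (-c) a ∘ₗ pairMap i j a b c d = .id := by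
  refine LinearMap.ext fun v => funext fun k => ?_
  simp only [LinearMap.comp_apply, LinearMap.id_apply, pairMap_apply, if_true, hij.symm, if_false]
  split_ifs with hi hj
  · subst hi; linear_combination v k * hdet
  · subst hj; linear_combination v k * hdet
  · rfl

theorem of_pairMap {i j : ι} (hij : i ≠ j) {a b c d : S} (hdet : a * d - b * c = 1) (v : ι → S) :
    GLEquiv v (pairMap i j a b c d v) :=
  have hdet' : d * a - -b * -c = 1 := by linear_combination hdet
  ⟨LinearEquiv.ofLinearMap (pairMap i j a b c d) (pairMap i j d (-b) (-c) a)
    (by simpa using pairMap_adjugate_comp hij hdet') (pairMap_adjugate_comp hij hdet), rfl⟩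

end Pair

theorem of_pair {i j : ι} (hij : i ≠ j) {a b c d : S} (hdet : a * d - b * c = 1) {p q v w : ι → S}
    (hi : w i = a * v i + b * v j) (hj : w j = c * v i + d * v j)
    (hk : ∀ k, k ≠ i → k ≠ j → w k = v k + p k * v i + q k * v j) : GLEquiv v w := by
  classical
  let p' := Function.update (Function.update p i 0) j 0
  let q' := Function.update (Function.update q i 0) j 0
  have hi0 (r : ι → S) : Function.update (Function.update r i 0) j 0 i = 0 := by simp [hij]
  have hp := add_smul (f := LinearMap.proj i) (u := p') (hi0 p) v
  have hq := add_smul (f := LinearMap.proj j) (u := q') (Function.update_self j 0 _) (v + v i • p')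
  refine hp.trans (hq.trans ?_)
  convert of_pairMap hij hdet _ using 1
  ext k
  rw [pairMap_apply]
  by_cases hki : k = i
  · subst hki; simp [hi, hi0, p', q']
  by_cases hkj : k = j
  · subst hkj; simp [hj, hi0, p', q', hki]
  simp [hk k hki hkj, hki, hkj, p', q', mul_comm]

end GLEquiv

end GLEquiv

/-! ### Unimodular columns over a polynomial ring with a monic entry -/

section DifferenceQuotient

variable {D S : Type*} [CommRing D] [CommRing S] [Algebra D S]

/-- The generic difference quotient `q` of a polynomial `p`: `p(x + t) = p(x) + t * q(x, t)`, where
`x` is the inner and `t` the outer variable. -/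
def differenceQuotient (p : D[X]) : D[X][X] :=
  (Polynomial.aeval (Polynomial.C Polynomial.X + Polynomial.X : D[X][X]) p).divX

theorem aeval_C_X_add_X (p : D[X]) :
    Polynomial.aeval (Polynomial.C Polynomial.X + Polynomial.X : D[X][X]) p =
      Polynomial.C p + Polynomial.X * differenceQuotient p := by
  have h0 : (Polynomial.aeval (Polynomial.C Polynomial.X + Polynomial.X : D[X][X]) p).coeff 0 =
      p := by
    rw [← Polynomial.constantCoeff_apply, Polynomial.aeval_def, Polynomial.hom_eval₂]
    have hC : Polynomial.constantCoeff.comp (algebraMap D D[X][X]) = Polynomial.C := by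
      ext
      simp [Polynomial.algebraMap_apply]
    rw [hC, map_add, Polynomial.constantCoeff_apply, Polynomial.coeff_C_zero,
      Polynomial.constantCoeff_apply, Polynomial.coeff_X_zero, add_zero, Polynomial.eval₂_C_X]
  conv_lhs => rw [← Polynomial.divX_mul_X_add (Polynomial.aeval _ p), h0]
  rw [differenceQuotient]
  ring

theorem differenceQuotient_add (p q : D[X]) :
    differenceQuotient (p + q) = differenceQuotient p + differenceQuotient q := by
  rw [differenceQuotient, map_add, Polynomial.divX_add]
  rfl

theorem differenceQuotient_mul (p q : D[X]) :
    differenceQuotient (p * q) = Polynomial.C p * differenceQuotient q +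
      differenceQuotient p * Polynomial.C q +
      Polynomial.X * (differenceQuotient p * differenceQuotient q) := by
  refine Polynomial.isRegular_X.left (?_ : Polynomial.X * _ = Polynomial.X * _)
  have h := aeval_C_X_add_X (p * q)
  rw [map_mul, aeval_C_X_add_X, aeval_C_X_add_X, Polynomial.C_mul] at h
  linear_combination -h

theorem differenceQuotient_C (b : D) : differenceQuotient (Polynomial.C b) = 0 := by
  rw [differenceQuotient, Polynomial.aeval_C]
  exact Polynomial.divX_C _

theorem aeval_add_eq (p : D[X]) (x t : S) :
    Polynomial.aeval (x + t) p = Polynomial.aeval x p +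
      t * Polynomial.aevalAeval x t (differenceQuotient p) := by
  have h := congrArg (Polynomial.aevalAeval x t) (aeval_C_X_add_X p)
  rw [← Polynomial.aeval_algHom_apply] at h
  simpa only [map_add, map_mul, Polynomial.aevalAeval_C, Polynomial.aeval_X,
    Polynomial.aevalAeval_Y] using h

end DifferenceQuotient

section Translation

variable {ι D S : Type*} [CommRing D] [CommRing S] [Algebra D S]

-- Over the fraction field the matrix `!![f y, -β y; g y, α y] * !![α x, β x; -g x, f x] / b` has
-- determinant `1` and does this; the difference quotients carry out the division by `b`.
theorem exists_det_eq_one_aeval_add {f g α β : D[X]} {b : D} (hb : α * f + β * g = Polynomial.C b)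
    (x z : S) :
    ∃ a₁ a₂ a₃ a₄ : S, a₁ * a₄ - a₂ * a₃ = 1 ∧
      Polynomial.aeval (x + algebraMap D S b * z) f =
        a₁ * Polynomial.aeval x f + a₂ * Polynomial.aeval x g ∧
      Polynomial.aeval (x + algebraMap D S b * z) g =
        a₃ * Polynomial.aeval x f + a₄ * Polynomial.aeval x g := by
  let δ (p : D[X]) : S :=
    Polynomial.aevalAeval x (algebraMap D S b * z) (differenceQuotient p)
  have hb' : Polynomial.aeval x α * Polynomial.aeval x f +
      Polynomial.aeval x β * Polynomial.aeval x g = algebraMap D S b := by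
    rw [← map_mul, ← map_mul, ← map_add, hb, Polynomial.aeval_C]
  have hδ : Polynomial.aeval x α * δ f + δ α * Polynomial.aeval x f +
      (Polynomial.aeval x β * δ g + δ β * Polynomial.aeval x g) +
      algebraMap D S b * z * (δ α * δ f + δ β * δ g) = 0 := by
    have h := congrArg (Polynomial.aevalAeval x (algebraMap D S b * z))
      (congrArg differenceQuotient hb)
    simp only [differenceQuotient_add, differenceQuotient_mul, differenceQuotient_C, map_add,
      map_mul, map_zero, Polynomial.aevalAeval_C, Polynomial.aevalAeval_Y] at h
    linear_combination h
  refine ⟨1 + z * (δ f * Polynomial.aeval x α + δ β * Polynomial.aeval x g),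
    z * (δ f * Polynomial.aeval x β - δ β * Polynomial.aeval x f),
    z * (δ g * Polynomial.aeval x α - δ α * Polynomial.aeval x g),
    1 + z * (δ g * Polynomial.aeval x β + δ α * Polynomial.aeval x f), ?_, ?_, ?_⟩
  · linear_combination z * hδ + z * z * (δ α * δ f + δ β * δ g) * hb'
  · linear_combination aeval_add_eq f x (algebraMap D S b * z) - z * δ f * hb'
  · linear_combination aeval_add_eq g x (algebraMap D S b * z) - z * δ g * hb'

variable (S) in
/-- The translations leaving the `GL`-orbit of the values of a polynomial column over `S`
unchanged. -/
def translationIdeal (v : ι → D[X]) : Ideal D where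
  carrier := {b | ∀ x z : S, GLEquiv (fun k => Polynomial.aeval x (v k))
    fun k => Polynomial.aeval (x + algebraMap D S b * z) (v k)}
  add_mem' {a b} ha hb x z := by
    rw [map_add, add_mul, ← add_assoc]
    exact (ha x z).trans (hb _ z)
  zero_mem' x z := by simpa only [map_zero, zero_mul, add_zero] using GLEquiv.refl _
  smul_mem' c b hb x z := by
    rw [smul_eq_mul, map_mul, mul_comm (algebraMap D S c), mul_assoc]
    exact hb x _

theorem mem_translationIdeal {v : ι → D[X]} {b : D} :
    b ∈ translationIdeal S v ↔ ∀ x z : S, GLEquiv (fun k => Polynomial.aeval x (v k))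
      fun k => Polynomial.aeval (x + algebraMap D S b * z) (v k) :=
  Iff.rfl

theorem GLEquiv.translationIdeal_le [Finite ι] {v w : ι → D[X]} (h : GLEquiv v w) :
    translationIdeal S w ≤ translationIdeal S v := fun _ hb x z =>
  have hx (y : S) := h.map (Polynomial.aeval y : D[X] →ₐ[D] S).toRingHom
  ((hx x).trans (hb x z)).trans (hx _).symm

theorem mem_translationIdeal_of_mul_add_mul_eq_C {v : ι → D[X]} {i j : ι} (hij : i ≠ j)
    {α β : D[X]} {b : D} (hb : α * v i + β * v j = Polynomial.C b) :
    b ∈ translationIdeal S v := by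
  refine mem_translationIdeal.2 fun x z => ?_
  obtain ⟨a₁, a₂, a₃, a₄, hdet, hi, hj⟩ := exists_det_eq_one_aeval_add hb x z
  have hb' : Polynomial.aeval x α * Polynomial.aeval x (v i) +
      Polynomial.aeval x β * Polynomial.aeval x (v j) = algebraMap D S b := by
    rw [← map_mul, ← map_mul, ← map_add, hb, Polynomial.aeval_C]
  let y (k : ι) : S :=
    z * Polynomial.aevalAeval x (algebraMap D S b * z) (differenceQuotient (v k))
  refine GLEquiv.of_pair hij hdet (p := fun k => y k * Polynomial.aeval x α)
    (q := fun k => y k * Polynomial.aeval x β) hi hj fun k _ _ => ?_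
  linear_combination aeval_add_eq (v k) x (algebraMap D S b * z) - y k * hb'

end Translation

theorem exists_isCoprime_add_mul {R : Type*} [CommRing R] [IsDomain R] [IsPrincipalIdealRing R]
    {f b c : R} (hf : f ≠ 0) (h : ∃ x y z, x * f + y * b + z * c = 1) :
    ∃ g, IsCoprime f (b + g * c) := by
  classical
  obtain ⟨x, y, z, hxyz⟩ := h
  let F := (UniqueFactorizationMonoid.factors f).filter fun p => ¬ p ∣ b
  refine ⟨F.prod, isCoprime_of_prime_dvd (fun h => hf h.1) fun p hp hpf hpb => ?_⟩
  by_cases hb : p ∣ b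
  · rcases hp.dvd_or_dvd ((dvd_add_right hb).1 hpb) with hpF | hpc
    · obtain ⟨q, hq, hpq⟩ := hp.exists_mem_multiset_dvd hpF
      obtain ⟨hqf, hqb⟩ := Multiset.mem_filter.1 hq
      have hqi := UniqueFactorizationMonoid.irreducible_of_factor q hqf
      exact hqb ((hp.irreducible.associated_of_dvd hqi hpq).symm.dvd.trans hb)
    · refine hp.not_isUnit (isUnit_of_dvd_one ?_)
      rw [← hxyz]
      exact dvd_add (dvd_add (hpf.mul_left x) (hb.mul_left y)) (hpc.mul_left z)
  · obtain ⟨q, hq, hpq⟩ :=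
      UniqueFactorizationMonoid.exists_mem_factors_of_dvd hf hp.irreducible hpf
    have hqF : q ∈ F := Multiset.mem_filter.2 ⟨hq, fun h => hb (hpq.dvd.trans h)⟩
    have hpF : p ∣ F.prod := hpq.dvd.trans (Multiset.dvd_prod hqF)
    exact hb ((dvd_add_left (hpF.mul_right c)).1 hpb)

section Horrocks

variable {ι D S : Type*} [CommRing D] [CommRing S] [Algebra D S]

theorem exists_glEquiv_isCoprime {A K : Type*} [CommRing A] [CommRing K] [IsDomain K]
    [IsPrincipalIdealRing K] [Fintype ι] {φ : A →+* K} (hφ : Function.Surjective φ) {v : ι → A}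
    (hv : IsUnimodular v) {i j : ι} (hij : i ≠ j) (hi : φ (v i) ≠ 0) :
    ∃ w, GLEquiv v w ∧ w i = v i ∧ IsCoprime (φ (w i)) (φ (w j)) := by
  classical
  obtain ⟨u, hu⟩ := hv
  let s : Finset ι := (Finset.univ.erase i).erase j
  have hs : u i * v i + (u j * v j + ∑ k ∈ s, u k * v k) = 1 := by
    rw [Finset.add_sum_erase _ (fun k => u k * v k) (by simp [hij.symm]),
      Finset.add_sum_erase _ (fun k => u k * v k) (Finset.mem_univ i), hu]
  obtain ⟨g, hg⟩ := exists_isCoprime_add_mul (b := φ (v j)) (c := φ (∑ k ∈ s, u k * v k)) hi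
    ⟨φ (u i), φ (u j), 1, by rw [← map_mul, ← map_mul, one_mul, add_assoc, ← map_add, ← map_add,
      hs, map_one]⟩
  obtain ⟨G, rfl⟩ := hφ g
  refine ⟨Function.update v j (v j + G * ∑ k ∈ s, u k * v k), ?_, Function.update_of_ne hij _ _, ?_⟩
  · refine GLEquiv.of_add_sum_mul (c := fun k => if k ∈ s then G * u k else 0) j (by simp [s]) ?_
      fun k hk => Function.update_of_ne hk _ _
    simp only [Function.update_self, ite_mul, zero_mul, Finset.sum_ite_mem, Finset.univ_inter,
      Finset.mul_sum, mul_assoc]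
  · rwa [Function.update_of_ne hij, Function.update_self, map_add, map_mul]

theorem exists_mul_add_mul_eq_C_of_isCoprime_map {K : Type*} [Field K] (φ : D →+* K) {f g : D[X]}
    {M : ℕ} (hf : f.natDegree ≤ M) (hfM : φ (f.coeff M) ≠ 0)
    (h : IsCoprime (f.map φ) (g.map φ)) :
    ∃ p q b, p * f + q * g = Polynomial.C b ∧ φ b ≠ 0 := by
  have hcoeff : (f.map φ).coeff M ≠ 0 := by rwa [Polynomial.coeff_map]
  have hdeg : (f.map φ).natDegree = M :=
    (Polynomial.natDegree_map_le.trans hf).antisymm (Polynomial.le_natDegree_of_ne_zero hcoeff)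
  obtain ⟨p, q, -, -, hpq⟩ := Polynomial.exists_mul_add_mul_eq_C_resultant f g (m := M)
    (n := g.natDegree + 1) hf (Nat.le_succ _) (Or.inr (Nat.succ_ne_zero _))
  refine ⟨p, q, _, by rw [← hpq]; ring, ?_⟩
  obtain ⟨k, hk⟩ := Nat.exists_eq_add_of_le
    ((Polynomial.natDegree_map_le (f := φ) (p := g)).trans (Nat.le_add_right _ 1))
  have hres := Polynomial.resultant_ne_zero (f.map φ) (g.map φ) h
  rw [hdeg] at hres
  rw [← Polynomial.resultant_map_map, hk, Polynomial.resultant_add_right_deg _ _ _ _ _ le_rfl]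
  exact mul_ne_zero (pow_ne_zero _ hcoeff) hres

theorem translationIdeal_eq_top [Fintype ι] [Nontrivial ι] {v : ι → D[X]} {M : ℕ}
    (hdeg : ∀ i, (v i).natDegree ≤ M) (hlead : IsUnimodular fun i => (v i).coeff M)
    (hv : IsUnimodular v) : translationIdeal S v = ⊤ := by
  by_contra hne
  obtain ⟨m, hm, hvm⟩ := Ideal.exists_le_maximal _ hne
  let _ : Field (D ⧸ m) := Ideal.Quotient.field m
  let π : D →+* D ⧸ m := Ideal.Quotient.mk m
  obtain ⟨i, hi⟩ : ∃ i, π ((v i).coeff M) ≠ 0 := by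
    obtain ⟨c, hc⟩ := hlead.map π
    by_contra! h
    simp [h] at hc
  obtain ⟨j, hji⟩ := exists_ne i
  have hπ := Polynomial.map_surjective π Ideal.Quotient.mk_surjective
  have hvi : Polynomial.mapRingHom π (v i) ≠ 0 := fun h => hi <| by
    rw [← Polynomial.coeff_map, ← Polynomial.coe_mapRingHom, h, Polynomial.coeff_zero]
  obtain ⟨w, hvw, hwi, hcop⟩ := exists_glEquiv_isCoprime hπ hv hji.symm hvi
  obtain ⟨p, q, b, hb, hbm⟩ := exists_mul_add_mul_eq_C_of_isCoprime_map π (M := M)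
    (by rw [hwi]; exact hdeg i) (by rwa [hwi]) hcop
  exact hbm <| Ideal.Quotient.eq_zero_iff_mem.2 <| hvm <|
    hvw.translationIdeal_le <| mem_translationIdeal_of_mul_add_mul_eq_C hji.symm hb

theorem glEquiv_aeval [Fintype ι] [Nontrivial ι] {v : ι → D[X]} {M : ℕ}
    (hdeg : ∀ i, (v i).natDegree ≤ M) (hlead : IsUnimodular fun i => (v i).coeff M)
    (hv : IsUnimodular v) (x y : S) :
    GLEquiv (fun k => Polynomial.aeval x (v k)) fun k => Polynomial.aeval y (v k) := by
  have h1 : (1 : D) ∈ translationIdeal S v := by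
    rw [translationIdeal_eq_top hdeg hlead hv]
    exact Submodule.mem_top
  simpa only [map_one, one_mul, add_sub_cancel] using mem_translationIdeal.1 h1 x (y - x)

end Horrocks

section Reflect

variable {ι D : Type*} [CommRing D]

theorem coeff_zero_reflect (M : ℕ) (p : D[X]) : (p.reflect M).coeff 0 = p.coeff M := by
  rw [Polynomial.coeff_reflect, Polynomial.revAt_le M.zero_le, Nat.sub_zero]

theorem coeff_reflect_self (M : ℕ) (p : D[X]) : (p.reflect M).coeff M = p.coeff 0 := by
  rw [Polynomial.coeff_reflect, Polynomial.revAt_le le_rfl, Nat.sub_self]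

theorem eval_one_reflect {M : ℕ} {p : D[X]} (hp : p.natDegree ≤ M) :
    (p.reflect M).eval 1 = p.eval 1 := by
  let _ : Invertible (1 : D) := invertibleOne
  simpa [Polynomial.eval₂_id] using
    Polynomial.eval₂_reflect_mul_pow (RingHom.id D) 1 M p hp

theorem isUnimodular_reflect [Fintype ι] {v : ι → D[X]} (hv : IsUnimodular v) {M : ℕ}
    (hdeg : ∀ i, (v i).natDegree ≤ M) {i₀ : ι} (hi₀ : (v i₀).coeff M = 1) :
    IsUnimodular fun i => (v i).reflect M := by
  classical
  obtain ⟨w, hw⟩ := hv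
  let K := Finset.univ.sup fun i => (w i).natDegree
  let reflectHom : D[X] →+ D[X] :=
    { toFun := Polynomial.reflect (K + M)
      map_zero' := Polynomial.reflect_zero
      map_add' p q := Polynomial.reflect_add p q (K + M) }
  have hsum : ∑ i, (w i).reflect K * (v i).reflect M = Polynomial.X ^ (K + M) := by
    calc ∑ i, (w i).reflect K * (v i).reflect M
        = ∑ i, reflectHom (w i * v i) := Finset.sum_congr rfl fun i hi =>
          (Polynomial.reflect_mul _ _ (Finset.le_sup (f := fun i => (w i).natDegree) hi)
            (hdeg i)).symm
      _ = reflectHom 1 := by rw [← map_sum, hw]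
      _ = Polynomial.X ^ (K + M) := Polynomial.reflect_one _
  have hcop : IsCoprime (Polynomial.X ^ (K + M)) ((v i₀).reflect M) := by
    refine IsCoprime.pow_left ⟨-((v i₀).reflect M).divX, 1, ?_⟩
    have h := Polynomial.divX_mul_X_add ((v i₀).reflect M)
    rw [coeff_zero_reflect, hi₀, Polynomial.C_1] at h
    linear_combination -h
  obtain ⟨a, b, hab⟩ := hcop
  refine ⟨fun i => a * (w i).reflect K + Pi.single (M := fun _ => D[X]) i₀ b i, ?_⟩
  simp only [add_mul, Finset.sum_add_distrib, mul_assoc, ← Finset.mul_sum, hsum,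
    Pi.single_apply, ite_mul, zero_mul, Finset.sum_ite_eq', Finset.mem_univ, if_true, hab]

end Reflect

section MonicEntry

variable {ι D : Type*} [CommRing D]

theorem exists_glEquiv_degree_lt {v : ι → D[X]} [Nontrivial D] {i₀ : ι} (hm : (v i₀).Monic) :
    ∃ w, GLEquiv v w ∧ w i₀ = v i₀ ∧ ∀ i, i ≠ i₀ → (w i).degree < (v i₀).degree := by
  classical
  let w := fun k => if k = i₀ then v i₀ else v k %ₘ v i₀
  refine ⟨w, ?_, if_pos rfl, fun i hi => ?_⟩
  · refine GLEquiv.of_add_mul (p := fun k => -(v k /ₘ v i₀)) i₀ (if_pos rfl) fun k hk => ?_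
    simp only [w, if_neg hk]
    linear_combination Polynomial.modByMonic_add_div (v k) (v i₀)
  · simp only [w, if_neg hi]
    exact Polynomial.degree_modByMonic_lt _ hm

variable [Fintype ι] [DecidableEq ι]

/- The column `v` is moved to its value at `1`, which is also the value at `1` of the reflected
column, and the latter is moved to its value at `0`, where the monic entry becomes `1` and the
others vanish. -/
theorem glEquiv_single_of_degree_lt [Nontrivial ι] [Nontrivial D] {v : ι → D[X]}
    (hv : IsUnimodular v) {i₀ : ι} (hm : (v i₀).Monic)
    (hdeg : ∀ i, i ≠ i₀ → (v i).degree < (v i₀).degree) : GLEquiv v (Pi.single i₀ 1) := by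
  let M := (v i₀).natDegree
  have hnat (i : ι) : (v i).natDegree ≤ M := by
    rcases eq_or_ne i i₀ with rfl | hi
    · exact le_rfl
    · exact Polynomial.natDegree_le_natDegree (hdeg i hi).le
  have hcoeff (i : ι) : (v i).coeff M = Pi.single (M := fun _ => D) i₀ 1 i := by
    rcases eq_or_ne i i₀ with rfl | hi
    · rw [Pi.single_eq_same]
      exact hm
    · rw [Pi.single_eq_of_ne hi]
      refine Polynomial.coeff_eq_zero_of_degree_lt ?_
      rw [← Polynomial.degree_eq_natDegree hm.ne_zero]
      exact hdeg i hi
  have hlead : IsUnimodular fun i => (v i).coeff M := ⟨Pi.single i₀ 1, by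
    simp [hcoeff, Pi.single_apply]⟩
  have hlead' : IsUnimodular fun i => ((v i).reflect M).coeff M := by
    simpa only [coeff_reflect_self, Polynomial.coeff_zero_eq_eval_zero,
      Polynomial.coe_evalRingHom] using hv.map (Polynomial.evalRingHom 0)
  have hun' := isUnimodular_reflect hv hnat ((hcoeff i₀).trans (Pi.single_eq_same i₀ 1))
  have hnat' (i : ι) : ((v i).reflect M).natDegree ≤ M :=
    Polynomial.natDegree_reflect_le.trans (max_le le_rfl (hnat i))
  have hX := glEquiv_aeval hnat hlead hv (Polynomial.X : D[X]) 1
  have h1 := glEquiv_aeval hnat' hlead' hun' (1 : D[X]) 0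
  have haeval (a : D) (p : D[X]) :
      Polynomial.aeval (Polynomial.C a) p = Polynomial.C (p.eval a) := by
    rw [Polynomial.aeval_def, Polynomial.algebraMap_eq, Polynomial.eval₂_at_apply]
  rw [← Polynomial.C_1] at hX h1
  rw [← Polynomial.C_0] at h1
  simp only [haeval, Polynomial.aeval_X_left_apply, eval_one_reflect, hnat,
    ← Polynomial.coeff_zero_eq_eval_zero, coeff_zero_reflect, hcoeff] at hX h1
  refine hX.trans ?_
  convert h1 using 1
  ext1 i
  rw [Pi.single_apply, Pi.single_apply]
  split_ifs <;> simp

theorem glEquiv_single_of_monic [Nontrivial ι] {v : ι → D[X]} (hv : IsUnimodular v) {i₀ : ι}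
    (hm : (v i₀).Monic) : GLEquiv v (Pi.single i₀ 1) := by
  rcases subsingleton_or_nontrivial D with hD | hD
  · rw [Subsingleton.elim v (Pi.single i₀ 1)]
    exact GLEquiv.refl _
  obtain ⟨w, hvw, hw, hdeg⟩ := exists_glEquiv_degree_lt hm
  exact hvw.trans (glEquiv_single_of_degree_lt (hvw.isUnimodular hv) (hw ▸ hm) (by rwa [hw]))

end MonicEntry

/-! ### Numerators of controlled degree -/

section Numerators

variable {D A : Type*} [CommRing D] [CommRing A] [Algebra D[X] A]

/-- `f ^ M * a` is the image of a polynomial of degree at most `M * σ`. For `A = D[X, f⁻¹]` this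
bounds both the denominator and the numerator of `a`. -/
def NumeratorLE (f : D[X]) (σ M : ℕ) (a : A) : Prop :=
  ∃ p : D[X], p.natDegree ≤ M * σ ∧ algebraMap D[X] A p = algebraMap D[X] A f ^ M * a

/-- `f ^ M * a` is the image of a polynomial of degree at most `M * σ` whose coefficient in degree
`M * σ` and whose residue modulo `f` are both equal to `c` up to a unit. For `c = 1` such an
element has a monic numerator which is comaximal with `f`. -/
def NumeratorUnitary (f : D[X]) (σ M : ℕ) (c : D) (a : A) : Prop :=
  ∃ (p : D[X]) (u u' : Dˣ), p.natDegree ≤ M * σ ∧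
    algebraMap D[X] A p = algebraMap D[X] A f ^ M * a ∧
    p.coeff (M * σ) = c * u ∧ f ∣ p - Polynomial.C (c * u')

variable {f : D[X]} {σ M M' : ℕ} {c c' : D} {a b : A}

namespace NumeratorLE

theorem mul (h : NumeratorLE f σ M a) (h' : NumeratorLE f σ M' b) :
    NumeratorLE f σ (M + M') (a * b) := by
  obtain ⟨p, hp, hpa⟩ := h
  obtain ⟨q, hq, hqb⟩ := h'
  refine ⟨p * q, Polynomial.natDegree_mul_le.trans ?_, ?_⟩
  · rw [add_mul]
    exact add_le_add hp hq
  · rw [map_mul, hpa, hqb]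
    ring

theorem add (h : NumeratorLE f σ M a) (h' : NumeratorLE f σ M b) : NumeratorLE f σ M (a + b) := by
  obtain ⟨p, hp, hpa⟩ := h
  obtain ⟨q, hq, hqb⟩ := h'
  refine ⟨p + q, (Polynomial.natDegree_add_le _ _).trans (max_le hp hq), ?_⟩
  rw [map_add, hpa, hqb, mul_add]

theorem neg (h : NumeratorLE f σ M a) : NumeratorLE f σ M (-a) := by
  obtain ⟨p, hp, hpa⟩ := h
  exact ⟨-p, by rwa [Polynomial.natDegree_neg], by rw [map_neg, hpa, mul_neg]⟩

theorem zero (M : ℕ) : NumeratorLE f σ M (0 : A) := ⟨0, by simp, by simp⟩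

theorem const (M : ℕ) (hσ : f.natDegree ≤ σ) (c : D) :
    NumeratorLE f σ M (algebraMap D[X] A (Polynomial.C c)) := by
  refine ⟨f ^ M * Polynomial.C c, Polynomial.natDegree_mul_le.trans ?_, by simp⟩
  rw [Polynomial.natDegree_C, add_zero]
  exact Polynomial.natDegree_pow_le.trans (Nat.mul_le_mul_left M hσ)

theorem mono (hσ : f.natDegree ≤ σ) (h : NumeratorLE f σ M a) (hM : M ≤ M') :
    NumeratorLE f σ M' a := by
  obtain ⟨k, rfl⟩ := Nat.exists_eq_add_of_le hM
  simpa using h.mul (const (A := A) k hσ 1)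

theorem pow (h : NumeratorLE f σ M a) (k : ℕ) : NumeratorLE f σ (k * M) (a ^ k) := by
  induction k with
  | zero => exact ⟨1, by simp, by simp⟩
  | succ k ih =>
    rw [pow_succ, add_mul, one_mul]
    exact ih.mul h

theorem sum {ι : Type*} {s : Finset ι} {g : ι → A} (h : ∀ i ∈ s, NumeratorLE f σ M (g i)) :
    NumeratorLE f σ M (∑ i ∈ s, g i) :=
  Finset.sum_induction g _ (fun _ _ => add) (zero M) h

end NumeratorLE

namespace NumeratorUnitary

theorem numeratorLE (h : NumeratorUnitary f σ M c a) : NumeratorLE f σ M a := by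
  obtain ⟨p, -, -, hp, hpa, -⟩ := h
  exact ⟨p, hp, hpa⟩

theorem mul (h : NumeratorUnitary f σ M c a) (h' : NumeratorUnitary f σ M' c' b) :
    NumeratorUnitary f σ (M + M') (c * c') (a * b) := by
  obtain ⟨p, u, u', hp, hpa, hpu, x, hx⟩ := h
  obtain ⟨q, v, v', hq, hqb, hqv, y, hy⟩ := h'
  refine ⟨p * q, u * v, u' * v', Polynomial.natDegree_mul_le.trans ?_, ?_, ?_,
    x * q + Polynomial.C (c * u') * y, ?_⟩
  · rw [add_mul]
    exact add_le_add hp hq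
  · rw [map_mul, hpa, hqb]
    ring
  · rw [add_mul, Polynomial.coeff_mul_add_eq_of_natDegree_le hp hq, hpu, hqv]
    push_cast
    ring
  · push_cast
    simp only [map_mul] at hx hy ⊢
    linear_combination q * hx + Polynomial.C c * Polynomial.C (u' : D) * hy

theorem const (c : D) : NumeratorUnitary f σ 0 c (algebraMap D[X] A (Polynomial.C c)) :=
  ⟨Polynomial.C c, 1, 1, by simp, by simp, by simp, by simp⟩

theorem one : NumeratorUnitary f σ 0 1 (1 : A) := by
  simpa using const (A := A) (f := f) (σ := σ) 1

theorem pow (h : NumeratorUnitary f σ M 1 a) (k : ℕ) :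
    NumeratorUnitary f σ (k * M) 1 (a ^ k) := by
  induction k with
  | zero => simpa using one
  | succ k ih =>
    rw [pow_succ, add_mul, one_mul]
    simpa using ih.mul h

theorem add_numeratorLE (hσ : f.natDegree < σ) (h : NumeratorUnitary f σ M c a)
    (h' : NumeratorLE f σ M' b) (hM : M' < M) : NumeratorUnitary f σ M c (a + b) := by
  obtain ⟨p, u, u', hp, hpa, hpu, hpf⟩ := h
  obtain ⟨q, hq, hqb⟩ := h'
  obtain ⟨k, rfl⟩ := Nat.exists_eq_add_of_lt hM
  have hdeg : (f ^ (k + 1) * q).natDegree < (M' + k + 1) * σ := by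
    have hf : (f ^ (k + 1)).natDegree ≤ (k + 1) * f.natDegree := Polynomial.natDegree_pow_le
    have hmul : (f ^ (k + 1) * q).natDegree ≤ (f ^ (k + 1)).natDegree + q.natDegree :=
      Polynomial.natDegree_mul_le
    nlinarith
  refine ⟨p + f ^ (k + 1) * q, u, u', ?_, ?_, ?_, ?_⟩
  · exact (Polynomial.natDegree_add_le _ _).trans (max_le hp hdeg.le)
  · rw [map_add, map_mul, map_pow, hpa, hqb]
    ring
  · rw [Polynomial.coeff_add, hpu, Polynomial.coeff_eq_zero_of_natDegree_lt hdeg, add_zero]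
  · rw [add_sub_right_comm]
    exact dvd_add hpf (Dvd.intro (f ^ k * q) (by ring))

end NumeratorUnitary

variable {R : Type*} [CommRing R]

theorem exists_numeratorLE_eval₂ (ρ : R →+* D) (hσ : f.natDegree ≤ σ) (k : ℕ)
    (h : MvPolynomial (Fin k) R) : ∃ B : ℕ, ∀ T : ℕ, 1 ≤ T → ∀ ζ : Fin k → A,
      (∀ i : Fin k, NumeratorLE f σ (T ^ (k - 1 - (i : ℕ))) (ζ i)) →
      NumeratorLE f σ (B * (k * T ^ (k - 1)))
        (eval₂ ((algebraMap D[X] A).comp (Polynomial.C.comp ρ)) ζ h) := by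
  induction h using MvPolynomial.induction_on with
  | C r =>
    refine ⟨0, fun T _ ζ _ => ?_⟩
    rw [eval₂_C]
    exact NumeratorLE.const _ hσ _
  | add p q hp hq =>
    obtain ⟨B₁, h₁⟩ := hp
    obtain ⟨B₂, h₂⟩ := hq
    refine ⟨max B₁ B₂, fun T hT ζ hζ => ?_⟩
    rw [eval₂_add]
    exact ((h₁ T hT ζ hζ).mono hσ (Nat.mul_le_mul_right _ (le_max_left _ _))).add
      ((h₂ T hT ζ hζ).mono hσ (Nat.mul_le_mul_right _ (le_max_right _ _)))
  | mul_X p i hp =>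
    obtain ⟨B, hB⟩ := hp
    refine ⟨B + 1, fun T hT ζ hζ => ?_⟩
    rw [eval₂_mul, eval₂_X]
    refine ((hB T hT ζ hζ).mul (hζ i)).mono hσ ?_
    have hi : T ^ (k - 1 - (i : ℕ)) ≤ T ^ (k - 1) := Nat.pow_le_pow_right hT (by omega)
    have hk : 1 * T ^ (k - 1) ≤ k * T ^ (k - 1) := Nat.mul_le_mul_right _ i.pos
    rw [add_mul]
    omega

theorem eval₂_finSuccEquiv {S : Type*} [CommRing S] {k : ℕ} (φ : R →+* S) (ζ : Fin (k + 1) → S)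
    (h : MvPolynomial (Fin (k + 1)) R) :
    (finSuccEquiv R k h).eval₂ (eval₂Hom φ fun i => ζ i.succ) (ζ 0) = eval₂ φ ζ h := by
  have : (Polynomial.eval₂RingHom (eval₂Hom φ fun i => ζ i.succ) (ζ 0)).comp
      (finSuccEquiv R k).toRingHom = eval₂Hom φ ζ := by
    refine MvPolynomial.ringHom_ext (fun r => ?_) fun i => ?_
    · simp [finSuccEquiv_apply]
    · cases i using Fin.cases <;> simp [finSuccEquiv_X_zero, finSuccEquiv_X_succ]
  exact RingHom.congr_fun this h

theorem mul_mul_pow_pred_lt_pow {b k T : ℕ} (h : b * k < T) : b * (k * T ^ (k - 1)) < T ^ k := by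
  cases k with
  | zero => simp
  | succ k =>
    rw [← mul_assoc, Nat.add_sub_cancel, pow_succ']
    exact Nat.mul_lt_mul_of_pos_right h (Nat.pow_pos (by omega))

/- The exponents `T ^ (k - 1 - i)` make the monomial carrying the top coefficient of a generalized
monic polynomial dominate all other terms. -/
theorem exists_numeratorUnitary_eval₂ (ρ : R →+* D) (hσ : f.natDegree < σ) (k : ℕ)
    (h : MvPolynomial (Fin k) R) (hh : h ∈ generalizedMonics R k) :
    ∃ T₀ : ℕ, ∀ T : ℕ, T₀ ≤ T → ∀ ζ : Fin k → A,
      (∀ i : Fin k, NumeratorUnitary f σ (T ^ (k - 1 - (i : ℕ))) 1 (ζ i)) →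
      ∃ W, NumeratorUnitary f σ W 1
        (eval₂ ((algebraMap D[X] A).comp (Polynomial.C.comp ρ)) ζ h) := by
  induction k with
  | zero =>
    refine ⟨0, fun T _ ζ _ => ⟨0, ?_⟩⟩
    rw [show h = 1 from hh, eval₂_one]
    exact NumeratorUnitary.one
  | succ k ih =>
    obtain ⟨M, hM, hM'⟩ := mem_generalizedMonics_succ.1 hh
    obtain ⟨T₁, hT₁⟩ := ih _ hM'
    choose B hB using fun j =>
      exists_numeratorLE_eval₂ (A := A) (f := f) ρ hσ.le k ((finSuccEquiv R k h).coeff j)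
    let B₀ := (Finset.range M).sup B
    refine ⟨max T₁ (B₀ * k + 1), fun T hT ζ hζ => ?_⟩
    have hT' : B₀ * k < T := (le_max_right _ _).trans hT
    have hζ₀ : NumeratorUnitary f σ (T ^ k) 1 (ζ 0) := by simpa using hζ 0
    have hζ' (i : Fin k) : NumeratorUnitary f σ (T ^ (k - 1 - (i : ℕ))) 1 (ζ i.succ) := by
      convert hζ i.succ using 2
      rw [Fin.val_succ]
      omega
    obtain ⟨W, hW⟩ := hT₁ T ((le_max_left _ _).trans hT) (fun i => ζ i.succ) hζ'
    have htop := hW.mul (hζ₀.pow M)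
    rw [one_mul] at htop
    rw [← eval₂_finSuccEquiv, Polynomial.eval₂_eq_sum_range' _ (Nat.lt_succ_of_le hM),
      Finset.sum_range_succ, add_comm]
    refine ⟨W + M * T ^ k, ?_⟩
    rcases Nat.eq_zero_or_pos M with rfl | hMpos
    · simpa using htop
    have hMT : 0 < M * T ^ k := Nat.mul_pos hMpos (Nat.pow_pos (by omega))
    refine htop.add_numeratorLE (M' := M * T ^ k - 1) hσ (NumeratorLE.sum fun j hj => ?_) (by omega)
    have hterm := (hB j T (by omega) _ fun i => (hζ' i).numeratorLE).mul (hζ₀.numeratorLE.pow j)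
    refine hterm.mono hσ.le ?_
    have hBj : B j * k < T :=
      (Nat.mul_le_mul_right k (Finset.le_sup (f := B) hj)).trans_lt hT'
    have hlow := mul_mul_pow_pred_lt_pow hBj
    have hjM : (j + 1) * T ^ k ≤ M * T ^ k := Nat.mul_le_mul_right _ (Finset.mem_range.1 hj)
    rw [add_mul, one_mul] at hjM
    omega

end Numerators

/-! ### The rings `B` and `B[Y, f⁻¹]` -/

section PolyLaurent

universe u v

/-- The ring `B = R[X_1,…,X_m,Y_1^{±1},…,Y_n^{±1}]`. -/
def PolyLaurent (R : Type u) [CommRing R] (m n : ℕ) : Type u := Localization (Ymonoid R m n)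

instance (R : Type u) [CommRing R] (m n : ℕ) : CommRing (PolyLaurent R m n) :=
  inferInstanceAs (CommRing (Localization (Ymonoid R m n)))

instance (R : Type u) [CommRing R] (m n : ℕ) :
    Algebra (MvPolynomial (Fin m ⊕ Fin n) R) (PolyLaurent R m n) :=
  inferInstanceAs (Algebra (MvPolynomial (Fin m ⊕ Fin n) R) (Localization (Ymonoid R m n)))

instance (R : Type u) [CommRing R] (m n : ℕ) : Algebra R (PolyLaurent R m n) :=
  ((algebraMap (MvPolynomial (Fin m ⊕ Fin n) R) (PolyLaurent R m n)).comp C).toAlgebra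

instance (R : Type u) [CommRing R] (m n : ℕ) :
    IsScalarTower R (MvPolynomial (Fin m ⊕ Fin n) R) (PolyLaurent R m n) :=
  IsScalarTower.of_algebraMap_eq fun _ => rfl

instance (R : Type u) [CommRing R] (m n : ℕ) :
    IsLocalization (Ymonoid R m n) (PolyLaurent R m n) :=
  inferInstanceAs (IsLocalization (Ymonoid R m n) (Localization (Ymonoid R m n)))

namespace PolyLaurent

variable (R : Type u) [CommRing R] (m n : ℕ)

/-- The variable `X_i` of `B`. -/
def varX (i : Fin m) : PolyLaurent R m n :=
  algebraMap (MvPolynomial (Fin m ⊕ Fin n) R) _ (X (Sum.inl i))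

theorem isUnit_algebraMap_X_inr (j : Fin n) :
    IsUnit (algebraMap (MvPolynomial (Fin m ⊕ Fin n) R) (PolyLaurent R m n) (X (Sum.inr j))) :=
  IsLocalization.map_units _
    (⟨X (Sum.inr j), Submonoid.subset_closure ⟨j, rfl⟩⟩ : Ymonoid R m n)

/-- The invertible variable `Y_j` of `B`. -/
def varY (j : Fin n) : (PolyLaurent R m n)ˣ := (isUnit_algebraMap_X_inr R m n j).unit

variable {R m n} {S : Type v} [CommRing S]

section lift

variable (φ : R →+* S) (x : Fin m → S) (y : Fin n → Sˣ)

theorem isUnit_eval₂Hom_of_mem_Ymonoid (z : Ymonoid R m n) :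
    IsUnit (eval₂Hom φ (Sum.elim x fun j => (y j : S)) z) := by
  have hle : Ymonoid R m n ≤ (IsUnit.submonoid S).comap
      (eval₂Hom φ (Sum.elim x fun j => (y j : S))).toMonoidHom := by
    rw [Ymonoid, Submonoid.closure_le]
    rintro _ ⟨j, rfl⟩
    change IsUnit _
    simp
  exact hle z.2

/-- The homomorphism from `B` with prescribed values on `R` and on the variables. -/
def lift : PolyLaurent R m n →+* S :=
  IsLocalization.lift (M := Ymonoid R m n) (isUnit_eval₂Hom_of_mem_Ymonoid φ x y)

@[simp]
theorem lift_algebraMap (r : R) : lift φ x y (algebraMap R (PolyLaurent R m n) r) = φ r := by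
  rw [IsScalarTower.algebraMap_apply R (MvPolynomial (Fin m ⊕ Fin n) R) (PolyLaurent R m n), lift,
    IsLocalization.lift_eq]
  simp

@[simp]
theorem lift_varX (i : Fin m) : lift φ x y (varX R m n i) = x i := by
  rw [varX, lift, IsLocalization.lift_eq]
  simp

@[simp]
theorem lift_varY (j : Fin n) : lift φ x y (varY R m n j) = y j := by
  rw [varY, IsUnit.unit_spec, lift, IsLocalization.lift_eq]
  simp

end lift

theorem ringHom_ext {g h : PolyLaurent R m n →+* S}
    (hR : ∀ r, g (algebraMap R _ r) = h (algebraMap R _ r))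
    (hX : ∀ i, g (varX R m n i) = h (varX R m n i))
    (hY : ∀ j, g (varY R m n j) = h (varY R m n j)) : g = h := by
  refine IsLocalization.ringHom_ext (Ymonoid R m n) (MvPolynomial.ringHom_ext hR ?_)
  rintro (i | j)
  · exact hX i
  · exact hY j

end PolyLaurent

/-- The image in `B[Y]` of a polynomial `f ∈ R[Y]`. -/
abbrev PolyLaurentAway.polyB {R : Type u} [CommRing R] (m n : ℕ) (f : R[X]) :
    (PolyLaurent R m n)[X] :=
  f.map (algebraMap R (PolyLaurent R m n))

/-- The ring `A = B[Y, f⁻¹]`, the case of `B[Y]` being localized at the powers of the image of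
`f ∈ R[Y]`. -/
def PolyLaurentAway (R : Type u) [CommRing R] (m n : ℕ) (f : R[X]) : Type u :=
  Localization.Away (PolyLaurentAway.polyB m n f)

instance (R : Type u) [CommRing R] (m n : ℕ) (f : R[X]) : CommRing (PolyLaurentAway R m n f) :=
  inferInstanceAs (CommRing (Localization.Away (PolyLaurentAway.polyB m n f)))

instance (R : Type u) [CommRing R] (m n : ℕ) (f : R[X]) :
    Algebra (PolyLaurent R m n)[X] (PolyLaurentAway R m n f) :=
  inferInstanceAs (Algebra (PolyLaurent R m n)[X]
    (Localization.Away (PolyLaurentAway.polyB m n f)))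

instance (R : Type u) [CommRing R] (m n : ℕ) (f : R[X]) :
    IsLocalization.Away (PolyLaurentAway.polyB m n f) (PolyLaurentAway R m n f) :=
  inferInstanceAs (IsLocalization.Away (PolyLaurentAway.polyB m n f)
    (Localization.Away (PolyLaurentAway.polyB m n f)))

namespace PolyLaurentAway

variable (R : Type u) [CommRing R] (m n : ℕ) (f : R[X])

/-- The structure map `B → A`. -/
def ofLaurent : PolyLaurent R m n →+* PolyLaurentAway R m n f :=
  (algebraMap (PolyLaurent R m n)[X] (PolyLaurentAway R m n f)).comp Polynomial.C

/-- The structure map `R → A`. -/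
def ofBase : R →+* PolyLaurentAway R m n f :=
  (ofLaurent R m n f).comp (algebraMap R (PolyLaurent R m n))

/-- The variable `X_i` of `A`. -/
def varX (i : Fin m) : PolyLaurentAway R m n f := ofLaurent R m n f (PolyLaurent.varX R m n i)

/-- The invertible variable `Y_j` of `A`. -/
def varY (j : Fin n) : (PolyLaurentAway R m n f)ˣ :=
  Units.map (ofLaurent R m n f) (PolyLaurent.varY R m n j)

/-- The variable `Y` of `A = B[Y, f⁻¹]`, called `T` to tell it from the Laurent variables. -/
def varT : PolyLaurentAway R m n f :=
  algebraMap (PolyLaurent R m n)[X] (PolyLaurentAway R m n f) Polynomial.X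

theorem algebraMap_map :
    algebraMap (PolyLaurent R m n)[X] (PolyLaurentAway R m n f)
      (polyB m n f) =
        f.eval₂ (ofBase R m n f) (varT R m n f) := by
  conv_lhs => rw [← Polynomial.eval₂_C_X (p := polyB m n f), Polynomial.hom_eval₂,
    Polynomial.eval₂_map]
  rfl

theorem isUnit_eval₂ : IsUnit (f.eval₂ (ofBase R m n f) (varT R m n f)) := by
  rw [← algebraMap_map]
  exact IsLocalization.Away.algebraMap_isUnit _

/-- The element `f` as a unit of `A = B[Y, f⁻¹]`. -/
def unitF : (PolyLaurentAway R m n f)ˣ := (isUnit_eval₂ R m n f).unit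

theorem coe_unitF : (unitF R m n f : PolyLaurentAway R m n f) =
    f.eval₂ (ofBase R m n f) (varT R m n f) := rfl

theorem algebraMap_map_eq_unitF :
    algebraMap (PolyLaurent R m n)[X] (PolyLaurentAway R m n f)
      (polyB m n f) = unitF R m n f :=
  algebraMap_map R m n f

variable {R m n f} {S : Type v} [CommRing S]

section lift

variable (φ : R →+* S) (x : Fin m → S) (y : Fin n → Sˣ) (t : S) (ht : IsUnit (f.eval₂ φ t))

/-- The homomorphism from `A` with prescribed values on `R` and on the variables. -/
def lift : PolyLaurentAway R m n f →+* S :=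
  IsLocalization.Away.lift (polyB m n f)
    (g := Polynomial.eval₂RingHom (PolyLaurent.lift φ x y) t) (by
      rw [Polynomial.coe_eval₂RingHom, Polynomial.eval₂_map]
      convert ht using 2
      ext r
      exact PolyLaurent.lift_algebraMap φ x y r)

theorem lift_algebraMap (p : (PolyLaurent R m n)[X]) :
    lift φ x y t ht (algebraMap _ _ p) = p.eval₂ (PolyLaurent.lift φ x y) t :=
  IsLocalization.Away.lift_eq _ _ _

@[simp]
theorem lift_ofLaurent (c : PolyLaurent R m n) :
    lift φ x y t ht (ofLaurent R m n f c) = PolyLaurent.lift φ x y c := by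
  rw [ofLaurent, RingHom.comp_apply, lift_algebraMap, Polynomial.eval₂_C]

@[simp]
theorem lift_ofBase (r : R) : lift φ x y t ht (ofBase R m n f r) = φ r := by
  simp [ofBase]

@[simp]
theorem lift_varX (i : Fin m) : lift φ x y t ht (varX R m n f i) = x i := by
  simp [varX]

@[simp]
theorem lift_varY (j : Fin n) : lift φ x y t ht (varY R m n f j) = y j := by
  simp [varY]

@[simp]
theorem lift_varT : lift φ x y t ht (varT R m n f) = t := by
  rw [varT, lift_algebraMap, Polynomial.eval₂_X]

end lift

theorem ringHom_ext {g h : PolyLaurentAway R m n f →+* S}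
    (hR : ∀ r, g (ofBase R m n f r) = h (ofBase R m n f r))
    (hX : ∀ i, g (varX R m n f i) = h (varX R m n f i))
    (hY : ∀ j, g (varY R m n f j) = h (varY R m n f j))
    (hT : g (varT R m n f) = h (varT R m n f)) : g = h := by
  refine IsLocalization.ringHom_ext
    (Submonoid.powers (polyB m n f)) (Polynomial.ringHom_ext ?_ hT)
  exact RingHom.congr_fun
    (PolyLaurent.ringHom_ext (g := g.comp (ofLaurent R m n f)) (h := h.comp (ofLaurent R m n f))
      hR hX hY)

theorem mem_of_generators_mem (T : Subring (PolyLaurentAway R m n f))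
    (hR : ∀ r, ofBase R m n f r ∈ T) (hX : ∀ i, varX R m n f i ∈ T)
    (hY : ∀ j, (varY R m n f j : PolyLaurentAway R m n f) ∈ T)
    (hY' : ∀ j, (↑(varY R m n f j)⁻¹ : PolyLaurentAway R m n f) ∈ T)
    (hT : varT R m n f ∈ T) (hF : (↑(unitF R m n f)⁻¹ : PolyLaurentAway R m n f) ∈ T)
    (a : PolyLaurentAway R m n f) : a ∈ T := by
  let y : Fin n → Tˣ := fun j => ⟨⟨_, hY j⟩, ⟨_, hY' j⟩, by ext; simp, by ext; simp⟩
  let φ : R →+* T := (ofBase R m n f).codRestrict T hR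
  let t : T := ⟨_, hT⟩
  have hft : T.subtype (f.eval₂ φ t) = unitF R m n f :=
    Polynomial.hom_eval₂ f φ T.subtype t
  have hu : IsUnit (f.eval₂ φ t) := by
    refine IsUnit.of_mul_eq_one (⟨_, hF⟩ : T) (Subtype.ext ?_)
    rw [Subring.coe_mul, ← Subring.subtype_apply, hft, Units.mul_inv, Subring.coe_one]
  let g := lift φ (fun i => (⟨_, hX i⟩ : T)) y t hu
  have hg : T.subtype.comp g = RingHom.id _ := by
    apply ringHom_ext <;> intros <;>
      simp only [RingHom.comp_apply, g, lift_ofBase, lift_varX, lift_varY, lift_varT] <;> rfl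
  have hga : (g a : PolyLaurentAway R m n f) = a := RingHom.congr_fun hg a
  rw [← hga]
  exact (g a).2

end PolyLaurentAway

end PolyLaurent

/-! ### Changes of variables -/

namespace PolyLaurentAway

variable {R : Type*} [CommRing R] {m n : ℕ} {f : R[X]}

variable (R m n f) in
/-- An element of `A` which has a monic numerator comaximal with `f` and is fixed by every
endomorphism fixing `R` and `Y`: it is `f + f⁻¹`, or `Y` when `f` is constant. -/
def pivot : PolyLaurentAway R m n f :=
  if f.natDegree = 0 then varT R m n f else unitF R m n f + ↑(unitF R m n f)⁻¹

/-- The slope for which `pivot` has numerator degree one. -/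
def slope (f : R[X]) : ℕ := if f.natDegree = 0 then 1 else 2 * f.natDegree

theorem slope_eq (h : f.natDegree ≠ 0) (k : ℕ) : k * slope f = 2 * k * f.natDegree := by
  rw [slope, if_neg h]
  ring

theorem natDegree_map_lt_slope : (polyB m n f).natDegree < slope f := by
  have h : (polyB m n f).natDegree ≤ f.natDegree := Polynomial.natDegree_map_le
  rw [slope]
  split_ifs <;> omega

section endomorphisms

variable {g : PolyLaurentAway R m n f →+* PolyLaurentAway R m n f}

theorem map_unitF (hR : ∀ r, g (ofBase R m n f r) = ofBase R m n f r)
    (hT : g (varT R m n f) = varT R m n f) :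
    Units.map (g : PolyLaurentAway R m n f →* PolyLaurentAway R m n f) (unitF R m n f) =
      unitF R m n f := by
  ext
  have hg : g.comp (ofBase R m n f) = ofBase R m n f := RingHom.ext hR
  rw [Units.coe_map, MonoidHom.coe_coe, coe_unitF, Polynomial.hom_eval₂, hT, hg]

theorem map_pivot (hR : ∀ r, g (ofBase R m n f r) = ofBase R m n f r)
    (hT : g (varT R m n f) = varT R m n f) : g (pivot R m n f) = pivot R m n f := by
  have hF := map_unitF hR hT
  have h₁ : g (unitF R m n f) = unitF R m n f := congrArg Units.val hF
  have h₂ : g ↑(unitF R m n f)⁻¹ = ↑(unitF R m n f)⁻¹ := congrArg Units.inv hF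
  rw [pivot]
  split_ifs
  · exact hT
  · rw [map_add, h₁, h₂]

end endomorphisms

section changeVar

variable (a : Fin m → ℕ) (b : Fin n → ℕ)

variable (R m n f) in
/-- The endomorphism of `A` over `R[Y, f⁻¹]` with `X_i ↦ X_i + pivot ^ a_i` and
`Y_j ↦ Y_j * f ^ b_j`. -/
def changeVarHom : PolyLaurentAway R m n f →+* PolyLaurentAway R m n f :=
  lift (ofBase R m n f) (fun i => varX R m n f i + pivot R m n f ^ a i)
    (fun j => varY R m n f j * unitF R m n f ^ b j) (varT R m n f) (isUnit_eval₂ R m n f)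

variable (R m n f) in
/-- The inverse of `changeVarHom`. -/
def changeVarInv : PolyLaurentAway R m n f →+* PolyLaurentAway R m n f :=
  lift (ofBase R m n f) (fun i => varX R m n f i - pivot R m n f ^ a i)
    (fun j => varY R m n f j * (unitF R m n f)⁻¹ ^ b j) (varT R m n f) (isUnit_eval₂ R m n f)

theorem changeVarHom_comp_changeVarInv :
    (changeVarHom R m n f a b).comp (changeVarInv R m n f a b) = RingHom.id _ := by
  have hR (r : R) : changeVarHom R m n f a b (ofBase R m n f r) = ofBase R m n f r := by
    simp [changeVarHom]
  have hT : changeVarHom R m n f a b (varT R m n f) = varT R m n f := by simp [changeVarHom]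
  refine ringHom_ext (fun r => ?_) (fun i => ?_) (fun j => ?_) ?_
  · simp [changeVarInv, hR]
  · simp only [RingHom.comp_apply, RingHom.id_apply, changeVarInv, lift_varX, map_sub, map_pow,
      map_pivot hR hT]
    simp [changeVarHom]
  · have hF : changeVarHom R m n f a b ↑(unitF R m n f)⁻¹ = ↑(unitF R m n f)⁻¹ :=
      congrArg Units.inv (map_unitF hR hT)
    simp only [RingHom.comp_apply, RingHom.id_apply, changeVarInv, lift_varY, Units.val_mul,
      map_mul, Units.val_pow_eq_pow_val, map_pow, hF]
    simp [changeVarHom, mul_assoc, ← mul_pow]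
  · simp [changeVarInv, hT]

theorem changeVarInv_comp_changeVarHom :
    (changeVarInv R m n f a b).comp (changeVarHom R m n f a b) = RingHom.id _ := by
  have hR (r : R) : changeVarInv R m n f a b (ofBase R m n f r) = ofBase R m n f r := by
    simp [changeVarInv]
  have hT : changeVarInv R m n f a b (varT R m n f) = varT R m n f := by simp [changeVarInv]
  refine ringHom_ext (fun r => ?_) (fun i => ?_) (fun j => ?_) ?_
  · simp [changeVarHom, hR]
  · simp only [RingHom.comp_apply, RingHom.id_apply, changeVarHom, lift_varX, map_add, map_pow,
      map_pivot hR hT]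
    simp [changeVarInv]
  · have hF : changeVarInv R m n f a b (unitF R m n f) = unitF R m n f :=
      congrArg Units.val (map_unitF hR hT)
    simp only [RingHom.comp_apply, RingHom.id_apply, changeVarHom, lift_varY, Units.val_mul,
      map_mul, Units.val_pow_eq_pow_val, map_pow, hF]
    simp [changeVarInv, mul_assoc, ← mul_pow]
  · simp [changeVarHom, hT]

variable (R m n f) in
/-- The automorphism `X_i ↦ X_i + pivot ^ a_i`, `Y_j ↦ Y_j * f ^ b_j` of `A` over `R[Y, f⁻¹]`. It
serves to give elements of `A` a monic numerator. -/
def changeVar : PolyLaurentAway R m n f ≃+* PolyLaurentAway R m n f :=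
  RingEquiv.ofRingHom (changeVarHom R m n f a b) (changeVarInv R m n f a b)
    (changeVarHom_comp_changeVarInv a b) (changeVarInv_comp_changeVarHom a b)

theorem changeVar_ofBase (r : R) : changeVar R m n f a b (ofBase R m n f r) = ofBase R m n f r :=
  lift_ofBase _ _ _ _ (isUnit_eval₂ R m n f) r

theorem changeVar_varX (i : Fin m) :
    changeVar R m n f a b (varX R m n f i) = varX R m n f i + pivot R m n f ^ a i :=
  lift_varX _ _ _ _ (isUnit_eval₂ R m n f) i

theorem changeVar_varY (j : Fin n) :
    changeVar R m n f a b (varY R m n f j) = ↑(varY R m n f j * unitF R m n f ^ b j) :=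
  lift_varY _ _ _ _ (isUnit_eval₂ R m n f) j

theorem changeVar_varY_inv (j : Fin n) :
    changeVar R m n f a b ↑(varY R m n f j)⁻¹ = ↑(varY R m n f j * unitF R m n f ^ b j)⁻¹ :=
  congrArg Units.inv (Units.ext (changeVar_varY a b j) : Units.map
    (changeVar R m n f a b : PolyLaurentAway R m n f →* PolyLaurentAway R m n f) _ = _)

theorem changeVar_varT : changeVar R m n f a b (varT R m n f) = varT R m n f :=
  lift_varT _ _ _ _ (isUnit_eval₂ R m n f)

theorem changeVar_unitF_inv :
    changeVar R m n f a b ↑(unitF R m n f)⁻¹ = ↑(unitF R m n f)⁻¹ :=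
  congrArg Units.inv (map_unitF (g := (changeVar R m n f a b).toRingHom) (changeVar_ofBase a b)
    (changeVar_varT a b))

theorem changeVar_pivot : changeVar R m n f a b (pivot R m n f) = pivot R m n f :=
  map_pivot (g := (changeVar R m n f a b).toRingHom) (changeVar_ofBase a b) (changeVar_varT a b)

end changeVar

section numerators

theorem coeff_map_pow (hf : f.Monic) (k : ℕ) : (polyB m n f ^ k).coeff (k * f.natDegree) = 1 := by
  rw [Polynomial.coeff_pow_of_natDegree_le Polynomial.natDegree_map_le, Polynomial.coeff_map,
    hf.coeff_natDegree, map_one, one_pow]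

theorem natDegree_map_pow_le (k : ℕ) : (polyB m n f ^ k).natDegree ≤ k * f.natDegree :=
  Polynomial.natDegree_pow_le.trans (Nat.mul_le_mul_left _ Polynomial.natDegree_map_le)

theorem natDegree_C_mul_map_pow_le (c : PolyLaurent R m n) (k : ℕ) :
    (Polynomial.C c * polyB m n f ^ k).natDegree ≤ k * f.natDegree :=
  (Polynomial.natDegree_C_mul_le _ _).trans (natDegree_map_pow_le k)

theorem algebraMap_C_varY (j : Fin n) :
    algebraMap (PolyLaurent R m n)[X] (PolyLaurentAway R m n f)
      (Polynomial.C ↑(PolyLaurent.varY R m n j)) = varY R m n f j := rfl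

theorem algebraMap_C_varY_inv (j : Fin n) :
    algebraMap (PolyLaurent R m n)[X] (PolyLaurentAway R m n f)
      (Polynomial.C ↑(PolyLaurent.varY R m n j)⁻¹) = ↑(varY R m n f j)⁻¹ := by
  rw [varY, ← map_inv]
  rfl

theorem numeratorLE_varT : NumeratorLE (polyB m n f) (slope f) 1 (varT R m n f) := by
  refine ⟨polyB m n f * Polynomial.X,
    Polynomial.natDegree_mul_le.trans ?_, by rw [map_mul, pow_one]; rfl⟩
  have h₁ : (polyB m n f).natDegree ≤ f.natDegree := Polynomial.natDegree_map_le
  have h₂ : (Polynomial.X : (PolyLaurent R m n)[X]).natDegree ≤ 1 := Polynomial.natDegree_X_le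
  rw [slope]
  split_ifs <;> omega

theorem numeratorLE_unitF_inv :
    NumeratorLE (polyB m n f) (slope f) 1 (↑(unitF R m n f)⁻¹ : PolyLaurentAway R m n f) :=
  ⟨1, by simp, by simp [algebraMap_map_eq_unitF]⟩

theorem numeratorUnitary_pivot (hf : f.Monic) :
    NumeratorUnitary (polyB m n f) (slope f) 1 1 (pivot R m n f) := by
  rw [pivot, slope]
  split_ifs with h
  · obtain rfl := hf.natDegree_eq_zero.1 h
    exact ⟨Polynomial.X, 1, 1, by simpa using Polynomial.natDegree_X_le, by simp [varT], by simp,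
      by simp⟩
  · refine ⟨(polyB m n f) ^ 2 + 1, 1, 1, ?_, ?_, ?_, ?_⟩
    · rw [one_mul]
      exact (Polynomial.natDegree_add_le _ _).trans (max_le (natDegree_map_pow_le 2) (by simp))
    · rw [map_add, map_pow, algebraMap_map_eq_unitF, map_one, mul_add, pow_one, Units.mul_inv]
      ring
    · rw [one_mul, Polynomial.coeff_add, coeff_map_pow hf, Polynomial.coeff_one,
        if_neg (by omega)]
      simp
    · simp [pow_two]

variable (a : Fin m → ℕ) (b : Fin n → ℕ)

theorem numeratorUnitary_changeVar_varX (hf : f.Monic) {i : Fin m} (ha : 0 < a i) :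
    NumeratorUnitary (polyB m n f) (slope f) (a i) 1 (changeVar R m n f a b (varX R m n f i)) := by
  rw [changeVar_varX, add_comm]
  have hpow := (numeratorUnitary_pivot (m := m) (n := n) hf).pow (a i)
  rw [mul_one] at hpow
  exact hpow.add_numeratorLE natDegree_map_lt_slope
    (NumeratorLE.const 0 natDegree_map_lt_slope.le _) ha

theorem numeratorLE_changeVar_varY (h : f.natDegree ≠ 0) (j : Fin n) :
    NumeratorLE (polyB m n f) (slope f) (b j) (changeVar R m n f a b (varY R m n f j)) := by
  refine ⟨Polynomial.C (PolyLaurent.varY R m n j : PolyLaurent R m n) * polyB m n f ^ (2 * b j),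
    ?_, ?_⟩
  · rw [slope_eq h]
    exact natDegree_C_mul_map_pow_le _ _
  · rw [changeVar_varY, map_mul, map_pow, algebraMap_map_eq_unitF, algebraMap_C_varY,
      Units.val_mul, Units.val_pow_eq_pow_val]
    ring

theorem numeratorLE_changeVar_varY_inv (j : Fin n) :
    NumeratorLE (polyB m n f) (slope f) (b j)
      (changeVar R m n f a b (↑(varY R m n f j)⁻¹ : PolyLaurentAway R m n f)) := by
  refine ⟨Polynomial.C ↑(PolyLaurent.varY R m n j)⁻¹, by simp, ?_⟩
  rw [changeVar_varY_inv, algebraMap_C_varY_inv, algebraMap_map_eq_unitF, mul_inv,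
    ← Units.val_pow_eq_pow_val, ← Units.val_mul, mul_left_comm, mul_inv_cancel, mul_one]

theorem numeratorUnitary_changeVar_varY_add_inv (hf : f.Monic) (h : f.natDegree ≠ 0) {j : Fin n}
    (hb : 0 < b j) :
    NumeratorUnitary (polyB m n f) (slope f) (b j) 1
      (changeVar R m n f a b (varY R m n f j + ↑(varY R m n f j)⁻¹)) := by
  have hcancel : (unitF R m n f : PolyLaurentAway R m n f) ^ b j *
      ↑(varY R m n f j * unitF R m n f ^ b j)⁻¹ = ↑(varY R m n f j)⁻¹ := by
    rw [← Units.val_pow_eq_pow_val, ← Units.val_mul, mul_inv, mul_left_comm, mul_inv_cancel,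
      mul_one]
  refine ⟨Polynomial.C (PolyLaurent.varY R m n j : PolyLaurent R m n) * polyB m n f ^ (2 * b j) +
    Polynomial.C (↑(PolyLaurent.varY R m n j)⁻¹ : PolyLaurent R m n), PolyLaurent.varY R m n j,
    (PolyLaurent.varY R m n j)⁻¹, ?_, ?_, ?_, ?_⟩
  · rw [slope_eq h]
    exact (Polynomial.natDegree_add_le _ _).trans
      (max_le (natDegree_C_mul_map_pow_le _ _) (by simp))
  · rw [map_add, map_add, map_mul, map_pow, algebraMap_map_eq_unitF, algebraMap_C_varY,
      algebraMap_C_varY_inv, changeVar_varY, changeVar_varY_inv, mul_add, hcancel, Units.val_mul,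
      Units.val_pow_eq_pow_val]
    ring
  · rw [slope_eq h, Polynomial.coeff_add, Polynomial.coeff_C_mul, coeff_map_pow hf,
      Polynomial.coeff_C, if_neg (by positivity)]
    simp
  · rw [one_mul, add_sub_cancel_right]
    exact (dvd_pow_self _ (by omega)).mul_left _

end numerators

end PolyLaurentAway

theorem isIntegralElem_of_subsingleton {P A : Type*} [CommRing P] [CommRing A]
    [Subsingleton P] (g : P →+* A) (a : A) : g.IsIntegralElem a := by
  have : Subsingleton A :=
    subsingleton_of_zero_eq_one (by rw [← map_zero g, ← map_one g, Subsingleton.elim (0 : P) 1])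
  rw [Subsingleton.elim a 1]
  exact g.isIntegralElem_one

namespace PolyLaurentAway

variable {R : Type*} [CommRing R] {m n : ℕ} {f : R[X]}

section parameters

variable (R m n f) in
/-- The elements `X_1, …, X_m, Y_1 + Y_1⁻¹, …, Y_n + Y_n⁻¹, pivot` of `A`. -/
def parameter : Fin (m + n + 1) → PolyLaurentAway R m n f :=
  Fin.snoc (α := fun _ => PolyLaurentAway R m n f)
    (Fin.append (varX R m n f) fun j => varY R m n f j + ↑(varY R m n f j)⁻¹) (pivot R m n f)

theorem parameter_last : parameter R m n f (Fin.last _) = pivot R m n f := by simp [parameter]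

theorem parameter_varX (i : Fin m) :
    parameter R m n f (Fin.castAdd n i).castSucc = varX R m n f i := by simp [parameter]

theorem parameter_varY (j : Fin n) :
    parameter R m n f (Fin.natAdd m j).castSucc = varY R m n f j + ↑(varY R m n f j)⁻¹ := by
  rw [parameter, Fin.snoc_castSucc, Fin.append_right]

variable (R m n f) in
/-- The evaluation of polynomials over `R` at the parameters; it makes `A` an integral extension of
a polynomial ring in `m + n + 1` variables. -/
def evalParameters : MvPolynomial (Fin (m + n + 1)) R →+* PolyLaurentAway R m n f :=
  eval₂Hom (ofBase R m n f) (parameter R m n f)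

theorem evalParameters_C (r : R) : evalParameters R m n f (C r) = ofBase R m n f r :=
  eval₂Hom_C _ _ r

theorem evalParameters_X (i : Fin (m + n + 1)) :
    evalParameters R m n f (X i) = parameter R m n f i :=
  eval₂Hom_X' _ _ i

end parameters

theorem isIntegralElem_of_mul_eq_one {P A : Type*} [CommRing P] [CommRing A] {g : P →+* A} {z : P}
    {y y' : A} (h : y * y' = 1) (hz : g z = y + y') : g.IsIntegralElem y := by
  rcases subsingleton_or_nontrivial P with _ | _
  · exact isIntegralElem_of_subsingleton g y
  refine ⟨Polynomial.X ^ 2 + (Polynomial.C (-z) * Polynomial.X + Polynomial.C 1), ?_, ?_⟩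
  · exact Polynomial.monic_X_pow_add (Polynomial.degree_linear_le.trans_lt (by norm_num))
  · rw [Polynomial.eval₂_add, Polynomial.eval₂_add, Polynomial.eval₂_X_pow, Polynomial.eval₂_mul,
      Polynomial.eval₂_C, Polynomial.eval₂_C, Polynomial.eval₂_X, map_neg, map_one, hz]
    linear_combination -h

/- `Y` is a root of the monic polynomial `f ^ 2 - pivot * f + 1`. -/
theorem isIntegralElem_varT (hf : f.Monic) : (evalParameters R m n f).IsIntegralElem
    (varT R m n f) := by
  by_cases h : f.natDegree = 0
  · have hT : varT R m n f = evalParameters R m n f (X (Fin.last _)) := by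
      rw [evalParameters_X, parameter_last, pivot, if_pos h]
    rw [hT]
    exact RingHom.isIntegralElem_map _
  rcases subsingleton_or_nontrivial R with _ | _
  · exact isIntegralElem_of_subsingleton _ _
  let g := f.map (C : R →+* MvPolynomial (Fin (m + n + 1)) R)
  have hg : g.Monic := hf.map _
  have hgd : g.natDegree = f.natDegree := hf.natDegree_map _
  refine ⟨g ^ 2 + (Polynomial.C (-X (Fin.last _)) * g + Polynomial.C 1), ?_, ?_⟩
  · refine (hg.pow 2).add_of_left (Polynomial.degree_lt_degree ?_)
    have hlow : (Polynomial.C (-X (Fin.last _)) * g + Polynomial.C 1).natDegree ≤ f.natDegree :=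
      (Polynomial.natDegree_add_le _ _).trans
        (max_le ((Polynomial.natDegree_C_mul_le _ _).trans hgd.le) (by simp))
    rw [hg.natDegree_pow, hgd]
    omega
  · have hgT : g.eval₂ (evalParameters R m n f) (varT R m n f) = unitF R m n f := by
      have hC : (evalParameters R m n f).comp C = ofBase R m n f := RingHom.ext evalParameters_C
      rw [coe_unitF, Polynomial.eval₂_map, hC]
    rw [Polynomial.eval₂_add, Polynomial.eval₂_add, Polynomial.eval₂_mul, Polynomial.eval₂_pow, hgT,
      Polynomial.eval₂_C, Polynomial.eval₂_C, map_neg, evalParameters_X, parameter_last, pivot,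
      if_neg h, map_one]
    linear_combination -(unitF R m n f).mul_inv

theorem isIntegralElem_unitF_inv (hf : f.Monic) : (evalParameters R m n f).IsIntegralElem
    (↑(unitF R m n f)⁻¹ : PolyLaurentAway R m n f) := by
  by_cases h : f.natDegree = 0
  · obtain rfl := hf.natDegree_eq_zero.1 h
    have hF : unitF R m n 1 = 1 :=
      Units.ext (by rw [coe_unitF, Polynomial.eval₂_one, Units.val_one])
    rw [hF, inv_one, Units.val_one]
    exact RingHom.isIntegralElem_one _
  · refine isIntegralElem_of_mul_eq_one (z := X (Fin.last _)) (Units.inv_mul _) ?_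
    rw [evalParameters_X, parameter_last, pivot, if_neg h, add_comm]

theorem evalParameters_isIntegral (hf : f.Monic) : (evalParameters R m n f).IsIntegral := by
  let _ : Algebra (MvPolynomial (Fin (m + n + 1)) R) (PolyLaurentAway R m n f) :=
    (evalParameters R m n f).toAlgebra
  refine mem_of_generators_mem (integralClosure (MvPolynomial (Fin (m + n + 1)) R)
    (PolyLaurentAway R m n f)).toSubring (fun r => ?_) (fun i => ?_) (fun j => ?_) (fun j => ?_)
    (isIntegralElem_varT hf) (isIntegralElem_unitF_inv hf)
  · rw [← evalParameters_C]
    exact RingHom.isIntegralElem_map _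
  · rw [← parameter_varX, ← evalParameters_X]
    exact RingHom.isIntegralElem_map _
  · refine isIntegralElem_of_mul_eq_one (z := X (Fin.natAdd m j).castSucc) (Units.mul_inv _) ?_
    rw [← parameter_varY, ← evalParameters_X]
    rfl
  · refine isIntegralElem_of_mul_eq_one (z := X (Fin.natAdd m j).castSucc) (Units.inv_mul _) ?_
    rw [add_comm (↑(varY R m n f j)⁻¹ : PolyLaurentAway R m n f), ← parameter_varY,
      ← evalParameters_X]
    rfl

section changeVarPow

variable (R m n f) in
/-- The change of variables whose exponents are the powers of `T` that make generalized monic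
polynomials in the parameters unitary for large `T`. -/
def changeVarPow (T : ℕ) : PolyLaurentAway R m n f ≃+* PolyLaurentAway R m n f :=
  changeVar R m n f (fun i => T ^ (m + n - (i : ℕ))) fun j => T ^ (m + n - (m + (j : ℕ)))

/-- The elements of `A` whose images under `changeVarPow T` have numerators of degree
`O(T ^ (m + n))`. -/
def boundedGrowth : Subring (PolyLaurentAway R m n f) where
  carrier := {a | ∃ B : ℕ, ∀ T, 1 ≤ T →
    NumeratorLE (polyB m n f) (slope f) (B * T ^ (m + n)) (changeVarPow R m n f T a)}
  mul_mem' := by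
    rintro x y ⟨B₁, h₁⟩ ⟨B₂, h₂⟩
    refine ⟨B₁ + B₂, fun T hT => ?_⟩
    rw [map_mul, add_mul]
    exact (h₁ T hT).mul (h₂ T hT)
  add_mem' := by
    rintro x y ⟨B₁, h₁⟩ ⟨B₂, h₂⟩
    refine ⟨max B₁ B₂, fun T hT => ?_⟩
    rw [map_add]
    exact ((h₁ T hT).mono natDegree_map_lt_slope.le
      (Nat.mul_le_mul_right _ (le_max_left _ _))).add
        ((h₂ T hT).mono natDegree_map_lt_slope.le (Nat.mul_le_mul_right _ (le_max_right _ _)))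
  one_mem' := ⟨0, fun T _ => by
    rw [map_one, zero_mul]
    exact NumeratorUnitary.one.numeratorLE⟩
  zero_mem' := ⟨0, fun T _ => by
    rw [map_zero]
    exact NumeratorLE.zero _⟩
  neg_mem' := by
    rintro x ⟨B, h⟩
    refine ⟨B, fun T hT => ?_⟩
    rw [map_neg]
    exact (h T hT).neg

theorem mem_boundedGrowth (hf : f.Monic) (hn : f.natDegree ≠ 0 ∨ n = 0)
    (a : PolyLaurentAway R m n f) : a ∈ boundedGrowth := by
  have hσ : (polyB m n f).natDegree ≤ slope f := natDegree_map_lt_slope.le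
  have hle {T : ℕ} (hT : 1 ≤ T) (k : ℕ) : T ^ (m + n - k) ≤ 1 * T ^ (m + n) := by
    rw [one_mul]
    exact Nat.pow_le_pow_right hT (by omega)
  have hle' {T : ℕ} (hT : 1 ≤ T) : 1 ≤ 1 * T ^ (m + n) := by
    simpa using hle hT (m + n)
  refine mem_of_generators_mem boundedGrowth (fun r => ⟨0, fun T _ => ?_⟩)
    (fun i => ⟨1, fun T hT => ?_⟩) (fun j => ⟨1, fun T hT => ?_⟩) (fun j => ⟨1, fun T hT => ?_⟩)
    ⟨1, fun T hT => ?_⟩ ⟨1, fun T hT => ?_⟩ a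
  · rw [changeVarPow, changeVar_ofBase]
    exact NumeratorLE.const _ hσ _
  · exact (numeratorUnitary_changeVar_varX _ _ hf (Nat.pow_pos hT)).numeratorLE.mono hσ (hle hT _)
  · have h0 : f.natDegree ≠ 0 := hn.resolve_right j.pos.ne'
    exact (numeratorLE_changeVar_varY _ _ h0 j).mono hσ (hle hT _)
  · exact (numeratorLE_changeVar_varY_inv _ _ j).mono hσ (hle hT _)
  · rw [changeVarPow, changeVar_varT]
    exact numeratorLE_varT.mono hσ (hle' hT)
  · rw [changeVarPow, changeVar_unitF_inv]
    exact numeratorLE_unitF_inv.mono hσ (hle' hT)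

theorem numeratorUnitary_changeVarPow_parameter (hf : f.Monic) (hn : f.natDegree ≠ 0 ∨ n = 0)
    {T : ℕ} (hT : 1 ≤ T) (i : Fin (m + n + 1)) :
    NumeratorUnitary (polyB m n f) (slope f) (T ^ (m + n - (i : ℕ))) 1
      (changeVarPow R m n f T (parameter R m n f i)) := by
  refine Fin.lastCases ?_ (fun i => ?_) i
  · rw [parameter_last, changeVarPow, changeVar_pivot]
    simpa using numeratorUnitary_pivot hf
  · refine Fin.addCases (fun i => ?_) (fun j => ?_) i
    · rw [parameter_varX]
      exact numeratorUnitary_changeVar_varX (fun i : Fin m => T ^ (m + n - (i : ℕ))) _ hf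
        (Nat.pow_pos hT)
    · rw [parameter_varY]
      exact numeratorUnitary_changeVar_varY_add_inv _
        (fun j : Fin n => T ^ (m + n - (m + (j : ℕ)))) hf (hn.resolve_right j.pos.ne')
        (Nat.pow_pos hT)

theorem exists_changeVar_numeratorUnitary (hf : f.Monic) (hn : f.natDegree ≠ 0 ∨ n = 0)
    (a : PolyLaurentAway R m n f) :
    ∃ c₀ : PolyLaurentAway R m n f, ∀ s : R, ∀ h ∈ generalizedMonics R (m + n + 1),
      ∃ θ : PolyLaurentAway R m n f ≃+* PolyLaurentAway R m n f,
        (∀ r, θ (ofBase R m n f r) = ofBase R m n f r) ∧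
        (∃ W, NumeratorUnitary (polyB m n f) (slope f) W 1 (θ (evalParameters R m n f h))) ∧
        ∃ W, NumeratorUnitary (polyB m n f) (slope f) W (algebraMap R (PolyLaurent R m n) s)
          (θ (a + ofBase R m n f s * c₀)) := by
  obtain ⟨B, hB⟩ := mem_boundedGrowth hf hn a
  refine ⟨parameter R m n f 0 ^ (B + 1), fun s h hh => ?_⟩
  obtain ⟨T₀, hT₀⟩ := exists_numeratorUnitary_eval₂ (A := PolyLaurentAway R m n f)
    (algebraMap R (PolyLaurent R m n)) natDegree_map_lt_slope _ h hh
  let T := max T₀ 1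
  have hT : 1 ≤ T := le_max_right _ _
  let θ := changeVarPow R m n f T
  have hθ (r : R) : θ (ofBase R m n f r) = ofBase R m n f r := changeVar_ofBase _ _ r
  have hpar := numeratorUnitary_changeVarPow_parameter (R := R) (m := m) hf hn hT
  refine ⟨θ, hθ, ?_, (B + 1) * T ^ (m + n), ?_⟩
  · convert hT₀ T (le_max_left _ _) (fun i => θ (parameter R m n f i)) hpar using 4
    have hcomp : (θ : _ →+* _).comp (ofBase R m n f) = ofBase R m n f := RingHom.ext hθ
    rw [evalParameters, coe_eval₂Hom, ← RingEquiv.coe_toRingHom, hom_eval₂, hcomp]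
    rfl
  · have hpow := (NumeratorUnitary.const (A := PolyLaurentAway R m n f)
      (algebraMap R (PolyLaurent R m n) s)).mul ((hpar 0).pow (B + 1))
    rw [Fin.val_zero, Nat.sub_zero, zero_add, mul_one] at hpow
    rw [map_add, map_mul, map_pow, add_comm (θ a), hθ]
    have hlt : B * T ^ (m + n) < (B + 1) * T ^ (m + n) :=
      Nat.mul_lt_mul_of_pos_right B.lt_succ_self (Nat.pow_pos hT)
    exact hpow.add_numeratorLE natDegree_map_lt_slope (hB T hT) hlt

end changeVarPow

end PolyLaurentAway

/-! ### Unimodular columns over `A` -/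

theorem GLEquiv.map_single {S T ι : Type*} [CommRing S] [CommRing T] [Finite ι] [DecidableEq ι]
    {v : ι → S} {i₀ : ι} (h : GLEquiv v (Pi.single i₀ 1)) (φ : S →+* T) :
    GLEquiv (fun i => φ (v i)) (Pi.single i₀ 1) := by
  convert h.map φ using 2 with i
  rw [Pi.apply_single (fun _ => φ) (fun _ => map_zero φ), map_one]

section MonicNumerator

variable {D A ι : Type*} [CommRing D] [CommRing A] [Algebra D[X] A] {f : D[X]}

theorem exists_monic_isCoprime_mul_add_mul [Nontrivial D] (hf : f.Monic) {p : D[X]} {N : ℕ}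
    (hN : p.natDegree ≤ N) {u u' : Dˣ} (hu : p.coeff N = u) (hu' : f ∣ p - Polynomial.C (u' : D))
    (q : D[X]) :
    ∃ t : D[X], (Polynomial.C (↑u⁻¹ : D) * (f * q + p * t)).Monic ∧
      IsCoprime f (f * q + p * t) := by
  let J := q.natDegree + 1
  have hfX : (f * Polynomial.X ^ J).Monic := hf.mul (Polynomial.monic_X_pow J)
  have hfXd : (f * Polynomial.X ^ J).natDegree = f.natDegree + (q.natDegree + 1) := by
    rw [hf.natDegree_mul (Polynomial.monic_X_pow J), Polynomial.natDegree_X_pow]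
  have hlow : (f * q + p).natDegree < N + (f * Polynomial.X ^ J).natDegree := by
    refine (Polynomial.natDegree_add_le _ _).trans_lt (max_lt ?_ ?_)
    · refine Polynomial.natDegree_mul_le.trans_lt ?_
      omega
    · omega
  have hsplit : f * q + p * (1 + f * Polynomial.X ^ J) =
      (f * q + p) + p * (f * Polynomial.X ^ J) := by ring
  refine ⟨1 + f * Polynomial.X ^ J, ?_, ?_⟩
  · refine Polynomial.monic_of_natDegree_le_of_coeff_eq_one
      (N + (f * Polynomial.X ^ J).natDegree) ?_ ?_
    · refine (Polynomial.natDegree_C_mul_le _ _).trans ?_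
      rw [hsplit]
      exact (Polynomial.natDegree_add_le _ _).trans
        (max_le hlow.le (Polynomial.natDegree_mul_le.trans (add_le_add hN le_rfl)))
    · rw [Polynomial.coeff_C_mul, hsplit, Polynomial.coeff_add,
        Polynomial.coeff_eq_zero_of_natDegree_lt hlow, zero_add,
        Polynomial.coeff_mul_add_eq_of_natDegree_le hN le_rfl, hu, hfX.coeff_natDegree, mul_one,
        Units.inv_mul]
  · obtain ⟨g, hg⟩ := hu'
    have hC : Polynomial.C (↑u'⁻¹ : D) * Polynomial.C (u' : D) = 1 := by
      rw [← Polynomial.C_mul, Units.inv_mul, Polynomial.C_1]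
    refine ⟨-Polynomial.C (↑u'⁻¹ : D) * (q + p * Polynomial.X ^ J + g),
      Polynomial.C (↑u'⁻¹ : D), ?_⟩
    linear_combination Polynomial.C (↑u'⁻¹ : D) * hg + hC

variable [IsLocalization.Away f A]

variable (f) in
theorem exists_algebraMap_eq_pow_mul [Finite ι] (v : ι → A) :
    ∃ (K : ℕ) (q : ι → D[X]), ∀ i, algebraMap D[X] A (q i) = algebraMap D[X] A f ^ K * v i := by
  obtain ⟨⟨_, K, rfl⟩, hb⟩ := IsLocalization.exist_integer_multiples_of_finite
    (Submonoid.powers f) v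
  choose q hq using hb
  refine ⟨K, q, fun i => ?_⟩
  rw [hq i, Algebra.smul_def]
  simp

variable [Fintype ι]

theorem isUnimodular_of_isUnimodular_algebraMap {V : ι → D[X]} {i₀ : ι} (h : IsCoprime f (V i₀))
    (hV : IsUnimodular fun i => algebraMap D[X] A (V i)) : IsUnimodular V := by
  let I := Ideal.span (Set.range V)
  obtain ⟨w, hw⟩ := hV
  have hmap : algebraMap D[X] A 1 ∈ I.map (algebraMap D[X] A) := by
    rw [map_one, ← hw]
    exact Ideal.sum_mem _ fun i _ => Ideal.mul_mem_left _ _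
      (Ideal.mem_map_of_mem _ (Ideal.subset_span ⟨i, rfl⟩))
  rw [IsLocalization.algebraMap_mem_map_algebraMap_iff (Submonoid.powers f)] at hmap
  obtain ⟨_, ⟨k, rfl⟩, hk⟩ := hmap
  rw [mul_one] at hk
  obtain ⟨x, y, hxy⟩ := h.pow_left (m := k)
  have hone : (1 : D[X]) ∈ I := by
    rw [← hxy]
    exact I.add_mem (I.mul_mem_left _ hk) (I.mul_mem_left _ (Ideal.subset_span ⟨i₀, rfl⟩))
  exact (Submodule.mem_span_range_iff_exists_fun D[X]).1 hone

/- Adding a multiple of `∑ c i * v i` to the `i₀`-th entry produces a column over `D[X]` with a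
monic entry that is comaximal with `f`. -/
theorem exists_glEquiv_algebraMap_monic [Nontrivial D] (hf : f.Monic) {i₀ : ι} {v c : ι → A}
    (hc : c i₀ = 0) {σ W : ℕ} (hg : NumeratorUnitary f σ W 1 (∑ i, c i * v i)) :
    ∃ V : ι → D[X], GLEquiv v (fun i => algebraMap D[X] A (V i)) ∧ (V i₀).Monic ∧
      IsCoprime f (V i₀) := by
  classical
  obtain ⟨p, u, u', hp, hpg, hpu, hpf⟩ := hg
  rw [one_mul] at hpu hpf
  obtain ⟨K, q, hq⟩ := exists_algebraMap_eq_pow_mul f v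
  obtain ⟨F, hF⟩ : IsUnit (algebraMap D[X] A f) := IsLocalization.Away.algebraMap_isUnit f
  obtain ⟨t, hmonic, hcop⟩ := exists_monic_isCoprime_mul_add_mul hf hp hpu hpf (q i₀)
  let e : Aˣ := Units.map ((algebraMap D[X] A).comp Polynomial.C : D →* A) u⁻¹
  let e' : A := algebraMap D[X] A (Polynomial.C (↑u⁻¹ : D))
  let s : ι → Aˣ := fun i => if i = i₀ then e * F ^ (K + 1) else F ^ K
  let a : A := e' * algebraMap D[X] A t * algebraMap D[X] A f ^ W * ↑(F ^ K)⁻¹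
  refine ⟨Function.update q i₀ (Polynomial.C (↑u⁻¹ : D) * (f * q i₀ + p * t)),
    (GLEquiv.of_units_mul s v).trans (GLEquiv.of_add_sum_mul (c := fun i => a * c i) i₀
      (by simp [hc]) ?_ fun k hk => ?_), by simpa using hmonic, ?_⟩
  · have hsum : ∑ k, a * c k * (s k * v k) = e' * algebraMap D[X] A (p * t) := by
      rw [map_mul, hpg, Finset.mul_sum, Finset.sum_mul, Finset.mul_sum]
      refine Finset.sum_congr rfl fun k _ => ?_
      by_cases hk : k = i₀
      · simp [hk, hc]
      · simp only [s, if_neg hk, a]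
        linear_combination e' * algebraMap D[X] A t * algebraMap D[X] A f ^ W * c k * v k *
          (F ^ K).inv_mul
    have hs : (s i₀ : A) = e' * algebraMap D[X] A f ^ (K + 1) := by
      simp only [s, if_true, Units.val_mul, Units.val_pow_eq_pow_val, hF]
      rfl
    rw [hsum, hs, Function.update_self, map_mul, map_add, map_mul, hq i₀]
    ring
  · simp [s, hk, hq, hF]
  · rw [Function.update_self]
    exact (isCoprime_mul_unit_left_right (Polynomial.isUnit_C.2 u⁻¹.isUnit) _ _).2 hcop

theorem glEquiv_single_of_numeratorUnitary [DecidableEq ι] [Nontrivial ι] (hf : f.Monic)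
    {i₀ : ι} {v c : ι → A} (hv : IsUnimodular v) (hc : c i₀ = 0) {σ W : ℕ}
    (hg : NumeratorUnitary f σ W 1 (∑ i, c i * v i)) : GLEquiv v (Pi.single i₀ 1) := by
  rcases subsingleton_or_nontrivial D with _ | _
  · have : Subsingleton A := (algebraMap D[X] A).codomain_trivial
    rw [Subsingleton.elim v (Pi.single i₀ 1)]
    exact GLEquiv.refl _
  obtain ⟨V, hvV, hmonic, hcop⟩ := exists_glEquiv_algebraMap_monic hf hc hg
  have hV : IsUnimodular V := isUnimodular_of_isUnimodular_algebraMap hcop (hvV.isUnimodular hv)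
  exact hvV.trans ((glEquiv_single_of_monic hV hmonic).map_single (algebraMap D[X] A))

end MonicNumerator

theorem exists_glEquiv_le_height {A : Type*} [CommRing A] [IsNoetherianRing A] {k : ℕ}
    {v : Fin (k + 1) → A} (hv : IsUnimodular v) :
    ∃ v', GLEquiv v v' ∧ ∀ p : Ideal A, p.IsPrime →
      Ideal.span (Set.range fun i : Fin k => v' i.castSucc) ≤ p → (k : ℕ∞) ≤ p.height := by
  obtain ⟨c, hc⟩ := exists_heightGEAway_sup_span_range (x := v (Fin.last k)) (J := ⊥) (i := 0)
    (fun _ _ _ _ => zero_le) fun i => v i.castSucc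
  rw [bot_sup_eq, zero_add] at hc
  let v' : Fin (k + 1) → A := Fin.snoc (α := fun _ => A)
    (fun i => v i.castSucc + v (Fin.last k) * c i) (v (Fin.last k))
  have hvv' : GLEquiv v v' := by
    refine GLEquiv.of_add_mul (p := Fin.snoc (α := fun _ => A) c 0) (Fin.last k) (by simp [v'])
      fun i hi => ?_
    obtain ⟨i, rfl⟩ := Fin.exists_castSucc_eq.2 hi
    simp [v', mul_comm]
  refine ⟨v', hvv', fun p hp hle => hc p hp (by simpa [v'] using hle) fun hlast => ?_⟩
  obtain ⟨w, hw⟩ := hvv'.isUnimodular hv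
  refine hp.ne_top ((Ideal.eq_top_iff_one p).2 (hw ▸ Ideal.sum_mem _ fun i _ =>
    Ideal.mul_mem_left _ _ ?_))
  refine Fin.lastCases ?_ (fun i => hle (Ideal.subset_span ⟨i, rfl⟩)) i
  simpa [v'] using hlast

instance (R : Type*) [CommRing R] [IsNoetherianRing R] (m n : ℕ) :
    IsNoetherianRing (PolyLaurent R m n) :=
  IsLocalization.isNoetherianRing (Ymonoid R m n) _ inferInstance

instance (R : Type*) [CommRing R] [IsNoetherianRing R] (m n : ℕ) (f : R[X]) :
    IsNoetherianRing (PolyLaurentAway R m n f) :=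
  IsLocalization.isNoetherianRing (Submonoid.powers (PolyLaurentAway.polyB m n f)) _ inferInstance

theorem PolyLaurentAway.glEquiv_single_last {R : Type*} [CommRing R] [IsNoetherianRing R]
    {m n : ℕ} {f : R[X]} (hf : f.Monic) (hn : f.natDegree ≠ 0 ∨ n = 0) {d : ℕ}
    (hR : ringKrullDim R ≤ d) {k : ℕ} (hk : d + 1 ≤ k) {v : Fin (k + 1) → PolyLaurentAway R m n f}
    (hv : IsUnimodular v) : GLEquiv v (Pi.single (Fin.last k) 1) := by
  obtain ⟨v', hvv', hheight⟩ := exists_glEquiv_le_height hv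
  refine hvv'.trans ?_
  obtain ⟨h, hh, hhJ⟩ := exists_generalizedMonics_map_mem hR (evalParameters R m n f)
    (evalParameters_isIntegral hf) fun p hp hJ =>
      lt_of_lt_of_le (by exact_mod_cast hk) (hheight p hp hJ)
  obtain ⟨c, hc⟩ := (Submodule.mem_span_range_iff_exists_fun _).1 hhJ
  obtain ⟨c₀, hc₀⟩ := exists_changeVar_numeratorUnitary (m := m) hf hn 0
  obtain ⟨θ, -, ⟨W, hW⟩, -⟩ := hc₀ 0 h hh
  let c' : Fin (k + 1) → PolyLaurentAway R m n f :=
    Fin.snoc (α := fun _ => PolyLaurentAway R m n f) c 0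
  have hsum : ∑ i, θ (c' i) * θ (v' i) = θ (evalParameters R m n f h) := by
    simp only [← map_mul, ← map_sum, ← hc, Fin.sum_univ_castSucc, c', Fin.snoc_castSucc,
      Fin.snoc_last, zero_mul, add_zero, smul_eq_mul]
  have : Nontrivial (Fin (k + 1)) := Fin.nontrivial_iff_two_le.2 (by omega)
  have hθ : GLEquiv (fun i => θ (v' i)) (Pi.single (Fin.last k) 1) :=
    glEquiv_single_of_numeratorUnitary (f := polyB m n f) (hf.map _)
      ((hvv'.isUnimodular hv).map θ.toRingHom) (c := fun i => θ (c' i)) (by simp [c'])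
      (hsum ▸ hW)
  simpa using hθ.map_single θ.symm.toRingHom

/-! ### Lifting unimodular fixed vectors from `A ⧸ s` and `A[s⁻¹]` to `A` -/

section Homogenize

variable {D : Type*} [CommRing D] {p : D[X]} {N : ℕ}

theorem dvd_eval₂_homogenize_sub {A : Type*} [CommRing A] (φ : D →+* A) (hp : p.natDegree ≤ N)
    (l t a : A) :
    l ∣ eval₂ φ ![t + l * a, 1 - l] (p.homogenize N) - p.eval₂ φ t := by
  let π := Ideal.Quotient.mk (Ideal.span {l})
  have hl : π l = 0 := Ideal.Quotient.eq_zero_iff_mem.2 (Ideal.mem_span_singleton_self l)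
  rw [← Ideal.mem_span_singleton, ← Ideal.Quotient.eq_zero_iff_mem, map_sub, sub_eq_zero,
    eval₂_comp_left, Polynomial.hom_eval₂,
    Polynomial.eval₂_homogenize_of_eq_one hp _ _ (by simp [π, hl])]
  simp [π, hl]

variable {L : Type*} [Field L] (φ : D →+* L) (x : Fin 2 → L)

theorem eval₂_homogenize_of_ne_zero (hp : p.natDegree ≤ N) (hx : x 1 ≠ 0) :
    eval₂ φ x (p.homogenize N) = p.eval₂ φ (x 0 / x 1) * x 1 ^ N := by
  rw [Polynomial.eval₂_eq_eval_map, ← Polynomial.eval_homogenize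
    (Polynomial.natDegree_map_le.trans hp) x hx, Polynomial.homogenize_map, eval_map]

theorem eval₂_homogenize_of_eq_zero (hx : x 1 = 0) :
    eval₂ φ x (p.homogenize N) = φ (p.coeff N) * x 0 ^ N := by
  rw [Polynomial.homogenize, eval₂_sum, Finset.sum_eq_single (N, 0)]
  · simp
  · rintro ⟨i, j⟩ hij hne
    have hj : j ≠ 0 := fun hj => hne (by simp_all)
    simp [eval₂_monomial, hx, hj]
  · simp

/- No point `x` of the projective line over `L` is a common zero: the point at infinity is excluded
by the coefficient of degree `N`, the other points by `w`. -/
theorem exists_eval₂_homogenize_ne_zero {ι : Type*} {V : ι → D[X]} {i₀ : ι}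
    (hV : ∀ i, (V i).natDegree ≤ N) (hV₀ : φ ((V i₀).coeff N) ≠ 0) {w : D}
    (hw : Polynomial.C w ∈ Ideal.span (Set.range V)) (h₀ : x 1 = 0 → x 0 ≠ 0)
    (h₁ : x 1 ≠ 0 → φ w ≠ 0) : ∃ i, eval₂ φ x ((V i).homogenize N) ≠ 0 := by
  by_cases hx : x 1 = 0
  · refine ⟨i₀, ?_⟩
    rw [eval₂_homogenize_of_eq_zero φ x hx]
    exact mul_ne_zero hV₀ (pow_ne_zero _ (h₀ hx))
  by_contra! hzero
  have hle : Ideal.span (Set.range V) ≤ RingHom.ker (Polynomial.eval₂RingHom φ (x 0 / x 1)) := by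
    rw [Ideal.span_le]
    rintro _ ⟨i, rfl⟩
    have hi := hzero i
    rw [eval₂_homogenize_of_ne_zero φ x (hV i) hx] at hi
    exact (mul_eq_zero.1 hi).resolve_right (pow_ne_zero _ hx)
  exact h₁ hx (by simpa using hle hw)

end Homogenize

section Division

variable {D : Type*} [CommRing D] {p₀ : D[X]} {N : ℕ} {c : D} {u : Dˣ}

theorem exists_C_pow_mul_eq_mul_add (hN : p₀.natDegree ≤ N) (hc : p₀.coeff N = c * u) (n : ℕ) :
    ∀ p : D[X], p.natDegree ≤ N + n → ∃ (k : ℕ) (r p' : D[X]),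
      Polynomial.C c ^ k * p = r * p₀ + p' ∧ p'.natDegree ≤ N := by
  induction n with
  | zero => exact fun p hp => ⟨0, 0, p, by simp, hp⟩
  | succ n ih =>
    intro p hp
    let a := p.coeff (N + n + 1) * (↑u⁻¹ : D)
    have hlow : (Polynomial.C c * p - Polynomial.C a * (p₀ * Polynomial.X ^ (n + 1))).natDegree ≤
        N + n := by
      refine Polynomial.natDegree_le_pred (n := N + n + 1) ?_ ?_
      · refine (Polynomial.natDegree_sub_le _ _).trans (max_le
          ((Polynomial.natDegree_C_mul_le _ _).trans hp) ((Polynomial.natDegree_C_mul_le _ _).trans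
            (Polynomial.natDegree_mul_le.trans ?_)))
        exact (add_le_add hN (Polynomial.natDegree_X_pow_le _)).trans (add_assoc N n 1).ge
      · rw [Polynomial.coeff_sub, Polynomial.coeff_C_mul, Polynomial.coeff_C_mul, add_assoc,
          Polynomial.coeff_mul_X_pow, hc]
        linear_combination -p.coeff (N + (n + 1)) * c * u.inv_mul
    obtain ⟨k, r, p', hr, hp'⟩ := ih _ hlow
    exact ⟨k + 1, r + Polynomial.C c ^ k * (Polynomial.C a * Polynomial.X ^ (n + 1)), p',
      by linear_combination hr, hp'⟩

theorem exists_C_pow_mul_family_eq {ι : Type*} [Finite ι] {P : ι → D[X]} {i₀ : ι}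
    (hN : (P i₀).natDegree ≤ N) (hc : (P i₀).coeff N = c * u) :
    ∃ (k : ℕ) (r V : ι → D[X]), V i₀ = P i₀ ∧ r i₀ = Polynomial.C c ^ k - 1 ∧
      ∀ i, (V i).natDegree ≤ N ∧ Polynomial.C c ^ k * P i = r i * P i₀ + V i := by
  classical
  have := Fintype.ofFinite ι
  choose k r V hV hVN using fun i =>
    exists_C_pow_mul_eq_mul_add hN hc (P i).natDegree (P i) (by omega)
  let K := ∑ i, k i
  refine ⟨K, Function.update (fun i => Polynomial.C c ^ (K - k i) * r i) i₀
    (Polynomial.C c ^ K - 1), Function.update (fun i => Polynomial.C (c ^ (K - k i)) * V i) i₀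
    (P i₀), Function.update_self .., Function.update_self .., fun i => ?_⟩
  by_cases hi : i = i₀
  · subst hi
    rw [Function.update_self, Function.update_self]
    exact ⟨hN, by ring⟩
  · rw [Function.update_of_ne hi, Function.update_of_ne hi, Polynomial.C_pow]
    have hk : k i ≤ K := Finset.single_le_sum (fun _ _ => Nat.zero_le _) (Finset.mem_univ i)
    refine ⟨?_, ?_⟩
    · rw [← Polynomial.C_pow]
      exact (Polynomial.natDegree_C_mul_le _ _).trans (hVN i)
    · rw [← Nat.sub_add_cancel hk, pow_add, Nat.add_sub_cancel]
      linear_combination Polynomial.C c ^ (K - k i) * hV i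

end Division

section NumeratorUnitary

variable {D A : Type*} [CommRing D] [CommRing A] [Algebra D[X] A] {f : D[X]}
  [IsLocalization.Away f A] {σ W : ℕ}

theorem exists_map_one_add_mul_eq_zero {Q : Type*} [CommRing Q] {φ : D →+* Q} (h : φ.IsIntegral)
    {s : D} (hs : IsUnit (φ s)) : ∃ c : D, φ (1 + s * c) = 0 := by
  have hker : (RingHom.kerLift φ).IsIntegral :=
    RingHom.IsIntegral.tower_top (f := Ideal.Quotient.mk (RingHom.ker φ)) _ h
  have := hker.isLocalHom (RingHom.kerLift_injective φ)
  obtain ⟨c, hc⟩ := (isUnit_of_map_unit (RingHom.kerLift φ)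
    (Ideal.Quotient.mk (RingHom.ker φ) s) hs).exists_right_inv
  obtain ⟨c, rfl⟩ := Ideal.Quotient.mk_surjective c
  rw [← map_mul, ← map_one (Ideal.Quotient.mk _), Ideal.Quotient.eq, RingHom.mem_ker] at hc
  exact ⟨-c, by rw [mul_neg, ← sub_eq_add_neg, ← neg_sub, map_neg, hc, neg_zero]⟩

variable {I : Ideal A} {g : A}

theorem isIntegral_quotient_mk_comp (hg : NumeratorUnitary f σ W 1 g) (hgI : g ∈ I) :
    ((Ideal.Quotient.mk I).comp ((algebraMap D[X] A).comp Polynomial.C)).IsIntegral := by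
  obtain ⟨p, u, u', hp, hpg, hpu, x, hx⟩ := hg
  let π : D[X] →+* A ⧸ I := (Ideal.Quotient.mk I).comp (algebraMap D[X] A)
  let _ : Algebra D (A ⧸ I) := (π.comp Polynomial.C).toAlgebra
  have hp₀ : π p = 0 := Ideal.Quotient.eq_zero_iff_mem.2 (hpg ▸ I.mul_mem_left _ hgI)
  have hX : IsIntegral D (π Polynomial.X) := by
    refine ⟨Polynomial.C (↑u⁻¹ : D) * p, Polynomial.monic_of_natDegree_le_of_coeff_eq_one _
      ((Polynomial.natDegree_C_mul_le _ _).trans hp) ?_, ?_⟩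
    · rw [Polynomial.coeff_C_mul, hpu, one_mul, Units.inv_mul]
    · have heval := Polynomial.hom_eval₂ (Polynomial.C (↑u⁻¹ : D) * p) Polynomial.C π Polynomial.X
      rw [Polynomial.eval₂_C_X, map_mul, hp₀, mul_zero] at heval
      exact heval.symm
  have hpoly (q : D[X]) : IsIntegral D (π q) := by
    induction q using Polynomial.induction_on' with
    | add q q' hq hq' => exact map_add π q q' ▸ hq.add hq'
    | monomial k a =>
      rw [← Polynomial.C_mul_X_pow_eq_monomial, map_mul, map_pow]
      exact (isIntegral_algebraMap (R := D) (A := A ⧸ I) (x := a)).mul (hX.pow k)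
  have hF : π f * π (-(Polynomial.C (↑u'⁻¹ : D) * x)) = 1 := by
    have hu : π (Polynomial.C (↑u'⁻¹ : D)) * π (Polynomial.C (u' : D)) = 1 := by
      rw [← map_mul, ← Polynomial.C_mul, Units.inv_mul, Polynomial.C_1, map_one]
    have hx' := congrArg π hx
    rw [map_sub, hp₀, one_mul, map_mul] at hx'
    rw [map_neg, map_mul]
    linear_combination π (Polynomial.C (↑u'⁻¹ : D)) * hx' + hu
  intro z
  obtain ⟨z, rfl⟩ := Ideal.Quotient.mk_surjective z
  obtain ⟨k, q, hq⟩ := exists_algebraMap_eq_pow_mul f fun _ : Unit => z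
  have hz : Ideal.Quotient.mk I z = π (-(Polynomial.C (↑u'⁻¹ : D) * x)) ^ k * π (q ()) := by
    have hπq : π (q ()) = π f ^ k * Ideal.Quotient.mk I z := by
      rw [← map_pow, RingHom.comp_apply, hq, map_mul, map_pow]
      simp [π]
    rw [hπq, ← mul_assoc, ← mul_pow, mul_comm _ (π f), hF, one_pow, one_mul]
  rw [hz]
  exact ((hpoly _).pow k).mul (hpoly _)

theorem exists_C_one_add_mul_mem (hg : NumeratorUnitary f σ W 1 g) (hgI : g ∈ I) {s : D} {y : A}
    (hy : 1 + algebraMap D[X] A (Polynomial.C s) * y ∈ I) :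
    ∃ c : D, algebraMap D[X] A (Polynomial.C (1 + s * c)) ∈ I := by
  obtain ⟨c, hc⟩ := exists_map_one_add_mul_eq_zero (isIntegral_quotient_mk_comp hg hgI) (s := s) <|
    IsUnit.of_mul_eq_one (Ideal.Quotient.mk I (-y)) <| by
      rw [RingHom.comp_apply, ← map_mul, ← sub_eq_zero, ← map_one (Ideal.Quotient.mk I), ← map_sub,
        Ideal.Quotient.eq_zero_iff_mem, RingHom.comp_apply]
      convert I.neg_mem hy using 1
      ring
  exact ⟨c, Ideal.Quotient.eq_zero_iff_mem.1 hc⟩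

end NumeratorUnitary

section LiftUnimodular

variable {D A ι : Type*} [CommRing D] [CommRing A] [Algebra D[X] A] {f : D[X]}
  [IsLocalization.Away f A] {P : ι → D[X]} {K : ι → ℕ} {v : ι → A}

theorem mul_mem_of_mem_span_range {S : Type*} [CommRing S] {v : ι → S} {J : Ideal S} {c z : S}
    (h : ∀ i, c * v i ∈ J) (hz : z ∈ Ideal.span (Set.range v)) : c * z ∈ J :=
  (Submodule.span_le (p := Submodule.comap (LinearMap.mulLeft S c) J)).2
    (Set.range_subset_iff.2 h) hz

theorem exists_pow_mul_mem_span
    (hP : ∀ i, algebraMap D[X] A (P i) = algebraMap D[X] A f ^ K i * v i) {z : D[X]}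
    (hz : algebraMap D[X] A z ∈ Ideal.span (Set.range v)) :
    ∃ L, f ^ L * z ∈ Ideal.span (Set.range P) := by
  have hle : Ideal.span (Set.range v) ≤ (Ideal.span (Set.range P)).map (algebraMap D[X] A) := by
    rw [Ideal.span_le]
    rintro _ ⟨i, rfl⟩
    refine (Ideal.unit_mul_mem_iff_mem _
      ((IsLocalization.Away.algebraMap_isUnit (S := A) f).pow (K i))).1 ?_
    exact hP i ▸ Ideal.mem_map_of_mem _ (Ideal.subset_span ⟨i, rfl⟩)
  obtain ⟨_, ⟨L, rfl⟩, hL⟩ := (IsLocalization.algebraMap_mem_map_algebraMap_iff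
    (Submonoid.powers f) A _ _).1 (hle hz)
  exact ⟨L, hL⟩

theorem exists_C_pow_mul_mem_of_pow_mul_mem {J : Ideal D[X]} {p z : D[X]} {c : D} {u : Dˣ} {L : ℕ}
    (hp : p ∈ J) (hf : f ∣ p - Polynomial.C (c * u)) (hL : f ^ L * z ∈ J) :
    Polynomial.C c ^ L * z ∈ J := by
  obtain ⟨x, hx⟩ := hf
  let π := Ideal.Quotient.mk J
  have hp₀ : π p = 0 := Ideal.Quotient.eq_zero_iff_mem.2 hp
  have hu : π (Polynomial.C (u : D)) * π (Polynomial.C (↑u⁻¹ : D)) = 1 := by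
    rw [← map_mul, ← Polynomial.C_mul, Units.mul_inv, Polynomial.C_1, map_one]
  have hx' := congrArg π hx
  rw [map_sub, hp₀, Polynomial.C_mul, map_mul, map_mul] at hx'
  have hc : π (Polynomial.C c) = -(π x * π (Polynomial.C (↑u⁻¹ : D))) * π f := by
    linear_combination -π (Polynomial.C (↑u⁻¹ : D)) * hx' - π (Polynomial.C c) * hu
  rw [← Ideal.Quotient.eq_zero_iff_mem] at hL ⊢
  change π _ = 0 at hL
  change π _ = 0
  rw [map_mul, map_pow] at hL
  rw [map_mul, map_pow, hc, mul_pow, mul_assoc, hL, mul_zero]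

theorem exists_forall_eq_mul_eval₂_homogenize_add {N k : ℕ} {c x : D} {i₀ : ι} {r V : ι → D[X]}
    (hP : ∀ i, algebraMap D[X] A (P i) = algebraMap D[X] A f ^ K i * v i)
    (hV₀ : V i₀ = P i₀) (hVN : ∀ i, (V i).natDegree ≤ N)
    (hV : ∀ i, Polynomial.C c ^ k * P i = r i * P i₀ + V i) {l : A}
    (hl : l = algebraMap D[X] A (Polynomial.C (x * c ^ (k + 1)))) (y : Fin 2 → A)
    (hy : y = ![algebraMap D[X] A Polynomial.X + l * (1 - algebraMap D[X] A Polynomial.X), 1 - l]) :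
    ∃ G : ι → A, ∀ i, algebraMap D[X] A (Polynomial.C c ^ k * f ^ K i) *
      (v i + algebraMap D[X] A (Polynomial.C c) * G i) =
      algebraMap D[X] A (r i) *
        eval₂ ((algebraMap D[X] A).comp Polynomial.C) y ((V i₀).homogenize N) +
      eval₂ ((algebraMap D[X] A).comp Polynomial.C) y ((V i).homogenize N) := by
  choose h hh using fun i => dvd_eval₂_homogenize_sub ((algebraMap D[X] A).comp Polynomial.C)
    (hVN i) l (algebraMap D[X] A Polynomial.X) (1 - algebraMap D[X] A Polynomial.X)
  simp only [← hy, ← Polynomial.hom_eval₂, Polynomial.eval₂_C_X] at hh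
  obtain ⟨F, hF⟩ : IsUnit (algebraMap D[X] A f) := IsLocalization.Away.algebraMap_isUnit f
  refine ⟨fun i => ↑(F ^ K i)⁻¹ * algebraMap D[X] A (Polynomial.C x) *
    (h i + algebraMap D[X] A (r i) * h i₀), fun i => ?_⟩
  have hVi := congrArg (algebraMap D[X] A) (hV i)
  have hFi : algebraMap D[X] A f ^ K i * ↑(F ^ K i)⁻¹ = 1 := by
    rw [← hF, ← Units.val_pow_eq_pow_val, Units.mul_inv]
  have hl' : l =
      algebraMap D[X] A (Polynomial.C x) * algebraMap D[X] A (Polynomial.C c) ^ (k + 1) := by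
    rw [hl, Polynomial.C_mul, Polynomial.C_pow, map_mul, map_pow]
  simp only [map_mul, map_pow, map_add, hP i, ← hV₀] at hVi ⊢
  linear_combination hVi - hh i - algebraMap D[X] A (r i) * hh i₀ -
    (h i + algebraMap D[X] A (r i) * h i₀) * hl' +
    algebraMap D[X] A (Polynomial.C c) ^ (k + 1) * algebraMap D[X] A (Polynomial.C x) *
    (h i + algebraMap D[X] A (r i) * h i₀) * hFi

theorem exists_bounded_numerators [Finite ι] {σ W : ℕ} {i₀ : ι} {c z : D}
    (hv : NumeratorUnitary f σ W c (v i₀))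
    (hz : algebraMap D[X] A (Polynomial.C z) ∈ Ideal.span (Set.range v)) :
    ∃ (P r V : ι → D[X]) (K : ι → ℕ) (k e : ℕ) (u : Dˣ),
      (∀ i, algebraMap D[X] A (P i) = algebraMap D[X] A f ^ K i * v i) ∧ V i₀ = P i₀ ∧
      r i₀ = Polynomial.C c ^ k - 1 ∧ (V i₀).coeff (W * σ) = c * u ∧
      (∀ i, (V i).natDegree ≤ W * σ) ∧
      (∀ i, Polynomial.C c ^ k * P i = r i * P i₀ + V i) ∧
      Polynomial.C (c ^ e * z) ∈ Ideal.span (Set.range V) := by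
  classical
  obtain ⟨p, u, u', hp, hpv, hpu, hpf⟩ := hv
  obtain ⟨K, q, hq⟩ := exists_algebraMap_eq_pow_mul f v
  let P := Function.update q i₀ p
  have hP₀ : P i₀ = p := Function.update_self ..
  have hP : ∀ i, algebraMap D[X] A (P i) =
      algebraMap D[X] A f ^ Function.update (fun _ => K) i₀ W i * v i := by
    intro i
    by_cases hi : i = i₀
    · subst hi
      simp [P, hpv]
    · simp [P, hi, hq]
  obtain ⟨k, r, V, hV₀, hr₀, hV⟩ := exists_C_pow_mul_family_eq (P := P) (hP₀ ▸ hp) (hP₀ ▸ hpu)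
  have hpV : p ∈ Ideal.span (Set.range V) := Ideal.subset_span ⟨i₀, hV₀.trans hP₀⟩
  obtain ⟨L, hL⟩ := exists_pow_mul_mem_span hP hz
  have hPV (i : ι) : Polynomial.C c ^ k * P i ∈ Ideal.span (Set.range V) :=
    (hV i).2 ▸ add_mem (Ideal.mul_mem_left _ _ (hP₀ ▸ hpV)) (Ideal.subset_span ⟨i, rfl⟩)
  have hzV : f ^ L * (Polynomial.C c ^ k * Polynomial.C z) ∈ Ideal.span (Set.range V) := by
    rw [mul_left_comm]
    exact mul_mem_of_mem_span_range hPV hL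
  refine ⟨P, r, V, _, k, L + k, u, hP, hV₀, hr₀, by rwa [hV₀, hP₀], fun i => (hV i).1,
    fun i => (hV i).2, ?_⟩
  rw [Polynomial.C_mul, Polynomial.C_pow, pow_add, mul_assoc]
  exact exists_C_pow_mul_mem_of_pow_mul_mem hpV hpf hzV

theorem mem_of_forall_mul_add_mem {Q : Ideal A} [Q.IsPrime] {H r : ι → A} {c : A} {k : ℕ} {i₀ : ι}
    (hc : c ∉ Q) (hr : r i₀ = c ^ k - 1) (h : ∀ i, r i * H i₀ + H i ∈ Q) (i : ι) : H i ∈ Q := by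
  have hi₀ := h i₀
  rw [hr, sub_mul, one_mul, sub_add_cancel] at hi₀
  have hH := (Ideal.IsPrime.mem_or_mem ‹_› hi₀).resolve_left fun hck =>
    hc (Ideal.IsPrime.mem_of_pow_mem ‹_› _ hck)
  exact (Q.add_mem_iff_right (Q.mul_mem_left _ hH)).1 (h i)

theorem exists_mem_radical_span_add_mul [Finite ι] {σ W : ℕ} {i₀ : ι} {c w : D}
    (hv : NumeratorUnitary f σ W c (v i₀)) (hcw : IsCoprime c w)
    (hw : algebraMap D[X] A (Polynomial.C (c * w)) ∈ Ideal.span (Set.range v)) :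
    ∃ G : ι → A, algebraMap D[X] A (Polynomial.C c) ∈ (Ideal.span
      (Set.range fun i => v i + algebraMap D[X] A (Polynomial.C c) * G i)).radical := by
  obtain ⟨P, r, V, K, k, e, u, hP, hV₀, hr₀, hVu, hVN, hV, hwV⟩ := exists_bounded_numerators hv hw
  obtain ⟨x, y, hxy⟩ := hcw.pow_left (m := k + 1)
  let l := algebraMap D[X] A (Polynomial.C (x * c ^ (k + 1)))
  have hl : 1 - l = algebraMap D[X] A (Polynomial.C (y * w)) := by
    rw [← map_one (algebraMap D[X] A), ← Polynomial.C_1, ← hxy, Polynomial.C_add, map_add,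
      add_sub_cancel_left]
  let pt : Fin 2 → A :=
    ![algebraMap D[X] A Polynomial.X + l * (1 - algebraMap D[X] A Polynomial.X), 1 - l]
  obtain ⟨G, hG⟩ := exists_forall_eq_mul_eval₂_homogenize_add hP hV₀ hVN hV rfl pt rfl
  refine ⟨G, ?_⟩
  rw [Ideal.radical_eq_sInf, Submodule.mem_sInf]
  rintro (Q : Ideal A) ⟨hQle, hQ⟩
  have : Q.IsPrime := hQ
  by_contra hcQ
  let ψ := algebraMap A Q.ResidueField
  let χ := ψ.comp ((algebraMap D[X] A).comp Polynomial.C)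
  have hψ {z : A} : ψ z = 0 ↔ z ∈ Q := Q.algebraMap_residueField_eq_zero
  have hχc : χ c ≠ 0 := hψ.not.2 hcQ
  have hχu : χ u ≠ 0 := (u.isUnit.map χ).ne_zero
  have hl₀ : ψ (1 - l) = χ y * χ w := by
    rw [hl, ← map_mul]
    rfl
  have hH := mem_of_forall_mul_add_mem (r := fun i => algebraMap D[X] A (r i))
    (H := fun i => eval₂ ((algebraMap D[X] A).comp Polynomial.C) pt ((V i).homogenize (W * σ))) hcQ
    (by rw [hr₀, map_sub, map_one, map_pow]) fun i =>
      hG i ▸ Q.mul_mem_left _ (hQle (Ideal.subset_span ⟨i, rfl⟩))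
  have h₀ (h : ψ (1 - l) = 0) : ψ (pt 0) ≠ 0 := by
    have hl' : ψ l = 1 := by
      rwa [map_sub, map_one, sub_eq_zero, eq_comm] at h
    simp [pt, hl']
  have h₁ (h : ψ (1 - l) ≠ 0) : χ (c ^ e * (c * w)) ≠ 0 := by
    have h' : χ y * χ w ≠ 0 := hl₀ ▸ h
    rw [map_mul, map_mul, map_pow]
    exact mul_ne_zero (pow_ne_zero _ hχc) (mul_ne_zero hχc (right_ne_zero_of_mul h'))
  obtain ⟨i, hi⟩ := exists_eval₂_homogenize_ne_zero χ (ψ ∘ pt) hVN (i₀ := i₀)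
    (by rw [hVu, map_mul]; exact mul_ne_zero hχc hχu) hwV h₀ h₁
  exact hi (eval₂_comp_left ψ _ _ ((V i).homogenize _) ▸ hψ.2 (hH i))

theorem isUnimodular_add_smul {S κ : Type*} [CommRing S] [Fintype κ] {q t : κ → S} {s c : S}
    (hq : 1 + s * c ∈ Ideal.span (Set.range q))
    (hs : s ∈ (Ideal.span (Set.range (q + s • t))).radical) : IsUnimodular (q + s • t) := by
  refine (Submodule.mem_span_range_iff_exists_fun S).1 ((Ideal.eq_top_iff_one _).1 ?_)
  by_contra hne
  obtain ⟨M, hM, hqM⟩ := Ideal.exists_le_maximal _ hne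
  have hsM : s ∈ M := hM.isPrime.radical_le_iff.2 hqM hs
  have hqle : Ideal.span (Set.range q) ≤ M := by
    rw [Ideal.span_le]
    rintro _ ⟨i, rfl⟩
    have hi : q i = (q + s • t) i - s * t i := by simp
    exact hi ▸ M.sub_mem (hqM (Ideal.subset_span ⟨i, rfl⟩)) (M.mul_mem_right _ hsM)
  refine hM.ne_top ((Ideal.eq_top_iff_one M).2 ?_)
  simpa using M.sub_mem (hqle hq) (M.mul_mem_right c hsM)

theorem exists_isUnimodular_fixed [Fintype ι] [DecidableEq ι] {κ : Type*} [Fintype κ]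
    {σ W W' : ℕ} {i₀ : ι} {s : D} {E : Matrix κ κ A} {a : Matrix κ ι A} {b : Matrix ι κ A}
    (hab : a * b = algebraMap D[X] A (Polynomial.C s) • E)
    (hba : b * a = algebraMap D[X] A (Polynomial.C s) • 1) (hEa : E * a = a) {q : κ → A}
    (hq : E.mulVec q = q) {y g : A}
    (hy : 1 + algebraMap D[X] A (Polynomial.C s) * y ∈ Ideal.span (Set.range q))
    (hg : NumeratorUnitary f σ W 1 g) (hgq : g ∈ Ideal.span (Set.range q))
    (hbq : NumeratorUnitary f σ W' (s ^ 2) (b.mulVec q i₀)) :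
    ∃ q' : κ → A, E.mulVec q' = q' ∧ IsUnimodular q' := by
  let S := algebraMap D[X] A (Polynomial.C s)
  obtain ⟨c, hc⟩ := exists_C_one_add_mul_mem hg hgq hy
  have hspan (i : κ) : S * q i ∈ Ideal.span (Set.range (b.mulVec q)) := by
    have hi : S * q i = a.mulVec (b.mulVec q) i := by
      rw [Matrix.mulVec_mulVec, hab, Matrix.smul_mulVec, hq, Pi.smul_apply, smul_eq_mul]
    exact hi ▸ Ideal.sum_mem _ fun j _ => Ideal.mul_mem_left _ _ (Ideal.subset_span ⟨j, rfl⟩)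
  have hw : algebraMap D[X] A (Polynomial.C (s ^ 2 * (1 + s * c))) ∈
      Ideal.span (Set.range (b.mulVec q)) := by
    rw [pow_two, mul_assoc, Polynomial.C_mul, map_mul, Polynomial.C_mul, map_mul]
    exact Ideal.mul_mem_left _ _ (mul_mem_of_mem_span_range hspan hc)
  obtain ⟨G, hG⟩ := exists_mem_radical_span_add_mul hbq
    (IsCoprime.pow_left ⟨-c, 1, by ring⟩) hw
  let q' := q + S • a.mulVec G
  have hbq' : b.mulVec q' = fun i => b.mulVec q i + S ^ 2 * G i := by
    ext i
    simp only [q', Matrix.mulVec_add, Matrix.mulVec_smul, Matrix.mulVec_mulVec, hba,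
      Matrix.smul_mulVec, Matrix.one_mulVec, Pi.add_apply, Pi.smul_apply, smul_eq_mul, S]
    ring
  have hle : Ideal.span (Set.range (b.mulVec q')) ≤ Ideal.span (Set.range q') := by
    rw [Ideal.span_le]
    rintro _ ⟨i, rfl⟩
    exact Ideal.sum_mem _ fun j _ => Ideal.mul_mem_left _ _ (Ideal.subset_span ⟨j, rfl⟩)
  refine ⟨q', by rw [Matrix.mulVec_add, hq, Matrix.mulVec_smul, Matrix.mulVec_mulVec, hEa],
    isUnimodular_add_smul (c := algebraMap D[X] A (Polynomial.C c)) (by simpa using hc)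
      (Ideal.radical_mono hle ?_)⟩
  rw [hbq', ← Ideal.radical_idem]
  refine ⟨2, ?_⟩
  simpa only [S, Polynomial.C_pow, map_pow] using hG

theorem NumeratorUnitary.algebraMap_C_mem_of_mem_minimalPrimes {σ W : ℕ} {c : D} {a : A}
    (h : NumeratorUnitary f σ W c a) {Q : Ideal A} (hQ : Q ∈ minimalPrimes A) (ha : a ∈ Q) :
    algebraMap D[X] A (Polynomial.C c) ∈ Q := by
  have : Q.IsPrime := hQ.1.1
  obtain ⟨p, u, u', -, hp, hpu, -⟩ := h
  let q : Ideal D[X] := ((Q.comap (algebraMap D[X] A)).comap Polynomial.C).map Polynomial.C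
  have hq : q.IsPrime := Ideal.isPrime_map_C_of_isPrime
  have hle : q ≤ Q.comap (algebraMap D[X] A) := Ideal.map_comap_le
  have hdisj : Disjoint (Submonoid.powers f : Set D[X]) (q : Set D[X]) := by
    rw [Set.disjoint_left]
    rintro _ ⟨j, rfl⟩ hj
    refine hQ.1.1.ne_top (Q.eq_top_of_isUnit_mem (hle hj) ?_)
    rw [map_pow]
    exact (IsLocalization.Away.algebraMap_isUnit f).pow j
  have hqQ : q.map (algebraMap D[X] A) = Q :=
    have hmap := Ideal.map_le_iff_le_comap.2 hle
    le_antisymm hmap (hQ.2 ⟨IsLocalization.isPrime_of_isPrime_disjoint (Submonoid.powers f) A q hq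
      hdisj, bot_le⟩ hmap)
  have hpq : p ∈ q := by
    rw [← IsLocalization.under_map_of_isPrime_disjoint (Submonoid.powers f) A hq hdisj, hqQ,
      Ideal.mem_comap, hp]
    exact Q.mul_mem_left _ ha
  have hcoeff := Ideal.mem_map_C_iff.1 hpq (W * σ)
  rwa [hpu, Ideal.mul_unit_mem_iff_mem _ u.isUnit] at hcoeff

end LiftUnimodular

/-! ### Idempotent matrices of constant rank -/

/-- The idempotent matrix `E` has constant rank `k`, expressed by its rank polynomial
`det (1 + (X - 1) E)`: where the image of `E` has rank `r`, this determinant is `X ^ r`. -/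
def HasIdempotentRank {A κ : Type*} [CommRing A] [Fintype κ] [DecidableEq κ] (E : Matrix κ κ A)
    (k : ℕ) : Prop :=
  (1 + (Polynomial.X - 1 : A[X]) • E.map Polynomial.C).det = Polynomial.X ^ k

/-- Every idempotent matrix of constant rank over `A` has a free image. This is the matrix form of
projective modules of constant rank are free. -/
def FreeIdempotents (A : Type*) [CommRing A] : Prop :=
  ∀ (N k : ℕ) (E : Matrix (Fin N) (Fin N) A), E * E = E → HasIdempotentRank E k →
    ∃ (a : Matrix (Fin N) (Fin k) A) (b : Matrix (Fin k) (Fin N) A), a * b = E ∧ b * a = 1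

section IdempotentRank

variable {A B κ ι : Type*} [CommRing A] [CommRing B] [Fintype κ] [DecidableEq κ] [Fintype ι]
  [DecidableEq ι]

namespace HasIdempotentRank

theorem map (φ : A →+* B) {E : Matrix κ κ A} {k : ℕ} (h : HasIdempotentRank E k) :
    HasIdempotentRank (E.map φ) k := by
  have hdet := congrArg (Polynomial.mapRingHom φ) h
  rw [RingHom.map_det] at hdet
  rw [HasIdempotentRank]
  convert hdet using 2
  · ext i j : 2
    simp [Matrix.one_apply, apply_ite]
  · simp

theorem eq_zero {E : Matrix κ κ A} (hE : E * E = E) (h : HasIdempotentRank E 0) : E = 0 := by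
  have heval : (Polynomial.evalRingHom (0 : A)).mapMatrix
      (1 + (Polynomial.X - 1 : A[X]) • E.map Polynomial.C) = 1 - E := by
    ext i j
    simp [Matrix.one_apply, apply_ite, sub_eq_add_neg]
  have hdet := congrArg (Polynomial.evalRingHom (0 : A)) h
  rw [RingHom.map_det, heval] at hdet
  have hunit : IsUnit (1 - E) := by
    rw [Matrix.isUnit_iff_isUnit_det, hdet, pow_zero, map_one]
    exact isUnit_one
  exact hunit.mul_right_eq_zero.1 (by rw [sub_mul, one_mul, hE, sub_self])

theorem of_mul_eq_one (a : Matrix κ ι A) (b : Matrix ι κ A) (h : b * a = 1) :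
    HasIdempotentRank (a * b) (Fintype.card ι) := by
  have hone : 1 + (Polynomial.X - 1 : A[X]) • (1 : Matrix ι ι A).map Polynomial.C =
      (Polynomial.X : A[X]) • (1 : Matrix ι ι A[X]) := by
    rw [Matrix.map_one _ Polynomial.C_0 Polynomial.C_1, sub_smul, one_smul, add_sub_cancel]
  rw [HasIdempotentRank, Matrix.map_mul, ← Matrix.smul_mul, Matrix.det_one_add_mul_comm,
    Matrix.mul_smul, ← Matrix.map_mul, h, hone, Matrix.det_smul, Matrix.det_one, mul_one]

theorem unique [Nontrivial A] {E : Matrix κ κ A} {k l : ℕ} (hk : HasIdempotentRank E k)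
    (hl : HasIdempotentRank E l) : k = l := by
  simpa using congrArg Polynomial.natDegree (hk.symm.trans hl)

theorem det_mul_det_of_mul_eq_zero {E F : Matrix κ κ A} (hEF : E * F = 0) :
    (1 + (Polynomial.X - 1 : A[X]) • E.map Polynomial.C).det *
      (1 + (Polynomial.X - 1 : A[X]) • F.map Polynomial.C).det =
    (1 + (Polynomial.X - 1 : A[X]) • (E + F).map Polynomial.C).det := by
  have h : (E.map Polynomial.C : Matrix κ κ A[X]) * F.map Polynomial.C = 0 := by
    rw [← Matrix.map_mul, hEF, Matrix.map_zero _ Polynomial.C_0]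
  simp only [← Matrix.det_mul, Matrix.map_add _ (map_add Polynomial.C), add_mul, mul_add,
    Matrix.smul_mul, Matrix.mul_smul, h, smul_zero, zero_add, one_mul, mul_one, smul_add,
    add_assoc, add_comm (_ • F.map _)]

theorem of_add {E F : Matrix κ κ A} {k l : ℕ} (hEF : E * F = 0) (hF : HasIdempotentRank F l)
    (h : HasIdempotentRank (E + F) (k + l)) : HasIdempotentRank E k := by
  have hdet := det_mul_det_of_mul_eq_zero hEF
  rw [hF, h, pow_add] at hdet
  exact (Polynomial.monic_X_pow l).isRegular.right hdet

theorem one : HasIdempotentRank (1 : Matrix κ κ A) (Fintype.card κ) :=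
  mul_one (1 : Matrix κ κ A) ▸ of_mul_eq_one 1 1 (mul_one 1)

theorem one_sub {E : Matrix κ κ A} (hE : E * E = E) {r : ℕ} (h : HasIdempotentRank E r)
    (hr : r ≤ Fintype.card κ) : HasIdempotentRank (1 - E) (Fintype.card κ - r) := by
  refine of_add (by rw [sub_mul, one_mul, hE, sub_self]) h ?_
  rw [sub_add_cancel, Nat.sub_add_cancel hr]
  exact one

theorem exists_split {E : Matrix κ κ A} {k : ℕ} (hE : E * E = E)
    (h : HasIdempotentRank E (k + 1)) {p q : κ → A} (hpq : p ⬝ᵥ E.mulVec q = 1) :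
    ∃ (a : Matrix κ (Fin 1) A) (b : Matrix (Fin 1) κ A), b * a = 1 ∧ E * a = a ∧ b * E = b ∧
      (E - a * b) * (E - a * b) = E - a * b ∧ HasIdempotentRank (E - a * b) k := by
  let a : Matrix κ (Fin 1) A := Matrix.replicateCol (Fin 1) (E.mulVec q)
  let b : Matrix (Fin 1) κ A := Matrix.replicateRow (Fin 1) p * E
  have hEa : E * a = a := by rw [← Matrix.replicateCol_mulVec, Matrix.mulVec_mulVec, hE]
  have hbE : b * E = b := by rw [Matrix.mul_assoc, hE]
  have hba : b * a = 1 := by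
    rw [Matrix.mul_assoc, hEa, Matrix.replicateRow_mul_replicateCol, hpq]
    ext i j
    rw [Subsingleton.elim i j, Matrix.of_apply, Matrix.one_apply_eq]
  have hEab : E * (a * b) = a * b := by rw [← Matrix.mul_assoc, hEa]
  have habE : a * b * E = a * b := by rw [Matrix.mul_assoc, hbE]
  have hab : a * b * (a * b) = a * b := by
    rw [Matrix.mul_assoc, ← Matrix.mul_assoc b, hba, Matrix.one_mul]
  have hab₀ : (E - a * b) * (a * b) = 0 := by rw [sub_mul, hEab, hab, sub_self]
  refine ⟨a, b, hba, hEa, hbE, ?_, of_add hab₀ (of_mul_eq_one a b hba) ?_⟩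
  · rw [mul_sub, hab₀, sub_mul, hE, habE, sub_zero]
  · rwa [sub_add_cancel]

end HasIdempotentRank

theorem FreeIdempotents.of_ringEquiv (e : A ≃+* B) (h : FreeIdempotents A) :
    FreeIdempotents B := by
  intro N k E hE hk
  obtain ⟨a, b, hab, hba⟩ := h N k (E.map e.symm) (by rw [← Matrix.map_mul, hE])
    (hk.map (e.symm : B →+* A))
  refine ⟨a.map e, b.map e, ?_, ?_⟩
  · ext
    simp [← Matrix.map_mul, hab]
  · rw [← Matrix.map_mul, hba, Matrix.map_one _ (map_zero e) (map_one e)]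

end IdempotentRank

/-! ### Base change and generic freeness -/

section BaseChange

namespace PolyLaurentAway

variable {R S : Type*} [CommRing R] [CommRing S] (φ : R →+* S) (m n : ℕ) (f : R[X])

/-- The homomorphism `A_R → A_S` induced by `R → S`. -/
def baseChange : PolyLaurentAway R m n f →+* PolyLaurentAway S m n (f.map φ) :=
  lift ((ofBase S m n (f.map φ)).comp φ) (varX S m n (f.map φ)) (varY S m n (f.map φ))
    (varT S m n (f.map φ)) (by
      rw [← Polynomial.eval₂_map]
      exact isUnit_eval₂ S m n (f.map φ))

variable {m n f}

@[simp]
theorem baseChange_ofBase (r : R) :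
    baseChange φ m n f (ofBase R m n f r) = ofBase S m n (f.map φ) (φ r) :=
  lift_ofBase ..

@[simp]
theorem baseChange_varX (i : Fin m) :
    baseChange φ m n f (varX R m n f i) = varX S m n (f.map φ) i :=
  lift_varX ..

@[simp]
theorem baseChange_varY (j : Fin n) :
    baseChange φ m n f (varY R m n f j) = varY S m n (f.map φ) j :=
  lift_varY ..

@[simp]
theorem baseChange_varT : baseChange φ m n f (varT R m n f) = varT S m n (f.map φ) :=
  lift_varT ..

@[simp]
theorem baseChange_unitF :
    baseChange φ m n f (unitF R m n f) = unitF S m n (f.map φ) := by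
  rw [coe_unitF, coe_unitF, Polynomial.hom_eval₂, Polynomial.eval₂_map, baseChange_varT]
  congr 1
  ext r
  exact baseChange_ofBase φ r

theorem exists_comp_baseChange_eq {L : Type*} [CommRing L] (j : PolyLaurentAway R m n f →+* L)
    (ψ : S →+* L) (h : ∀ r, ψ (φ r) = j (ofBase R m n f r)) :
    ∃ g : PolyLaurentAway S m n (f.map φ) →+* L, g.comp (baseChange φ m n f) = j := by
  have ht : IsUnit ((f.map φ).eval₂ ψ (j (varT R m n f))) := by
    rw [Polynomial.eval₂_map, RingHom.ext (f := ψ.comp φ) (g := j.comp (ofBase R m n f)) h,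
      ← Polynomial.hom_eval₂]
    exact (isUnit_eval₂ R m n f).map j
  refine ⟨lift ψ (fun i => j (varX R m n f i)) (fun i => Units.map j (varY R m n f i)) _ ht,
    ringHom_ext ?_ ?_ ?_ ?_⟩ <;> simp [h]

variable {φ} in
theorem baseChange_surjective (hφ : Function.Surjective φ) :
    Function.Surjective (baseChange φ m n f) := by
  refine mem_of_generators_mem (baseChange φ m n f).range (fun r => ?_)
    (fun i => ⟨_, baseChange_varX φ i⟩) (fun j => ⟨_, baseChange_varY φ j⟩) (fun j => ?_)
    ⟨_, baseChange_varT φ⟩ ?_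
  · obtain ⟨r, rfl⟩ := hφ r
    exact ⟨_, baseChange_ofBase φ r⟩
  · have hY : Units.map (baseChange φ m n f) (varY R m n f j) = varY S m n (f.map φ) j :=
      Units.ext (baseChange_varY φ j)
    exact ⟨_, congrArg Units.inv hY⟩
  · have hF : Units.map (baseChange φ m n f) (unitF R m n f) = unitF S m n (f.map φ) :=
      Units.ext (baseChange_unitF φ)
    exact ⟨_, congrArg Units.inv hF⟩

theorem ker_baseChange_quotient_mk_le (I : Ideal R) :
    RingHom.ker (baseChange (Ideal.Quotient.mk I) m n f) ≤ I.map (ofBase R m n f) := by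
  intro x hx
  let j := Ideal.Quotient.mk (I.map (ofBase R m n f))
  obtain ⟨g, hg⟩ := exists_comp_baseChange_eq (Ideal.Quotient.mk I) j
    (Ideal.Quotient.lift I (j.comp (ofBase R m n f)) fun a ha =>
      Ideal.Quotient.eq_zero_iff_mem.2 (Ideal.mem_map_of_mem _ ha)) fun _ => rfl
  rw [← Ideal.Quotient.eq_zero_iff_mem, ← RingHom.congr_fun hg x, RingHom.comp_apply,
    RingHom.mem_ker.1 hx, map_zero]

theorem isLocalization_baseChange (M : Submonoid R) [Algebra R S] [IsLocalization M S] :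
    let _ := (baseChange (algebraMap R S) m n f).toAlgebra
    IsLocalization (M.map (ofBase R m n f))
      (PolyLaurentAway S m n (f.map (algebraMap R S))) := by
  intro _
  let M' := M.map (ofBase R m n f)
  let j := algebraMap (PolyLaurentAway R m n f) (Localization M')
  have hj (s : M) : IsUnit (j.comp (ofBase R m n f) s) :=
    IsLocalization.map_units _ (⟨_, Submonoid.mem_map_of_mem _ s.2⟩ : M')
  obtain ⟨g, hg⟩ := exists_comp_baseChange_eq (algebraMap R S) j
    (IsLocalization.lift (M := M) hj) (IsLocalization.lift_eq hj)
  have hβ (y : M') : IsUnit (baseChange (algebraMap R S) m n f y) := by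
    obtain ⟨_, s, hs, rfl⟩ := y
    rw [baseChange_ofBase]
    exact (IsLocalization.map_units S ⟨s, hs⟩).map _
  let h : Localization M' →+* _ := IsLocalization.lift hβ
  have hhj : h.comp j = baseChange (algebraMap R S) m n f := IsLocalization.lift_comp hβ
  have hgh : g.comp h = RingHom.id _ := by
    refine IsLocalization.ringHom_ext M' ?_
    rw [RingHom.comp_assoc, hhj, hg, RingHom.id_comp]
  have hhgβ : (h.comp g).comp (baseChange (algebraMap R S) m n f) =
      baseChange (algebraMap R S) m n f := by
    rw [RingHom.comp_assoc, hg, hhj]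
  have hhg : h.comp g = RingHom.id _ := by
    have hbase : (h.comp g).comp (ofBase S m n _) = ofBase S m n (f.map (algebraMap R S)) :=
      IsLocalization.ringHom_ext M <| RingHom.ext fun r => by
        simpa using RingHom.congr_fun hhgβ (ofBase R m n f r)
    refine ringHom_ext (RingHom.congr_fun hbase) (fun i => ?_) (fun i => ?_) ?_
    · simpa using RingHom.congr_fun hhgβ (varX R m n f i)
    · simpa using RingHom.congr_fun hhgβ (varY R m n f i)
    · simpa using RingHom.congr_fun hhgβ (varT R m n f)
  exact IsLocalization.isLocalization_of_algEquiv M'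
    (AlgEquiv.ofRingEquiv (f := RingEquiv.ofRingHom h g hhg hgh) (RingHom.congr_fun hhj))

end PolyLaurentAway

end BaseChange

section FreeUpTo

/-- The image of the idempotent matrix `E` is free of rank `k` up to `s`: the two composites of a
pair of homomorphisms between it and the free module of rank `k` are multiplication by `s`. -/
def IsFreeUpTo {A κ : Type*} [CommRing A] [Fintype κ] (s : A) (E : Matrix κ κ A) (k : ℕ) : Prop :=
  ∃ (a : Matrix κ (Fin k) A) (b : Matrix (Fin k) κ A), a * b = s • E ∧ b * a = s • 1 ∧ E * a = a

variable {A κ : Type*} [CommRing A] [Fintype κ] {E : Matrix κ κ A} {k : ℕ}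

theorem IsFreeUpTo.sum_orthogonal {ι : Type*} [Fintype ι] {c s : ι → A}
    (hc : Pairwise fun p q => c p * c q = 0) (h : ∀ p, IsFreeUpTo (s p) E k) :
    IsFreeUpTo (∑ p, c p * c p * s p) E k := by
  choose a b hab hba hEa using h
  refine ⟨∑ p, c p • a p, ∑ p, c p • b p, ?_, ?_, ?_⟩
  · rw [Matrix.sum_mul, Finset.sum_smul]
    refine Finset.sum_congr rfl fun p _ => ?_
    rw [Matrix.mul_sum, Finset.sum_eq_single p]
    · rw [Matrix.smul_mul, Matrix.mul_smul, hab, smul_smul, smul_smul]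
    · intro q _ hq
      rw [Matrix.smul_mul, Matrix.mul_smul, smul_smul, hc hq.symm, zero_smul]
    · simp
  · rw [Matrix.sum_mul, Finset.sum_smul]
    refine Finset.sum_congr rfl fun p _ => ?_
    rw [Matrix.mul_sum, Finset.sum_eq_single p]
    · rw [Matrix.smul_mul, Matrix.mul_smul, hba, smul_smul, smul_smul]
    · intro q _ hq
      rw [Matrix.smul_mul, Matrix.mul_smul, smul_smul, hc hq.symm, zero_smul]
    · simp
  · simp only [Matrix.mul_sum, Matrix.mul_smul, hEa]

theorem exists_smul_eq_of_map_eq {ι ι' A' : Type*} [Finite ι] [Finite ι'] [CommRing A']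
    [Algebra A A'] (M : Submonoid A) [IsLocalization M A'] {x y : Matrix ι ι' A}
    (h : x.map (algebraMap A A') = y.map (algebraMap A A')) : ∃ s ∈ M, s • x = s • y := by
  choose s hs using fun p : ι × ι' =>
    IsLocalization.exists_of_eq (M := M) (congrFun (congrFun h p.1) p.2)
  have := Fintype.ofFinite ι
  have := Fintype.ofFinite ι'
  refine ⟨∏ p, s p, M.prod_mem fun p _ => (s p).2, Matrix.ext fun i j => ?_⟩
  obtain ⟨t, ht⟩ := Finset.dvd_prod_of_mem (fun p => (s p : A)) (Finset.mem_univ (i, j))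
  rw [Matrix.smul_apply, Matrix.smul_apply, smul_eq_mul, smul_eq_mul, ht]
  linear_combination t * hs (i, j)

theorem exists_map_eq_smul {ι ι' A' : Type*} [Finite ι] [Finite ι'] [CommRing A']
    [Algebra A A'] (M : Submonoid A) [IsLocalization M A'] (x : Matrix ι ι' A') :
    ∃ s ∈ M, ∃ y : Matrix ι ι' A, y.map (algebraMap A A') = algebraMap A A' s • x := by
  obtain ⟨s, hs⟩ := IsLocalization.exist_integer_multiples_of_finite M
    fun p : ι × ι' => x p.1 p.2
  choose y hy using hs
  refine ⟨s, s.2, Matrix.of fun i j => y (i, j), Matrix.ext fun i j => ?_⟩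
  rw [Matrix.map_apply, Matrix.of_apply, hy, Algebra.smul_def, Matrix.smul_apply, smul_eq_mul]

theorem exists_isFreeUpTo_of_isLocalization {N : ℕ} {E : Matrix (Fin N) (Fin N) A} {A' : Type*}
    [CommRing A'] [Algebra A A'] (M : Submonoid A) [IsLocalization M A']
    (hA' : FreeIdempotents A') (hE : E * E = E) (hk : HasIdempotentRank E k) :
    ∃ s ∈ M, IsFreeUpTo s E k := by
  let β := algebraMap A A'
  obtain ⟨a', b', hab', hba'⟩ := hA' N k (E.map β) (by rw [← Matrix.map_mul, hE]) (hk.map β)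
  have hEa' : E.map β * a' = a' := by rw [← hab', Matrix.mul_assoc, hba', Matrix.mul_one]
  obtain ⟨s, hs, a, ha⟩ := exists_map_eq_smul M a'
  obtain ⟨t, ht, b, hb⟩ := exists_map_eq_smul M b'
  have hab : (a * b).map β = ((s * t) • E).map β := by
    rw [Matrix.map_mul, ha, hb, Matrix.smul_mul, Matrix.mul_smul, smul_smul, hab', ← map_mul]
    ext i j
    simp [β]
  have hba : (b * a).map β = ((s * t) • (1 : Matrix (Fin k) (Fin k) A)).map β := by
    rw [Matrix.map_mul, ha, hb, Matrix.smul_mul, Matrix.mul_smul, smul_smul, hba', ← map_mul]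
    ext i j
    rcases eq_or_ne i j with rfl | hij <;> simp [β, *, mul_comm s t]
  have hEa : (E * a).map β = a.map β := by rw [Matrix.map_mul, ha, Matrix.mul_smul, hEa']
  obtain ⟨u, hu, hab⟩ := exists_smul_eq_of_map_eq M hab
  obtain ⟨v, hv, hba⟩ := exists_smul_eq_of_map_eq M hba
  obtain ⟨w, hw, hEa⟩ := exists_smul_eq_of_map_eq M hEa
  refine ⟨u * v * w * (s * t), M.mul_mem (M.mul_mem (M.mul_mem hu hv) hw) (M.mul_mem hs ht),
    (u * v * w) • a, b, ?_, ?_, ?_⟩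
  · rw [Matrix.smul_mul, mul_assoc u, mul_comm u, mul_smul, hab, smul_smul, smul_smul]
  · rw [Matrix.mul_smul, mul_right_comm u, mul_smul, hba, smul_smul, smul_smul]
  · rw [Matrix.mul_smul, mul_smul, hEa, ← mul_smul]

end FreeUpTo

section GenericFreeness

variable {R : Type*} [CommRing R]

theorem isField_localization_atPrime_of_mem_minimalPrimes [IsReduced R] {p : Ideal R} [p.IsPrime]
    (hp : p ∈ minimalPrimes R) : IsField (Localization.AtPrime p) := by
  have hrad := IsLocalization.AtPrime.radical_map_of_mem_minimalPrimes
    (A := Localization.AtPrime p) p ⊥ hp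
  rw [Ideal.map_bot, IsLocalization.AtPrime.map_eq_maximalIdeal p] at hrad
  rw [IsLocalRing.isField_iff_maximalIdeal_eq, ← hrad]
  exact nilradical_eq_zero _

theorem eq_zero_of_forall_mem_minimalPrimes [IsReduced R] {x : R}
    (hx : ∀ p ∈ minimalPrimes R, x ∈ p) : x = 0 := by
  have hmem : x ∈ sInf (minimalPrimes R) := (Submodule.mem_sInf).2 hx
  rwa [minimalPrimes, Ideal.sInf_minimalPrimes, ← Ideal.zero_eq_bot, ← nilradical,
    nilradical_eq_zero] at hmem

theorem exists_notMem_minimalPrimes_mul_eq_zero [IsReduced R] [Finite (minimalPrimes R)] :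
    ∃ t : minimalPrimes R → R, (∀ p, t p ∉ p.1) ∧ (∀ p q, q ≠ p → t p ∈ q.1) ∧
      Pairwise fun p q => t p * t q = 0 := by
  classical
  have := Fintype.ofFinite (minimalPrimes R)
  have hx (p q : minimalPrimes R) : ∃ x : R, x ∉ p.1 ∧ (q ≠ p → x ∈ q.1) := by
    by_cases hqp : q = p
    · exact ⟨1, p.2.1.1.one_notMem, fun h => absurd hqp h⟩
    · obtain ⟨x, hxq, hxp⟩ := Set.not_subset.1 fun hle : q.1 ≤ p.1 =>
        hqp (Subtype.ext (le_antisymm hle (p.2.2 q.2.1 hle)))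
      exact ⟨x, hxp, fun _ => hxq⟩
  choose x hxp hxq using hx
  have ht (p q : minimalPrimes R) (hq : q ≠ p) : ∏ q, x p q ∈ q.1 :=
    Ideal.mem_of_dvd _ (Finset.dvd_prod_of_mem _ (Finset.mem_univ q)) (hxq p q hq)
  refine ⟨fun p => ∏ q, x p q, fun p hp => ?_, ht, fun p q hpq => ?_⟩
  · have := p.2.1.1
    obtain ⟨q, -, hq⟩ := Ideal.IsPrime.prod_mem_iff.1 hp
    exact hxp p q hq
  · refine eq_zero_of_forall_mem_minimalPrimes fun r hr => ?_
    by_cases hrp : (⟨r, hr⟩ : minimalPrimes R) = p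
    · exact r.mul_mem_left _ (ht q ⟨r, hr⟩ (hrp ▸ hpq))
    · exact r.mul_mem_right _ (ht p ⟨r, hr⟩ hrp)

theorem sum_mul_mul_mem_nonZeroDivisors [IsReduced R] [Fintype (minimalPrimes R)]
    {t s : minimalPrimes R → R} (ht : ∀ p, t p ∉ p.1) (htq : ∀ p q, q ≠ p → t p ∈ q.1)
    (hs : ∀ p, s p ∉ p.1) : ∑ p, t p * t p * s p ∈ nonZeroDivisors R := by
  classical
  rw [mem_nonZeroDivisors_iff_right]
  refine fun y hy => eq_zero_of_forall_mem_minimalPrimes fun p hp => ?_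
  have hpp : p.IsPrime := hp.1.1
  refine (hpp.mem_or_mem (hy ▸ p.zero_mem : y * _ ∈ p)).resolve_right fun hsum => ?_
  rw [← Finset.add_sum_erase _ _ (Finset.mem_univ ⟨p, hp⟩)] at hsum
  have hrest : ∑ q ∈ Finset.univ.erase ⟨p, hp⟩, t q * t q * s q ∈ p :=
    p.sum_mem fun q hq => p.mul_mem_right _
      (p.mul_mem_right _ (htq q ⟨p, hp⟩ (Finset.ne_of_mem_erase hq).symm))
  rcases hpp.mem_or_mem ((p.add_mem_iff_left hrest).1 hsum) with htt | hsp
  · exact (hpp.mem_or_mem htt).elim (ht ⟨p, hp⟩) (ht ⟨p, hp⟩)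
  · exact hs ⟨p, hp⟩ hsp

end GenericFreeness

section MinimalPrimes

universe u

variable {R : Type u} [CommRing R]

/-- After every base change to a field, the idempotent matrices of constant rank over `A` have free
images. -/
def FreeIdempotentsOverFields (R : Type u) [CommRing R] (m n : ℕ) (f : R[X]) : Prop :=
  ∀ (K : Type u) [Field K] (φ : R →+* K), FreeIdempotents (PolyLaurentAway K m n (f.map φ))

theorem FreeIdempotentsOverFields.exists_isFreeUpTo [IsNoetherianRing R] [IsReduced R] {m n : ℕ}
    {f : R[X]} (hf : FreeIdempotentsOverFields R m n f) {N k : ℕ}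
    {E : Matrix (Fin N) (Fin N) (PolyLaurentAway R m n f)} (hE : E * E = E)
    (hk : HasIdempotentRank E k) :
    ∃ s ∈ nonZeroDivisors R, IsFreeUpTo (PolyLaurentAway.ofBase R m n f s) E k := by
  have : Finite (minimalPrimes R) := minimalPrimes.finite_of_isNoetherianRing R
  have := Fintype.ofFinite (minimalPrimes R)
  have hloc (p : minimalPrimes R) :
      ∃ s ∉ p.1, IsFreeUpTo (PolyLaurentAway.ofBase R m n f s) E k := by
    have := p.2.1.1
    let _ : Field (Localization.AtPrime p.1) :=
      (isField_localization_atPrime_of_mem_minimalPrimes p.2).toField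
    let _ := (PolyLaurentAway.baseChange (algebraMap R (Localization.AtPrime p.1)) m n f).toAlgebra
    have := PolyLaurentAway.isLocalization_baseChange (m := m) (n := n) (f := f)
      (S := Localization.AtPrime p.1) p.1.primeCompl
    obtain ⟨_, ⟨s, hs, rfl⟩, h⟩ := exists_isFreeUpTo_of_isLocalization
      (p.1.primeCompl.map (PolyLaurentAway.ofBase R m n f)) 
      (hf (Localization.AtPrime p.1) (algebraMap R _)) hE hk
    exact ⟨s, hs, h⟩
  choose s hs hfree using hloc
  obtain ⟨t, ht, htq, htt⟩ := exists_notMem_minimalPrimes_mul_eq_zero (R := R)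
  refine ⟨_, sum_mul_mul_mem_nonZeroDivisors ht htq hs, ?_⟩
  simp only [map_sum, map_mul]
  refine IsFreeUpTo.sum_orthogonal (fun p q hpq => ?_) hfree
  change PolyLaurentAway.ofBase R m n f (t p) * PolyLaurentAway.ofBase R m n f (t q) = 0
  rw [← map_mul, show t p * t q = 0 from htt hpq, map_zero]

end MinimalPrimes

/-! ### Unimodular elements -/

theorem map_mulVec_comp {A A' κ ι : Type*} [CommRing A] [CommRing A'] [Fintype κ] (φ : A →+* A')
    (M : Matrix ι κ A) (q : κ → A) : (M.map φ).mulVec (φ ∘ q) = φ ∘ M.mulVec q :=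
  _root_.funext fun i => (RingHom.map_mulVec φ M q i).symm

/-- Every idempotent matrix of constant rank `k` over `A` fixes a unimodular column: in matrix form,
every projective `A`-module of constant rank `k` has a free direct summand of rank one. -/
def HasUnimodularFixedColumns (A : Type*) [CommRing A] (k : ℕ) : Prop :=
  ∀ (N : ℕ) (E : Matrix (Fin N) (Fin N) A), E * E = E → HasIdempotentRank E k →
    ∃ q, E.mulVec q = q ∧ IsUnimodular q

namespace HasUnimodularFixedColumns

variable {A A' : Type*} [CommRing A] [CommRing A'] {k : ℕ}

theorem of_subsingleton [Subsingleton A] : HasUnimodularFixedColumns A k := fun _ _ _ _ =>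
  ⟨0, Subsingleton.elim _ _, 0, Subsingleton.elim _ _⟩

theorem exists_dotProduct_sub_one_mem_ker (h : HasUnimodularFixedColumns A' k) {φ : A →+* A'}
    (hφ : Function.Surjective φ) {N : ℕ} {E : Matrix (Fin N) (Fin N) A} (hE : E * E = E)
    (hk : HasIdempotentRank E k) :
    ∃ q w, E.mulVec q = q ∧ w ⬝ᵥ q - 1 ∈ RingHom.ker φ := by
  obtain ⟨q', hq', w', hw'⟩ := h N (E.map φ) (by rw [← Matrix.map_mul, hE]) (hk.map φ)
  choose q hq using fun i => hφ (q' i)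
  choose w hw using fun i => hφ (w' i)
  have hEq (i : Fin N) : φ (E.mulVec q i) = q' i := by
    rw [RingHom.map_mulVec, show φ ∘ q = q' from _root_.funext hq, hq']
  refine ⟨E.mulVec q, w, by rw [Matrix.mulVec_mulVec, hE], RingHom.mem_ker.2 ?_⟩
  simp only [dotProduct, map_sub, map_sum, map_mul, hw, hEq, map_one]
  exact sub_eq_zero.2 hw'

theorem of_surjective (h : HasUnimodularFixedColumns A' k) {φ : A →+* A'}
    (hφ : Function.Surjective φ) (hker : RingHom.ker φ ≤ nilradical A) :
    HasUnimodularFixedColumns A k := by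
  intro N E hE hk
  obtain ⟨q, w, hq, hw⟩ := h.exists_dotProduct_sub_one_mem_ker hφ hE hk
  have hunit : IsUnit (w ⬝ᵥ q) := by
    simpa using (mem_nilradical.1 (hker hw)).isUnit_add_one
  obtain ⟨z, hz⟩ := hunit.exists_left_inv
  exact ⟨q, hq, z • w, by rw [← hz, ← smul_eq_mul, ← smul_dotProduct]; rfl⟩

end HasUnimodularFixedColumns

theorem exists_isUnimodular_fixed_of_map {A A' κ : Type*} [CommRing A] [CommRing A'] [Fintype κ]
    {E : Matrix κ κ A} (θ : A ≃+* A')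
    (h : ∃ q, (E.map θ).mulVec q = q ∧ IsUnimodular q) :
    ∃ q, E.mulVec q = q ∧ IsUnimodular q := by
  obtain ⟨q, hq, hu⟩ := h
  refine ⟨θ.symm ∘ q, θ.injective.comp_left ?_, hu.map θ.symm.toRingHom⟩
  have hθq : θ ∘ θ.symm ∘ q = q := _root_.funext fun i => θ.apply_symm_apply (q i)
  have hfix : (E.map θ).mulVec (θ ∘ θ.symm ∘ q) = θ ∘ θ.symm ∘ q := by rw [hθq, hq]
  exact (map_mulVec_comp θ.toRingHom E _).symm.trans hfix

section Reduced

variable {R : Type*} [CommRing R] {m n : ℕ} {f : R[X]}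

open PolyLaurentAway in
theorem heightGEAway_span_singleton_of_numeratorUnitary
    (θ : PolyLaurentAway R m n f ≃+* PolyLaurentAway R m n f) {s : R}
    (hθ : θ (ofBase R m n f s) = ofBase R m n f s) {W : ℕ} {a : PolyLaurentAway R m n f}
    (ha : NumeratorUnitary (polyB m n f) (slope f) W (algebraMap R (PolyLaurent R m n) s) (θ a)) :
    HeightGEAway (ofBase R m n f s) (Ideal.span {a}) 1 := by
  intro p hp hle hs
  rw [Nat.cast_one, Order.one_le_iff_ne_zero]
  intro h0
  let p' := p.comap (θ.symm : PolyLaurentAway R m n f →+* PolyLaurentAway R m n f)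
  have hp' : p'.IsPrime := hp.comap _
  have hmin : p' ∈ minimalPrimes (PolyLaurentAway R m n f) := by
    rw [← Ideal.height_eq_zero_iff, ← h0]
    exact RingEquiv.height_comap θ.symm p
  have hap : θ a ∈ p' := by
    change θ.symm (θ a) ∈ p
    rw [RingEquiv.symm_apply_apply]
    exact hle (Ideal.mem_span_singleton_self a)
  have hsp : θ.symm (ofBase R m n f s) ∈ p := ha.algebraMap_C_mem_of_mem_minimalPrimes hmin hap
  rw [← hθ, RingEquiv.symm_apply_apply] at hsp
  exact hs hsp

open PolyLaurentAway in
theorem exists_isUnimodular_fixed_of_changeVar {ι κ : Type*} [Fintype ι] [DecidableEq ι]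
    [Fintype κ] {i₀ : ι} {s : R} {E : Matrix κ κ (PolyLaurentAway R m n f)}
    {a : Matrix κ ι (PolyLaurentAway R m n f)} {b : Matrix ι κ (PolyLaurentAway R m n f)}
    (hab : a * b = ofBase R m n f s • E) (hba : b * a = ofBase R m n f s • 1) (hEa : E * a = a)
    {q : κ → PolyLaurentAway R m n f} (hq : E.mulVec q = q) {y g : PolyLaurentAway R m n f}
    (hy : 1 + ofBase R m n f s * y ∈ Ideal.span (Set.range q)) (hgq : g ∈ Ideal.span (Set.range q))
    (θ : PolyLaurentAway R m n f ≃+* PolyLaurentAway R m n f)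
    (hθ : θ (ofBase R m n f s) = ofBase R m n f s) {W W' : ℕ}
    (hg : NumeratorUnitary (polyB m n f) (slope f) W 1 (θ g))
    (hbq : NumeratorUnitary (polyB m n f) (slope f) W'
      (algebraMap R (PolyLaurent R m n) s ^ 2) (θ (b.mulVec q i₀))) :
    ∃ q', E.mulVec q' = q' ∧ IsUnimodular q' := by
  have hsmul (x : PolyLaurentAway R m n f) :
      θ (ofBase R m n f s • x) = ofBase R m n f s • θ x := by
    rw [smul_eq_mul, map_mul, hθ, smul_eq_mul]
  have hspan {x : PolyLaurentAway R m n f} (hx : x ∈ Ideal.span (Set.range q)) :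
      θ x ∈ Ideal.span (Set.range (θ ∘ q)) := by
    rw [Set.range_comp, ← Ideal.map_span]
    exact Ideal.mem_map_of_mem _ hx
  have hyθ := hspan hy
  rw [map_add, map_mul, map_one, hθ] at hyθ
  refine exists_isUnimodular_fixed_of_map θ (exists_isUnimodular_fixed (i₀ := i₀)
    (W' := W') (s := algebraMap R (PolyLaurent R m n) s) (a := a.map θ) (b := b.map θ)
    ?_ ?_ ?_ ?_ hyθ hg (hspan hgq) ?_)
  · rw [← Matrix.map_mul, hab, Matrix.map_smul _ _ hsmul]
    rfl
  · rw [← Matrix.map_mul, hba, Matrix.map_smul _ _ hsmul,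
      Matrix.map_one _ (map_zero θ) (map_one θ)]
    rfl
  · rw [← Matrix.map_mul, hEa]
  · exact (map_mulVec_comp θ.toRingHom E q).trans (congrArg (θ ∘ ·) hq)
  · exact (congrFun (map_mulVec_comp θ.toRingHom b q) i₀).symm ▸ hbq

theorem lt_height_of_span_range_le {A κ ι : Type*} [CommRing A] [Fintype κ] {t y : A} {q : κ → A}
    {b : Matrix ι κ A} {k : ℕ} (hy : 1 + t * y ∈ Ideal.span (Set.range q))
    (hb : HeightGEAway (t ^ 2) (Ideal.span (Set.range (b.mulVec q))) (k + 1)) {p : Ideal A}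
    (hp : p.IsPrime) (hqp : Ideal.span (Set.range q) ≤ p) : (k : ℕ∞) < p.height := by
  have htp : t ∉ p := fun htp => hp.ne_top <| (Ideal.eq_top_iff_one p).2 <|
    (p.add_mem_iff_left (p.mul_mem_right y htp)).1 (hqp hy)
  refine lt_of_lt_of_le ?_ (hb p hp (Ideal.span_le.2 ?_) fun h => htp (hp.mem_of_pow_mem 2 h))
  · exact_mod_cast k.lt_succ_self
  · rintro _ ⟨i, rfl⟩
    exact p.sum_mem fun j _ => p.mul_mem_left _ (hqp (Ideal.subset_span ⟨j, rfl⟩))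

open PolyLaurentAway in
theorem exists_isUnimodular_fixed_of_isFreeUpTo [IsNoetherianRing R] (hf : f.Monic)
    (hn : f.natDegree ≠ 0 ∨ n = 0) {d k : ℕ} (hd : ringKrullDim R ≤ d) (hdk : d ≤ k) {κ : Type*}
    [Fintype κ] {E : Matrix κ κ (PolyLaurentAway R m n f)} {s : R}
    (hfree : IsFreeUpTo (ofBase R m n f s) E (k + 1)) {q w : κ → PolyLaurentAway R m n f}
    (hq : E.mulVec q = q) (hqw : ofBase R m n f s ∣ w ⬝ᵥ q - 1) :
    ∃ q', E.mulVec q' = q' ∧ IsUnimodular q' := by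
  obtain ⟨a, b, hab, hba, hEa⟩ := hfree
  obtain ⟨y, hy⟩ := hqw
  let t := ofBase R m n f s
  have ht : ofBase R m n f (s ^ 2) = t ^ 2 := map_pow _ _ _
  let v := b.mulVec q
  obtain ⟨c₀, hc₀⟩ := exists_changeVar_numeratorUnitary hf hn (v (Fin.last k))
  replace hc₀ := hc₀ (s ^ 2)
  simp only [ht] at hc₀
  have hheight : HeightGEAway (t ^ 2) (Ideal.span {v (Fin.last k) + t ^ 2 * c₀}) 1 := by
    obtain ⟨θ, hθ, -, W, hW⟩ := hc₀ 1 (Submonoid.one_mem _)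
    rw [← ht] at hW ⊢
    exact heightGEAway_span_singleton_of_numeratorUnitary θ (hθ _) hW
  obtain ⟨c, hc, hcv⟩ := exists_heightGEAway_span_range hheight
  let q₁ := q + a.mulVec (t • c)
  have hq₁ : E.mulVec q₁ = q₁ := by
    rw [Matrix.mulVec_add, hq, Matrix.mulVec_mulVec, hEa]
  have hbq₁ : b.mulVec q₁ = fun i => v i + t ^ 2 * c i := by
    rw [Matrix.mulVec_add, Matrix.mulVec_mulVec, hba, Matrix.smul_mulVec, Matrix.one_mulVec,
      smul_smul, ← pow_two]
    rfl
  have hy₁ : 1 + t * (y + w ⬝ᵥ a.mulVec c) ∈ Ideal.span (Set.range q₁) := by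
    have hwq : w ⬝ᵥ q₁ = 1 + t * (y + w ⬝ᵥ a.mulVec c) := by
      rw [dotProduct_add, Matrix.mulVec_smul, dotProduct_smul, smul_eq_mul]
      linear_combination hy
    exact hwq ▸ Ideal.sum_mem _ fun i _ => Ideal.mul_mem_left _ _ (Ideal.subset_span ⟨i, rfl⟩)
  obtain ⟨h, hh, hhq⟩ := exists_generalizedMonics_map_mem hd (evalParameters R m n f)
    (evalParameters_isIntegral hf) fun p hp hle => (Nat.cast_le.2 hdk).trans_lt
      (lt_height_of_span_range_le hy₁ (hbq₁ ▸ hcv) hp hle)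
  obtain ⟨θ, hθ, ⟨W, hW⟩, W', hW'⟩ := hc₀ h hh
  exact exists_isUnimodular_fixed_of_changeVar hab hba hEa hq₁ hy₁ hhq θ (hθ s) hW
    (i₀ := Fin.last k) (W' := W') (by simpa only [hbq₁, hc, ← map_pow] using hW')

end Reduced

section UnimodularElement

universe u

theorem FreeIdempotentsOverFields.map {R S : Type u} [CommRing R] [CommRing S] {m n : ℕ} {f : R[X]}
    (h : FreeIdempotentsOverFields R m n f) (φ : R →+* S) :
    FreeIdempotentsOverFields S m n (f.map φ) := by
  intro K _ ψ
  rw [Polynomial.map_map]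
  exact h K _

open PolyLaurentAway in
theorem hasUnimodularFixedColumns_of_quotient {R : Type u} [CommRing R] [IsNoetherianRing R]
    [IsReduced R] {m n : ℕ} {f : R[X]} (hf : f.Monic) (hn : f.natDegree ≠ 0 ∨ n = 0)
    (hfields : FreeIdempotentsOverFields R m n f) {d k : ℕ} (hd : ringKrullDim R ≤ d) (hdk : d ≤ k)
    (hquot : ∀ s ∈ nonZeroDivisors R, HasUnimodularFixedColumns
      (PolyLaurentAway (R ⧸ Ideal.span {s}) m n (f.map (Ideal.Quotient.mk _))) (k + 1)) :
    HasUnimodularFixedColumns (PolyLaurentAway R m n f) (k + 1) := by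
  intro N E hE hk
  obtain ⟨s, hs, hfree⟩ := hfields.exists_isFreeUpTo hE hk
  obtain ⟨q, w, hq, hqw⟩ := (hquot s hs).exists_dotProduct_sub_one_mem_ker
    (baseChange_surjective Ideal.Quotient.mk_surjective) hE hk
  have hdvd := ker_baseChange_quotient_mk_le _ hqw
  rw [Ideal.map_span, Set.image_singleton, Ideal.mem_span_singleton] at hdvd
  exact exists_isUnimodular_fixed_of_isFreeUpTo hf hn hd hdk hfree hq hdvd

open PolyLaurentAway in
theorem hasUnimodularFixedColumns_of_isReduced_quotient {R : Type u} [CommRing R] {m n : ℕ}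
    {f : R[X]} {k : ℕ} (h : HasUnimodularFixedColumns
      (PolyLaurentAway (R ⧸ nilradical R) m n (f.map (Ideal.Quotient.mk _))) k) :
    HasUnimodularFixedColumns (PolyLaurentAway R m n f) k :=
  h.of_surjective (baseChange_surjective Ideal.Quotient.mk_surjective) <|
    (ker_baseChange_quotient_mk_le _).trans <| Ideal.map_le_iff_le_comap.2 fun _ hx =>
      mem_nilradical.2 (IsNilpotent.map (mem_nilradical.1 hx) _)

theorem PolyLaurentAway.hasUnimodularFixedColumns_of_subsingleton {R : Type*} [CommRing R]
    [Subsingleton R] {m n : ℕ} {f : R[X]} {k : ℕ} :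
    HasUnimodularFixedColumns (PolyLaurentAway R m n f) k :=
  have := (ofBase R m n f).codomain_trivial
  .of_subsingleton

theorem PolyLaurentAway.hasUnimodularFixedColumns {m n d : ℕ} {R : Type u} [CommRing R]
    [IsNoetherianRing R] {f : R[X]} (hf : f.Monic) (hn : f.natDegree ≠ 0 ∨ n = 0)
    (hfields : FreeIdempotentsOverFields R m n f) (hd : ringKrullDim R < d) {k : ℕ} (hdk : d ≤ k) :
    HasUnimodularFixedColumns (PolyLaurentAway R m n f) k := by
  induction d generalizing R with
  | zero =>
    have : Subsingleton R := not_nontrivial_iff_subsingleton.1 fun _ =>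
      (ringKrullDim_nonneg_of_nontrivial (R := R)).not_gt (by simpa using hd)
    exact hasUnimodularFixedColumns_of_subsingleton
  | succ d ih =>
    obtain ⟨k, rfl⟩ := Nat.exists_eq_add_of_lt hdk
    refine hasUnimodularFixedColumns_of_isReduced_quotient ?_
    have hred : IsReduced (R ⧸ nilradical R) :=
      (Ideal.isRadical_iff_quotient_reduced _).1 (Ideal.radical_isRadical _)
    have hd' := (ringKrullDim_quotient_le (nilradical R)).trans_lt hd
    rcases subsingleton_or_nontrivial (R ⧸ nilradical R) with _ | _
    · exact hasUnimodularFixedColumns_of_subsingleton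
    refine hasUnimodularFixedColumns_of_quotient (hf.map _) (by rwa [hf.natDegree_map])
      (hfields.map _) (ENat.WithBot.lt_add_one_iff.1 hd') (Nat.le_add_right d k) fun s hs => ?_
    rcases subsingleton_or_nontrivial ((R ⧸ nilradical R) ⧸ Ideal.span {s}) with _ | _
    · exact hasUnimodularFixedColumns_of_subsingleton
    refine ih ((hf.map _).map _) (by rwa [(hf.map _).natDegree_map, hf.natDegree_map])
      ((hfields.map _).map _) ?_ (by omega)
    exact ENat.WithBot.add_one_le_natCast_iff.1 <| ENat.WithBot.lt_add_one_iff.1 <|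
      (ringKrullDim_quotient_succ_le_of_nonZeroDivisor hs).trans_lt hd'

end UnimodularElement

/-! ### Free idempotents over factorial rings -/

section FreeIdempotents

variable {A : Type*} [CommRing A] {N k : ℕ} {E : Matrix (Fin N) (Fin N) A}

theorem exists_mul_eq_of_basis_range (hE : E * E = E)
    (B : Module.Basis (Fin k) A (LinearMap.range E.mulVecLin)) :
    ∃ (a : Matrix (Fin N) (Fin k) A) (b : Matrix (Fin k) (Fin N) A), a * b = E ∧ b * a = 1 := by
  let ε := E.mulVecLin
  have hε : ε.rangeRestrict ∘ₗ (LinearMap.range ε).subtype = LinearMap.id := by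
    ext1 ⟨_, x, rfl⟩
    exact Subtype.ext (by simp [ε, Matrix.mulVec_mulVec, hE])
  refine ⟨LinearMap.toMatrix' ((LinearMap.range ε).subtype ∘ₗ B.equivFun.symm.toLinearMap),
    LinearMap.toMatrix' (B.equivFun.toLinearMap ∘ₗ ε.rangeRestrict), ?_, ?_⟩
  · rw [← LinearMap.toMatrix'_comp]
    have : ((LinearMap.range ε).subtype ∘ₗ B.equivFun.symm.toLinearMap) ∘ₗ
        B.equivFun.toLinearMap ∘ₗ ε.rangeRestrict = ε :=
      LinearMap.ext fun x => congrArg Subtype.val (B.equivFun.symm_apply_apply _)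
    rw [this]
    exact LinearMap.toMatrix'_toLin' E
  · rw [← LinearMap.toMatrix'_comp, LinearMap.comp_assoc,
      ← LinearMap.comp_assoc _ _ ε.rangeRestrict, hε, LinearMap.id_comp,
      LinearEquiv.comp_symm, LinearMap.toMatrix'_id]

theorem FreeIdempotents.of_isPrincipalIdealRing [IsDomain A] [IsPrincipalIdealRing A] :
    FreeIdempotents A := by
  intro N k E hE hk
  obtain ⟨l, ⟨B⟩⟩ := Submodule.nonempty_basis_of_pid (Pi.basisFun A (Fin N))
    (LinearMap.range E.mulVecLin)
  obtain ⟨a, b, hab, hba⟩ := exists_mul_eq_of_basis_range hE B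
  have hl := HasIdempotentRank.of_mul_eq_one a b hba
  rw [hab, Fintype.card_fin] at hl
  obtain rfl := hl.unique hk
  exact ⟨a, b, hab, hba⟩

theorem exists_mul_eq_of_sub {a₁ : Matrix (Fin N) (Fin 1) A} {b₁ : Matrix (Fin 1) (Fin N) A}
    (h₁ : b₁ * a₁ = 1) (hEa₁ : E * a₁ = a₁) (hb₁E : b₁ * E = b₁) {a : Matrix (Fin N) (Fin k) A}
    {b : Matrix (Fin k) (Fin N) A} (hab : a * b = E - a₁ * b₁) (hba : b * a = 1) :
    ∃ (a' : Matrix (Fin N) (Fin (k + 1)) A) (b' : Matrix (Fin (k + 1)) (Fin N) A),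
      a' * b' = E ∧ b' * a' = 1 := by
  have hba₁ : b * a₁ = 0 := by
    have hb : b = b * (E - a₁ * b₁) := by rw [← hab, ← Matrix.mul_assoc, hba, Matrix.one_mul]
    rw [hb, Matrix.mul_assoc, Matrix.sub_mul, hEa₁, Matrix.mul_assoc, h₁, Matrix.mul_one, sub_self,
      Matrix.mul_zero]
  have hb₁a : b₁ * a = 0 := by
    have ha : a = (E - a₁ * b₁) * a := by rw [← hab, Matrix.mul_assoc, hba, Matrix.mul_one]
    rw [ha, ← Matrix.mul_assoc, Matrix.mul_sub, hb₁E, ← Matrix.mul_assoc, h₁, Matrix.one_mul,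
      sub_self, Matrix.zero_mul]
  refine ⟨(Matrix.fromCols a a₁).submatrix id finSumFinEquiv.symm,
    (Matrix.fromRows b b₁).submatrix finSumFinEquiv.symm id, ?_, ?_⟩
  · rw [Matrix.submatrix_mul_equiv, Matrix.fromCols_mul_fromRows, hab, sub_add_cancel,
      Matrix.submatrix_id_id]
  · rw [← Matrix.submatrix_mul _ _ _ id _ Function.bijective_id, Matrix.fromRows_mul_fromCols, hba,
      hba₁, hb₁a, h₁, Matrix.fromBlocks_one, Matrix.submatrix_one_equiv]

variable [IsDomain A] [UniqueFactorizationMonoid A]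

theorem exists_vecMulVec_eq {κ : Type*} [Fintype κ] {s : A} (hs : s ≠ 0) {a b : κ → A}
    {E : Matrix κ κ A} (hab : Matrix.vecMulVec a b = s • E) (hba : b ⬝ᵥ a = s) :
    ∃ a' b' : κ → A, Matrix.vecMulVec a' b' = E ∧ b' ⬝ᵥ a' = 1 := by
  classical
  let _ := UniqueFactorizationMonoid.strongNormalizationMonoid (α := A)
  let _ := UniqueFactorizationMonoid.toNormalizedGCDMonoid A
  have hκ : (Finset.univ : Finset κ).Nonempty := by
    by_contra h
    rw [dotProduct, Finset.not_nonempty_iff_eq_empty.1 h, Finset.sum_empty] at hba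
    exact hs hba.symm
  obtain ⟨a', ha', hgcd⟩ := Finset.extract_gcd a hκ
  set g := Finset.univ.gcd a
  have hsE (i j : κ) : a i * b j = s * E i j := congrFun₂ hab i j
  replace ha' (i : κ) : a i = g * a' i := ha' i (Finset.mem_univ i)
  have hdvd (j : κ) : s ∣ g * b j := by
    have hs_gcd : s ∣ Finset.univ.gcd fun i => g * b j * a' i := Finset.dvd_gcd fun i _ =>
      ⟨E i j, by linear_combination hsE i j - b j * ha' i⟩
    simpa [hgcd] using hs_gcd.trans (Finset.gcd_mul_left' _ _ (g * b j)).dvd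
  choose b' hb' using hdvd
  refine ⟨a', b', ?_, mul_left_cancel₀ hs ?_⟩
  · ext i j
    refine mul_left_cancel₀ hs ((Eq.symm ?_).trans (hsE i j))
    simp only [Matrix.vecMulVec_apply]
    linear_combination b j * ha' i + a' i * hb' j
  · rw [mul_one, dotProduct, Finset.mul_sum]
    refine Eq.trans ?_ hba
    exact Finset.sum_congr rfl fun i _ => by linear_combination (-a' i) * hb' i - b i * ha' i

theorem IsFreeUpTo.exists_mul_eq_of_rank_one {s : A} (hs : s ≠ 0) (h : IsFreeUpTo s E 1) :
    ∃ (a : Matrix (Fin N) (Fin 1) A) (b : Matrix (Fin 1) (Fin N) A), a * b = E ∧ b * a = 1 := by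
  obtain ⟨a, b, hab, hba, -⟩ := h
  have hvec : Matrix.vecMulVec (fun i => a i 0) (b 0) = s • E := by
    rw [← hab, Matrix.vecMulVec_eq (Fin 1)]
    ext i j
    simp [Matrix.mul_apply]
  have hdot : b 0 ⬝ᵥ (fun i => a i 0) = s := by
    simpa [Matrix.mul_apply, dotProduct] using congrFun₂ hba 0 0
  obtain ⟨a', b', hab', hba'⟩ := exists_vecMulVec_eq hs hvec hdot
  refine ⟨Matrix.replicateCol _ a', Matrix.replicateRow _ b', ?_, ?_⟩
  · exact (Matrix.vecMulVec_eq (Fin 1) a' b').symm.trans hab'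
  · ext i j
    rw [Matrix.replicateRow_mul_replicateCol_apply, hba', Subsingleton.elim i j,
      Matrix.one_apply_eq]

theorem FreeIdempotents.of_isFreeUpTo
    (hfree : ∀ {N k : ℕ} {E : Matrix (Fin N) (Fin N) A}, E * E = E → HasIdempotentRank E k →
      ∃ s ≠ 0, IsFreeUpTo s E k)
    (hcol : ∀ k, 2 ≤ k → HasUnimodularFixedColumns A k) : FreeIdempotents A := by
  intro N k E hE hk
  induction k generalizing E with
  | zero => exact ⟨0, 0, by rw [hk.eq_zero hE, Matrix.zero_mul], Subsingleton.elim _ _⟩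
  | succ k ih =>
    rcases k.eq_zero_or_pos with rfl | hk₀
    · obtain ⟨s, hs, hsE⟩ := hfree hE hk
      exact hsE.exists_mul_eq_of_rank_one hs
    · obtain ⟨q, hq, p, hpq⟩ := hcol (k + 1) (by omega) N E hE hk
      obtain ⟨a₁, b₁, h₁, hEa₁, hb₁E, hE', hk'⟩ :=
        hk.exists_split hE (p := p) (q := q) (by rw [hq]; exact hpq)
      obtain ⟨a, b, hab, hba⟩ := ih _ hE' hk'
      exact exists_mul_eq_of_sub h₁ hEa₁ hb₁E hab hba

end FreeIdempotents

/-! ### Absorbing a variable into the base ring -/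

section PolyAway

universe u v

/-- The ring `K[T, f⁻¹]`, which becomes the base ring when `A` is seen as having one variable
less. -/
abbrev PolyAway {K : Type u} [CommRing K] (f : K[X]) : Type u := Localization.Away f

namespace PolyAway

variable {K : Type u} [CommRing K]

/-- The variable `T` of `K[T, f⁻¹]`. -/
def varT (f : K[X]) : PolyAway f := algebraMap K[X] (PolyAway f) Polynomial.X

variable {f : K[X]} {S : Type v} [CommRing S]

theorem algebraMap_eq_comp_C :
    algebraMap K (PolyAway f) = (algebraMap K[X] (PolyAway f)).comp Polynomial.C :=
  IsScalarTower.algebraMap_eq K K[X] (PolyAway f)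

theorem isUnit_eval₂ : IsUnit (f.eval₂ (algebraMap K (PolyAway f)) (varT f)) := by
  rw [algebraMap_eq_comp_C, varT, ← Polynomial.hom_eval₂, Polynomial.eval₂_C_X]
  exact IsLocalization.Away.algebraMap_isUnit f

theorem isUnit_eval₂_comp (g : PolyAway f →+* S) :
    IsUnit (f.eval₂ (g.comp (algebraMap K (PolyAway f))) (g (varT f))) := by
  rw [← Polynomial.hom_eval₂]
  exact isUnit_eval₂.map g

section lift

variable (φ : K →+* S) (t : S) (ht : IsUnit (f.eval₂ φ t))

/-- The homomorphism from `K[T, f⁻¹]` with prescribed values on `K` and at `T`. -/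
def lift : PolyAway f →+* S :=
  IsLocalization.Away.lift f (g := Polynomial.eval₂RingHom φ t)
    (by rwa [Polynomial.coe_eval₂RingHom])

@[simp]
theorem lift_algebraMap (r : K) : lift φ t ht (algebraMap K (PolyAway f) r) = φ r := by
  rw [lift, algebraMap_eq_comp_C, RingHom.comp_apply, IsLocalization.Away.lift_eq,
    Polynomial.coe_eval₂RingHom, Polynomial.eval₂_C]

@[simp]
theorem lift_varT : lift φ t ht (varT f) = t := by
  rw [lift, varT, IsLocalization.Away.lift_eq, Polynomial.coe_eval₂RingHom, Polynomial.eval₂_X]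

end lift

theorem ringHom_ext {g h : PolyAway f →+* S}
    (hK : ∀ r, g (algebraMap K (PolyAway f) r) = h (algebraMap K (PolyAway f) r))
    (hT : g (varT f) = h (varT f)) : g = h := by
  refine IsLocalization.ringHom_ext (Submonoid.powers f) (Polynomial.ringHom_ext (fun r => ?_) hT)
  simpa only [algebraMap_eq_comp_C, RingHom.comp_apply] using hK r

theorem apply_comp_eq {T : Type*} [CommRing T] {k : PolyAway f →+* S} {g : S →+* T}
    {h : PolyAway f →+* T}
    (hK : ∀ r, g (k (algebraMap K (PolyAway f) r)) = h (algebraMap K (PolyAway f) r))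
    (hT : g (k (varT f)) = h (varT f)) (r : PolyAway f) : g (k r) = h r :=
  RingHom.congr_fun (ringHom_ext (g := g.comp k) hK hT) r

theorem isDomain [IsDomain K] (hf : f.Monic) : IsDomain (PolyAway f) :=
  IsLocalization.isDomain_of_le_nonZeroDivisors (M := Submonoid.powers f) _
    (powers_le_nonZeroDivisors_of_noZeroDivisors hf.ne_zero)

theorem isPrincipalIdealRing {K : Type u} [Field K] {f : K[X]} :
    IsPrincipalIdealRing (PolyAway f) where
  principal I := by
    obtain ⟨x, hx⟩ := IsPrincipalIdealRing.principal (I.under K[X])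
    refine ⟨algebraMap _ _ x, ?_⟩
    rw [← IsLocalization.map_under (Submonoid.powers f) (PolyAway f) I, hx,
      Ideal.submodule_span_eq, Ideal.map_span, Set.image_singleton, Ideal.submodule_span_eq]

end PolyAway

namespace PolyLaurentAway

theorem isUnit_varT_X (R : Type u) [CommRing R] (m n : ℕ) :
    IsUnit (varT R m n Polynomial.X) := by
  simpa only [Polynomial.eval₂_X] using isUnit_eval₂ R m n Polynomial.X

/-- `R[X_1,…,X_m,Y_1^{±1},…,Y_{n+1}^{±1}][T] = R[X_1,…,X_m,T,Y_2^{±1},…,Y_{n+1}^{±1}][Y_1^{±1}]`. -/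
def oneEquivX (R : Type u) [CommRing R] (m n : ℕ) :
    PolyLaurentAway R m (n + 1) 1 ≃+* PolyLaurentAway R (m + 1) n Polynomial.X :=
  RingEquiv.ofRingHom
    (lift (ofBase R (m + 1) n Polynomial.X) (fun i => varX R (m + 1) n Polynomial.X i.succ)
      (Fin.cons (isUnit_varT_X R (m + 1) n).unit (varY R (m + 1) n Polynomial.X))
      (varX R (m + 1) n Polynomial.X 0) (by simp))
    (lift (ofBase R m (n + 1) 1) (Fin.cons (varT R m (n + 1) 1) (varX R m (n + 1) 1))
      (fun j => varY R m (n + 1) 1 j.succ) (varY R m (n + 1) 1 0) (by simp))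
    (ringHom_ext (fun r => by simp) (Fin.cases (by simp) fun i => by simp) (fun j => by simp)
      (by simp))
    (ringHom_ext (fun r => by simp) (fun i => by simp) (Fin.cases (by simp) fun j => by simp)
      (by simp))

variable {K : Type u} [CommRing K] (f : K[X])

/-- Without further variables, `A` is `K[T, f⁻¹]`. -/
def zeroZeroEquiv : PolyLaurentAway K 0 0 f ≃+* PolyAway f :=
  RingEquiv.ofRingHom
    (lift (algebraMap K (PolyAway f)) Fin.elim0 Fin.elim0 (PolyAway.varT f) PolyAway.isUnit_eval₂)
    (PolyAway.lift (ofBase K 0 0 f) (varT K 0 0 f) (isUnit_eval₂ K 0 0 f))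
    (PolyAway.ringHom_ext (by simp) (by simp))
    (ringHom_ext (by simp) (fun i => i.elim0) (fun j => j.elim0) (by simp))

/-- `K[X_1,…,X_m,Y_1^{±1},…,Y_{n+1}^{±1}][T, f⁻¹]` is
`L[X_1,…,X_m,Y_2^{±1},…,Y_{n+1}^{±1}][Y_1^{±1}]` for `L = K[T, f⁻¹]`. -/
def laurentSuccEquiv (m n : ℕ) :
    PolyLaurentAway K m (n + 1) f ≃+* PolyLaurentAway (PolyAway f) m n Polynomial.X :=
  RingEquiv.ofRingHom
    (lift ((ofBase (PolyAway f) m n Polynomial.X).comp (algebraMap K (PolyAway f)))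
      (varX (PolyAway f) m n Polynomial.X)
      (Fin.cons (isUnit_varT_X (PolyAway f) m n).unit (varY (PolyAway f) m n Polynomial.X))
      (ofBase (PolyAway f) m n Polynomial.X (PolyAway.varT f)) (PolyAway.isUnit_eval₂_comp _))
    (lift (PolyAway.lift (ofBase K m (n + 1) f) (varT K m (n + 1) f) (isUnit_eval₂ K m (n + 1) f))
      (varX K m (n + 1) f) (fun j => varY K m (n + 1) f j.succ) (varY K m (n + 1) f 0) (by simp))
    (ringHom_ext (fun r => by
      rw [RingHom.comp_apply, lift_ofBase, RingHom.id_apply]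
      exact PolyAway.apply_comp_eq (by simp) (by simp) r) (by simp) (by simp) (by simp))
    (ringHom_ext (by simp) (by simp) (Fin.cases (by simp) (by simp)) (by simp))

/-- `K[X_1,…,X_{m+1},Y_1^{±1},…,Y_n^{±1}][T, f⁻¹]` is
`L[X_2,…,X_{m+1},Y_1^{±1},…,Y_n^{±1}][X_1]` for `L = K[T, f⁻¹]`. -/
def polySuccEquiv (m n : ℕ) :
    PolyLaurentAway K (m + 1) n f ≃+* PolyLaurentAway (PolyAway f) m n 1 :=
  RingEquiv.ofRingHom
    (lift ((ofBase (PolyAway f) m n 1).comp (algebraMap K (PolyAway f)))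
      (Fin.cons (varT (PolyAway f) m n 1) (varX (PolyAway f) m n 1)) (varY (PolyAway f) m n 1)
      (ofBase (PolyAway f) m n 1 (PolyAway.varT f)) (PolyAway.isUnit_eval₂_comp _))
    (lift (PolyAway.lift (ofBase K (m + 1) n f) (varT K (m + 1) n f) (isUnit_eval₂ K (m + 1) n f))
      (fun i => varX K (m + 1) n f i.succ) (varY K (m + 1) n f) (varX K (m + 1) n f 0) (by simp))
    (ringHom_ext (fun r => by
      rw [RingHom.comp_apply, lift_ofBase, RingHom.id_apply]
      exact PolyAway.apply_comp_eq (by simp) (by simp) r) (by simp) (by simp) (by simp))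
    (ringHom_ext (by simp) (Fin.cases (by simp) (by simp)) (by simp) (by simp))

end PolyLaurentAway

end PolyAway

/-! ### Fields as base rings -/

section FieldBase

universe u

section Domain

variable (R : Type u) [CommRing R] [IsDomain R] (m n : ℕ)

theorem Ymonoid_le_nonZeroDivisors :
    Ymonoid R m n ≤ nonZeroDivisors (MvPolynomial (Fin m ⊕ Fin n) R) := by
  rw [Ymonoid, Submonoid.closure_le]
  rintro _ ⟨j, rfl⟩
  exact mem_nonZeroDivisors_of_ne_zero (MvPolynomial.X_ne_zero _)

instance : IsDomain (PolyLaurent R m n) :=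
  IsLocalization.isDomain_of_le_nonZeroDivisors _ (Ymonoid_le_nonZeroDivisors R m n)

theorem PolyLaurent.algebraMap_injective :
    Function.Injective (algebraMap R (PolyLaurent R m n)) :=
  (IsLocalization.injective (PolyLaurent R m n) (Ymonoid_le_nonZeroDivisors R m n)).comp
    (MvPolynomial.C_injective _ _)

instance [UniqueFactorizationMonoid R] : UniqueFactorizationMonoid (PolyLaurent R m n) :=
  UniqueFactorizationMonoid.of_isLocalization (Ymonoid R m n) _

namespace PolyLaurentAway

variable {R m n} {f : R[X]}

theorem powers_polyB_le_nonZeroDivisors (hf : f.Monic) :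
    Submonoid.powers (polyB m n f) ≤ nonZeroDivisors (PolyLaurent R m n)[X] := by
  have hne : polyB m n f ≠ 0 := (hf.map _).ne_zero
  exact powers_le_nonZeroDivisors_of_noZeroDivisors hne

theorem isDomain (hf : f.Monic) : IsDomain (PolyLaurentAway R m n f) :=
  IsLocalization.isDomain_of_le_nonZeroDivisors _
    (powers_polyB_le_nonZeroDivisors (m := m) (n := n) hf)

theorem ofBase_injective (hf : f.Monic) : Function.Injective (ofBase R m n f) :=
  (IsLocalization.injective (PolyLaurentAway R m n f) (powers_polyB_le_nonZeroDivisors hf)).comp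
    (Polynomial.C_injective.comp (PolyLaurent.algebraMap_injective R m n))

theorem uniqueFactorizationMonoid [UniqueFactorizationMonoid R] (hf : f.Monic) :
    let _ := isDomain (m := m) (n := n) hf
    UniqueFactorizationMonoid (PolyLaurentAway R m n f) :=
  let _ := isDomain (m := m) (n := n) hf
  UniqueFactorizationMonoid.of_isLocalization (Submonoid.powers (polyB m n f)) _

theorem freeIdempotents_of_isPrincipalIdealRing [IsPrincipalIdealRing R] (hf : f.Monic)
    (hn : f.natDegree ≠ 0 ∨ n = 0) (hfields : FreeIdempotentsOverFields R m n f) :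
    FreeIdempotents (PolyLaurentAway R m n f) := by
  have := isDomain (m := m) (n := n) hf
  have := uniqueFactorizationMonoid (m := m) (n := n) hf
  have hdim : ringKrullDim R ≤ (1 : ℕ) := Ring.krullDimLE_iff.1 inferInstance
  refine .of_isFreeUpTo (fun hE hk => ?_) fun k => hasUnimodularFixedColumns hf hn hfields
    (hdim.trans_lt (by exact_mod_cast one_lt_two))
  obtain ⟨s, hs, hfree⟩ := hfields.exists_isFreeUpTo hE hk
  exact ⟨ofBase R m n f s,
    (map_ne_zero_iff _ (ofBase_injective hf)).2 (nonZeroDivisors.ne_zero hs), hfree⟩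

end PolyLaurentAway

end Domain

theorem PolyLaurentAway.freeIdempotents_of_field {m n : ℕ} {K : Type u} [Field K] {f : K[X]}
    (hf : f.Monic) : FreeIdempotents (PolyLaurentAway K m n f) := by
  induction hj : m + n generalizing m n K with
  | zero =>
    obtain ⟨rfl, rfl⟩ := Nat.add_eq_zero_iff.1 hj
    have := PolyAway.isPrincipalIdealRing (f := f)
    have := PolyAway.isDomain hf
    exact FreeIdempotents.of_isPrincipalIdealRing.of_ringEquiv (zeroZeroEquiv f).symm
  | succ j ih =>
    have := PolyAway.isPrincipalIdealRing (f := f)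
    have := PolyAway.isDomain hf
    rcases n with _ | n
    · obtain ⟨m, rfl⟩ := Nat.exists_eq_add_one_of_ne_zero (n := m) (by omega)
      refine .of_ringEquiv (polySuccEquiv f m 0).symm <| freeIdempotents_of_isPrincipalIdealRing
        Polynomial.monic_one (Or.inr rfl) fun L _ φ => ih (Polynomial.monic_one.map φ) (by omega)
    · refine .of_ringEquiv (laurentSuccEquiv f m n).symm <| freeIdempotents_of_isPrincipalIdealRing
        Polynomial.monic_X (Or.inl ?_) fun L _ φ => ih (Polynomial.monic_X.map φ) (by omega)
      rw [Polynomial.natDegree_X]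
      exact one_ne_zero

theorem freeIdempotentsOverFields {R : Type u} [CommRing R] {m n : ℕ} {f : R[X]} (hf : f.Monic) :
    FreeIdempotentsOverFields R m n f :=
  fun _ _ φ => PolyLaurentAway.freeIdempotents_of_field (hf.map φ)

end FieldBase

/-! ### Number of generators -/

section ConstantRank

theorem hasIdempotentRank_of_forall_prime {A κ : Type*} [CommRing A] [Fintype κ] [DecidableEq κ]
    {r : ℕ} {E : Matrix κ κ A} (h : ∀ p : PrimeSpectrum A,
      HasIdempotentRank (E.map (algebraMap A (Localization.AtPrime p.asIdeal))) r) :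
    HasIdempotentRank E r := by
  refine Polynomial.ext fun i => Module.eq_of_localization_maximal
    (fun P _ => Localization.AtPrime P) (fun P _ => Algebra.linearMap A _) _ _ fun P hP => ?_
  have hmap : ((1 + (Polynomial.X - 1 : A[X]) • E.map Polynomial.C).det).map
      (algebraMap A (Localization.AtPrime P)) = Polynomial.X ^ r := by
    rw [← h ⟨P, hP.isPrime⟩, ← Polynomial.coe_mapRingHom, RingHom.map_det]
    congr 1
    ext1 i j
    by_cases hij : i = j <;> simp [hij]
  rw [Algebra.linearMap_apply, Algebra.linearMap_apply, ← Polynomial.coeff_map,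
    ← Polynomial.coeff_map, hmap, Polynomial.map_pow, Polynomial.map_X]

variable {A P κ : Type*} [CommRing A] [AddCommGroup P] [Module A P] [Fintype κ] [DecidableEq κ]
  {π : (κ → A) →ₗ[A] P} {σ : P →ₗ[A] κ → A} {r : ℕ}

theorem hasIdempotentRank_toMatrix'_of_basis (β : Module.Basis (Fin r) A P)
    (h : π ∘ₗ σ = .id) : HasIdempotentRank (LinearMap.toMatrix' (σ ∘ₗ π)) r := by
  let ψ : P ≃ₗ[A] (Fin r → A) := β.equivFun
  have hinv : (ψ.toLinearMap ∘ₗ π) ∘ₗ (σ ∘ₗ ψ.symm.toLinearMap) = .id := by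
    rw [LinearMap.comp_assoc, ← LinearMap.comp_assoc _ σ π, h, LinearMap.id_comp, ψ.comp_symm]
  have hfactor : (σ ∘ₗ ψ.symm.toLinearMap) ∘ₗ (ψ.toLinearMap ∘ₗ π) = σ ∘ₗ π := by
    rw [LinearMap.comp_assoc, ← LinearMap.comp_assoc π, ψ.symm_comp, LinearMap.id_comp]
  have hrank := HasIdempotentRank.of_mul_eq_one (LinearMap.toMatrix' (σ ∘ₗ ψ.symm.toLinearMap))
    (LinearMap.toMatrix' (ψ.toLinearMap ∘ₗ π))
    (by rw [← LinearMap.toMatrix'_comp, hinv, LinearMap.toMatrix'_id])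
  rwa [← LinearMap.toMatrix'_comp, hfactor, Fintype.card_fin] at hrank

theorem hasIdempotentRank_toMatrix'_comp [Module.Finite A P] [Module.Projective A P]
    (h : π ∘ₗ σ = .id) (hrank : ∀ p : PrimeSpectrum A, Module.finrank
      (Localization.AtPrime p.asIdeal) (LocalizedModule p.asIdeal.primeCompl P) = r) :
    HasIdempotentRank (LinearMap.toMatrix' (σ ∘ₗ π)) r := by
  refine hasIdempotentRank_of_forall_prime fun p => ?_
  let S := p.asIdeal.primeCompl
  let Ap := Localization.AtPrime p.asIdeal
  let Pp := LocalizedModule S P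
  let ι : (κ → A) →ₗ[A] (κ → Ap) := .pi fun i => Algebra.linearMap A Ap ∘ₗ .proj i
  let ιP : P →ₗ[A] Pp := LocalizedModule.mkLinearMap S P
  let π' : (κ → Ap) →ₗ[Ap] Pp := IsLocalizedModule.mapExtendScalars S ι ιP Ap π
  let σ' : Pp →ₗ[Ap] (κ → Ap) := IsLocalizedModule.mapExtendScalars S ιP ι Ap σ
  have hπ (x) : π' (ι x) = ιP (π x) := IsLocalizedModule.map_apply S ι ιP π x
  have hσ (y) : σ' (ιP y) = ι (σ y) := IsLocalizedModule.map_apply S ιP ι σ y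
  have hπσ : π' ∘ₗ σ' = .id := by
    refine LinearMap.restrictScalars_injective A <|
      IsLocalizedModule.ext S ιP (IsLocalizedModule.map_units ιP) <| LinearMap.ext fun y => ?_
    change π' (σ' (ιP y)) = ιP y
    rw [hσ, hπ, ← LinearMap.comp_apply π σ, h, LinearMap.id_apply]
  have : Module.Free Ap Pp := Module.free_of_flat_of_isLocalRing
  convert hasIdempotentRank_toMatrix'_of_basis (Module.finBasisOfFinrankEq Ap Pp (hrank p)) hπσ
  ext i j
  have hsingle : ι (Pi.single j 1) = Pi.single j 1 := by
    ext k
    simp [ι, Pi.single_apply, apply_ite]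
  rw [Matrix.map_apply, LinearMap.toMatrix'_apply, LinearMap.toMatrix'_apply, ← hsingle,
    LinearMap.comp_apply, LinearMap.comp_apply, hπ, hσ]
  rfl

theorem toMatrix'_comp_mul_self (h : π ∘ₗ σ = .id) :
    LinearMap.toMatrix' (σ ∘ₗ π) * LinearMap.toMatrix' (σ ∘ₗ π) = LinearMap.toMatrix' (σ ∘ₗ π) := by
  rw [← LinearMap.toMatrix'_comp, LinearMap.comp_assoc, ← LinearMap.comp_assoc π, h,
    LinearMap.id_comp]

end ConstantRank

section Generators

variable {A P : Type*} [CommRing A] [AddCommGroup P] [Module A P]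

theorem exists_surjective_of_map_single_last_eq_zero {N : ℕ} {φ : (Fin (N + 1) → A) →ₗ[A] P}
    (hφ : Function.Surjective φ) (hlast : φ (Pi.single (Fin.last N) 1) = 0) :
    ∃ ψ : (Fin N → A) →ₗ[A] P, Function.Surjective ψ := by
  refine ⟨Fintype.linearCombination A fun i => φ (Pi.single i.castSucc 1), fun y => ?_⟩
  obtain ⟨x, rfl⟩ := hφ y
  refine ⟨fun i => x i.castSucc, ?_⟩
  conv_rhs => rw [pi_eq_sum_univ' x, map_sum, Fin.sum_univ_castSucc, map_smul, hlast, smul_zero]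
  simp only [Fintype.linearCombination_apply, map_smul, add_zero]

theorem exists_surjective_mono {M N : ℕ} (hMN : M ≤ N) {φ : (Fin M → A) →ₗ[A] P}
    (hφ : Function.Surjective φ) : ∃ ψ : (Fin N → A) →ₗ[A] P, Function.Surjective ψ :=
  ⟨φ ∘ₗ LinearMap.funLeft A A (Fin.castLE hMN), hφ.comp <|
    LinearMap.funLeft_surjective_of_injective _ _ _ (Fin.castLE_injective hMN)⟩

variable [Module.Finite A P] [Module.Projective A P] {r d : ℕ}

theorem subsingleton_of_finrank_eq_zero (hrank : ∀ p : PrimeSpectrum A, Module.finrank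
      (Localization.AtPrime p.asIdeal) (LocalizedModule p.asIdeal.primeCompl P) = 0) :
    Subsingleton P := by
  obtain ⟨N, π, hπ⟩ := Module.Finite.exists_fin' A P
  obtain ⟨σ, hσ⟩ := Module.projective_lifting_property π LinearMap.id hπ
  have hE := (hasIdempotentRank_toMatrix'_comp hσ hrank).eq_zero (toMatrix'_comp_mul_self hσ)
  have hσπ : σ ∘ₗ π = 0 := (LinearEquiv.map_eq_zero_iff _).1 hE
  refine subsingleton_of_forall_eq 0 fun y => ?_
  calc y = (π ∘ₗ (σ ∘ₗ π) ∘ₗ σ) y := by rw [LinearMap.comp_assoc, hσ, LinearMap.comp_id, hσ]; rfl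
    _ = 0 := by rw [hσπ, LinearMap.zero_comp, LinearMap.comp_zero, LinearMap.zero_apply]

theorem exists_surjective_of_succ (hcol : ∀ k, d + 1 ≤ k → HasUnimodularFixedColumns A k)
    (htrans : ∀ N, d + 1 ≤ N → ∀ v : Fin (N + 1) → A, IsUnimodular v →
      GLEquiv v (Pi.single (Fin.last N) 1))
    (hrank : ∀ p : PrimeSpectrum A, Module.finrank
      (Localization.AtPrime p.asIdeal) (LocalizedModule p.asIdeal.primeCompl P) = r)
    (hr : r ≠ 0) {N : ℕ} (hN : r + d ≤ N) {π : (Fin (N + 1) → A) →ₗ[A] P}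
    (hπ : Function.Surjective π) : ∃ ψ : (Fin N → A) →ₗ[A] P, Function.Surjective ψ := by
  obtain ⟨σ, hσ⟩ := Module.projective_lifting_property π LinearMap.id hπ
  have hE := toMatrix'_comp_mul_self hσ
  have hker := (hasIdempotentRank_toMatrix'_comp hσ hrank).one_sub hE (by simp; omega)
  obtain ⟨q, hq, hu⟩ := hcol _ (by simp; omega) _ _ (IsIdempotentElem.one_sub hE) hker
  obtain ⟨e, he⟩ := htrans N (by omega) q hu
  have hπq : π q = 0 := by
    rw [Matrix.sub_mulVec, Matrix.one_mulVec, sub_eq_self, LinearMap.toMatrix'_mulVec] at hq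
    rw [← LinearMap.id_apply (R := A) (π q), ← hσ]
    exact (congrArg π hq).trans (map_zero π)
  refine exists_surjective_of_map_single_last_eq_zero (φ := π ∘ₗ e.symm.toLinearMap)
    (hπ.comp e.symm.surjective) ?_
  rw [← he]
  simpa using hπq

theorem exists_span_range_eq_top (hcol : ∀ k, d + 1 ≤ k → HasUnimodularFixedColumns A k)
    (htrans : ∀ N, d + 1 ≤ N → ∀ v : Fin (N + 1) → A, IsUnimodular v →
      GLEquiv v (Pi.single (Fin.last N) 1))
    (hrank : ∀ p : PrimeSpectrum A, Module.finrank
      (Localization.AtPrime p.asIdeal) (LocalizedModule p.asIdeal.primeCompl P) = r) :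
    ∃ g : Fin (r + d) → P, Submodule.span A (Set.range g) = ⊤ := by
  rcases eq_or_ne r 0 with rfl | hr
  · have := subsingleton_of_finrank_eq_zero hrank
    exact ⟨0, Subsingleton.elim _ _⟩
  obtain ⟨M, φ, hφ⟩ := Module.Finite.exists_fin' A P
  obtain ⟨π, hπ⟩ : ∃ π : (Fin (r + d) → A) →ₗ[A] P, Function.Surjective π := by
    refine Nat.decreasingInduction' (P := fun N => ∃ π : (Fin N → A) →ₗ[A] P, Function.Surjective π)
      (fun N _ hN ⟨_, hπ⟩ => exists_surjective_of_succ hcol htrans hrank hr hN hπ)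
      (Nat.le_add_right (r + d) M) (exists_surjective_mono (Nat.le_add_left _ _) hφ)
  refine ⟨π ∘ Pi.basisFun A (Fin (r + d)), ?_⟩
  rw [Set.range_comp, ← Submodule.map_span, Module.Basis.span_eq, Submodule.map_top,
    LinearMap.range_eq_top.2 hπ]

end Generators

theorem HasUnimodularFixedColumns.of_ringEquiv {A A' : Type*} [CommRing A] [CommRing A'] {k : ℕ}
    (h : HasUnimodularFixedColumns A' k) (θ : A ≃+* A') : HasUnimodularFixedColumns A k :=
  fun N E hE hk => exists_isUnimodular_fixed_of_map θ <|
    h N (E.map θ) (by rw [← Matrix.map_mul, hE]) (hk.map θ.toRingHom)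

namespace PolyLaurentAway

universe u

theorem exists_ringEquiv_natDegree_ne_zero {R : Type u} [CommRing R] [Nontrivial R] (m n : ℕ)
    {f : R[X]} (hf : f.Monic) : ∃ (m' n' : ℕ) (f' : R[X]), f'.Monic ∧
      (f'.natDegree ≠ 0 ∨ n' = 0) ∧
      Nonempty (PolyLaurentAway R m n f ≃+* PolyLaurentAway R m' n' f') := by
  rcases eq_or_ne f.natDegree 0 with hdeg | hdeg
  · obtain rfl := hf.natDegree_eq_zero.1 hdeg
    rcases n with _ | n
    · exact ⟨m, 0, 1, hf, .inr rfl, ⟨.refl _⟩⟩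
    · exact ⟨m + 1, n, Polynomial.X, Polynomial.monic_X, .inl (by simp), ⟨oneEquivX R m n⟩⟩
  · exact ⟨m, n, f, hf, .inl hdeg, ⟨.refl _⟩⟩

theorem nonempty_ringEquiv (R : Type*) [CommRing R] (m n : ℕ) (B : Type*) [CommRing B]
    [Algebra R B] [Algebra (MvPolynomial (Fin m ⊕ Fin n) R) B]
    [IsScalarTower R (MvPolynomial (Fin m ⊕ Fin n) R) B] [IsLocalization (Ymonoid R m n) B]
    (f : R[X]) (A : Type*) [CommRing A] [Algebra B[X] A]
    [IsLocalization.Away (f.map (algebraMap R B)) A] :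
    Nonempty (PolyLaurentAway R m n f ≃+* A) := by
  let e := IsLocalization.algEquiv (Ymonoid R m n) (PolyLaurent R m n) B
  refine ⟨IsLocalization.ringEquivOfRingEquiv (M := Submonoid.powers (polyB m n f))
    (T := Submonoid.powers (f.map (algebraMap R B))) (PolyLaurentAway R m n f) A
    (Polynomial.mapEquiv e.toRingEquiv) ?_⟩
  rw [Submonoid.map_powers]
  congr 1
  change (polyB m n f).map e.toRingEquiv.toRingHom = _
  rw [polyB, Polynomial.map_map]
  congr 1
  ext r
  change e (algebraMap R (PolyLaurent R m n) r) = _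
  rw [IsScalarTower.algebraMap_apply R (MvPolynomial (Fin m ⊕ Fin n) R) (PolyLaurent R m n),
    IsScalarTower.algebraMap_apply R (MvPolynomial (Fin m ⊕ Fin n) R) B, AlgEquiv.commutes]

end PolyLaurentAway

/-- **Theorem.** Let `R` be Noetherian of finite Krull dimension `d`,
`B = R[X_1,…,X_m,Y_1^{±1},…,Y_n^{±1}]`, `f ∈ R[Y]` a monic polynomial, `A = B[Y, f⁻¹]`.
Then every finitely generated projective `A`-module of constant rank `r` can be generated
by `r + d` elements. -/
theorem projective_module_generated_by_rank_plus_dim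
    (R : Type*) [CommRing R] [IsNoetherianRing R] (d : ℕ) (hdim : ringKrullDim R = d)
    (m n : ℕ)
    (B : Type*) [CommRing B] [Algebra R B] [Algebra (MvPolynomial (Fin m ⊕ Fin n) R) B]
    [IsScalarTower R (MvPolynomial (Fin m ⊕ Fin n) R) B]
    [IsLocalization (Ymonoid R m n) B]
    (f : Polynomial R) (hf : f.Monic)
    (A : Type*) [CommRing A] [Algebra (Polynomial B) A]
    [IsLocalization.Away (f.map (algebraMap R B)) A]
    (P : Type*) [AddCommGroup P] [Module A P] [Module.Finite A P] [Module.Projective A P]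
    (r : ℕ)
    (hrank : ∀ p : PrimeSpectrum A,
      Module.finrank (Localization.AtPrime p.asIdeal) (LocalizedModule p.asIdeal.primeCompl P)
        = r) :
    ∃ g : Fin (r + d) → P, Submodule.span A (Set.range g) = ⊤ := by
  have : Nontrivial R := not_subsingleton_iff_nontrivial.1 fun _ =>
    WithBot.coe_ne_bot (hdim.symm.trans ringKrullDim_eq_bot_of_subsingleton)
  obtain ⟨m', n', f', hf', hn', ⟨ε'⟩⟩ :=
    PolyLaurentAway.exists_ringEquiv_natDegree_ne_zero m n hf
  obtain ⟨ε⟩ := PolyLaurentAway.nonempty_ringEquiv R m n B f A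
  let θ : A ≃+* PolyLaurentAway R m' n' f' := ε.symm.trans ε'
  refine exists_span_range_eq_top (fun k hk => ?_) (fun N hN v hv => ?_) hrank
  · have hlt : ringKrullDim R < (d + 1 : ℕ) := by rw [hdim]; exact_mod_cast d.lt_succ_self
    exact (PolyLaurentAway.hasUnimodularFixedColumns hf' hn'
      (freeIdempotentsOverFields hf') hlt hk).of_ringEquiv θ
  · have hθv := PolyLaurentAway.glEquiv_single_last hf' hn' hdim.le hN (hv.map θ.toRingHom)
    simpa using hθv.map_single θ.symm.toRingHom
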